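/- Let k ≥ 1, let G be a finite simple graph, and let ε be a geometric k-planar drawing of G. Suppose the edge set of G is partitioned into s edges, called static edges, and f maximal degree-2 paths, called flexible paths, each of length at least (s² + 3s + 1)·(f + 1) + 1. Let G' be the graph obtained from G by shortening each flexible path to length exactly (s² + 3s + 1)·(f + 1) + 1 while preserving its endpoints. Then G' admits a geometric k-planar drawing. -/

import Mathlib

open Set

noncomputable section

/-- The union of all (closed) straight-line edge segments of a geometric drawing. -/
def drawnSet {V : Type*} (G : SimpleGraph V) (pos : V → ℝ × ℝ) : Set (ℝ × ℝ) :=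
  {x | ∃ u v, G.Adj u v ∧ x ∈ segment ℝ (pos u) (pos v)}

/-- `pos` is a geometric (straight-line) drawing of `G`: vertices are distinct points,
no edge passes through a vertex other than its endpoints, and any two distinct edges
meet only in common endpoints or in a single proper crossing point interior to both. -/
def IsGeomDrawing {V : Type*} (G : SimpleGraph V) (pos : V → ℝ × ℝ) : Prop :=
  Function.Injective pos ∧
  (∀ u v, G.Adj u v → ∀ w : V, pos w ∈ segment ℝ (pos u) (pos v) → w = u ∨ w = v) ∧
  (∀ u v x y, G.Adj u v → G.Adj x y → s(u, v) ≠ s(x, y) →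
    (segment ℝ (pos u) (pos v) ∩ segment ℝ (pos x) (pos y) ⊆
        (pos '' {u, v}) ∩ (pos '' {x, y})) ∨
    (∃ p, segment ℝ (pos u) (pos v) ∩ segment ℝ (pos x) (pos y) = {p} ∧
        p ∈ openSegment ℝ (pos u) (pos v) ∧ p ∈ openSegment ℝ (pos x) (pos y)))

/-- The straight-line edges `uv` and `xy` cross properly: they meet in exactly one
point, interior to both segments. -/
def SegCross {V : Type*} (pos : V → ℝ × ℝ) (u v x y : V) : Prop :=
  ∃ p, segment ℝ (pos u) (pos v) ∩ segment ℝ (pos x) (pos y) = {p} ∧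
    p ∈ openSegment ℝ (pos u) (pos v) ∧ p ∈ openSegment ℝ (pos x) (pos y)

/-- The set of edges of `G` that cross the edge `uv` in the geometric drawing `pos`. -/
def crossingEdges {V : Type*} (G : SimpleGraph V) (pos : V → ℝ × ℝ) (u v : V) :
    Set (Sym2 V) :=
  {e | e ∈ G.edgeSet ∧ ∃ x y, e = s(x, y) ∧ SegCross pos u v x y}

/-- `pos` is a geometric 1-planar drawing of `G`: a geometric drawing in which every
edge is crossed at most once. -/
def IsGeom1Planar {V : Type*} (G : SimpleGraph V) (pos : V → ℝ × ℝ) : Prop :=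
  IsGeomDrawing G pos ∧ ∀ u v, G.Adj u v → (crossingEdges G pos u v).Subsingleton

/-- `G` is geometric 1-planar. -/
def GeomOnePlanar {V : Type*} (G : SimpleGraph V) : Prop :=
  ∃ pos : V → ℝ × ℝ, IsGeom1Planar G pos

/-- `pos` is a geometric `k`-planar drawing of `G`: a geometric drawing in which every
edge is crossed at most `k` times. -/
def IsGeomKPlanar {V : Type*} (k : ℕ) (G : SimpleGraph V) (pos : V → ℝ × ℝ) : Prop :=
  IsGeomDrawing G pos ∧ ∀ u v, G.Adj u v → (crossingEdges G pos u v).ncard ≤ k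

/-- `G` is geometric `k`-planar. -/
def GeomKPlanar {V : Type*} (k : ℕ) (G : SimpleGraph V) : Prop :=
  ∃ pos : V → ℝ × ℝ, IsGeomKPlanar k G pos

/-- The edge set of the path obtained from the path `w` (from `a` to `b`) by shortening
it to length `t` while preserving its endpoints: we keep the first `t − 1` edges of `w`
and join the `(t−1)`-st vertex of `w` directly to the endpoint `b` (the vertices of `w`
beyond the `(t−1)`-st become isolated). -/
def shortEdges {V : Type*} {G : SimpleGraph V} {a b : V} (w : G.Walk a b) (t : ℕ) :
    Set (Sym2 V) :=
  {e | ∃ j : ℕ, j + 2 ≤ t ∧ e = s(w.getVert j, w.getVert (j + 1))} ∪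
    {s(w.getVert (t - 1), b)}

/-!
In the given drawing of `G`, forget the inner vertices of the flexible paths and move the resulting
polylines slightly into general position. Relative to the arrangement of the `s` lines carrying the
static edges, a polyline follows a *route*: a sequence of cells, consecutive ones separated by a
single line at a point of it. Each passage through a static edge accounts for a crossing of that
edge with the original path. Cutting out loops leaves routes which visit each of the at most
`(s² + s + 2) / 2` cells once and use no static edge more often than before.

All flexible paths are now redrawn at once: in every cell of its route a path runs straight, by
convexity, between short hops across the lines near the points of passage. Thus no static edge is
crossed more often than in the given drawing. Since the hops are short and in general position, the
number of segments of a new polyline, together with the number of crossings on it, is at most the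
prescribed length of the shortened path. Its inner vertices therefore suffice to mark all bends and
to separate all crossings, so that each of its edges is crossed at most once, and `1 ≤ k`.

If there are no static edges, polylines bent slightly near the chords between their ends cross
pairwise at most once.
-/

/-! ### Orientation and lines in the plane -/

/-- The determinant of two vectors of the plane; it vanishes exactly when they are parallel. -/
def cross (v w : ℝ × ℝ) : ℝ := v.1 * w.2 - v.2 * w.1

/-- Twice the signed area of the triangle `a b x`; its zero set is the line through `a` and `b`. -/
def orient (a b x : ℝ × ℝ) : ℝ := cross (b - a) (x - a)

lemma cross_smul_right (v w : ℝ × ℝ) (c : ℝ) : cross v (c • w) = c * cross v w := by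
  simp only [cross, Prod.smul_fst, Prod.smul_snd, smul_eq_mul]; ring

lemma cross_swap (v w : ℝ × ℝ) : cross v w = -cross w v := by
  simp only [cross]; ring

lemma cross_swap_ne_zero {v w : ℝ × ℝ} (h : cross v w ≠ 0) : cross w v ≠ 0 := by
  rwa [cross_swap, neg_ne_zero]

lemma orient_add (a b x d : ℝ × ℝ) : orient a b (x + d) = orient a b x + cross (b - a) d := by
  simp only [orient, cross, Prod.fst_add, Prod.snd_add, Prod.fst_sub, Prod.snd_sub]; ring

lemma cross_sub_eq_orient_sub (a b x y : ℝ × ℝ) :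
    cross (b - a) (x - y) = orient a b x - orient a b y := by
  simp only [orient, cross, Prod.fst_sub, Prod.snd_sub]; ring

lemma continuous_orient (a b : ℝ × ℝ) : Continuous (orient a b) := by
  unfold orient cross; fun_prop

lemma orient_self_left (a b : ℝ × ℝ) : orient a b a = 0 := by simp [orient, cross]

lemma orient_self_right (a b : ℝ × ℝ) : orient a b b = 0 := by
  simp only [orient, cross]; ring

lemma orient_rotate (a b c : ℝ × ℝ) : orient a b c = orient b c a := by
  simp only [orient, cross, Prod.fst_sub, Prod.snd_sub]; ring

lemma orient_swap (a b c : ℝ × ℝ) : orient a b c = -orient b a c := by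
  simp only [orient, cross, Prod.fst_sub, Prod.snd_sub]; ring

lemma fst_lineMap (x y : ℝ × ℝ) (θ : ℝ) :
    (AffineMap.lineMap x y θ : ℝ × ℝ).1 = x.1 + θ * (y.1 - x.1) := by
  simp only [AffineMap.fst_lineMap, AffineMap.lineMap_apply_ring']; ring

lemma snd_lineMap (x y : ℝ × ℝ) (θ : ℝ) :
    (AffineMap.lineMap x y θ : ℝ × ℝ).2 = x.2 + θ * (y.2 - x.2) := by
  simp only [AffineMap.snd_lineMap, AffineMap.lineMap_apply_ring']; ring

lemma orient_lineMap (a b x y : ℝ × ℝ) (θ : ℝ) :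
    orient a b (AffineMap.lineMap x y θ) = (1 - θ) * orient a b x + θ * orient a b y := by
  simp only [orient, cross, Prod.fst_sub, Prod.snd_sub, fst_lineMap, snd_lineMap]; ring

lemma mem_segment_iff_lineMap {a b x : ℝ × ℝ} :
    x ∈ segment ℝ a b ↔ ∃ θ : ℝ, 0 ≤ θ ∧ θ ≤ 1 ∧ AffineMap.lineMap a b θ = x := by
  simp only [segment_eq_image_lineMap, mem_image, mem_Icc, and_assoc]

lemma mem_openSegment_iff_lineMap {a b x : ℝ × ℝ} :
    x ∈ openSegment ℝ a b ↔ ∃ θ : ℝ, 0 < θ ∧ θ < 1 ∧ AffineMap.lineMap a b θ = x := by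
  simp only [openSegment_eq_image_lineMap, mem_image, mem_Ioo, and_assoc]

lemma segment_lineMap {a b : ℝ × ℝ} {α β : ℝ} (h : α ≤ β) :
    segment ℝ (AffineMap.lineMap a b α : ℝ × ℝ) (AffineMap.lineMap a b β) =
      AffineMap.lineMap a b '' Icc α β := by
  rw [← image_segment, segment_eq_Icc h]

lemma openSegment_lineMap {a b : ℝ × ℝ} {α β : ℝ} (h : α < β) :
    openSegment ℝ (AffineMap.lineMap a b α : ℝ × ℝ) (AffineMap.lineMap a b β) =
      AffineMap.lineMap a b '' Ioo α β := by
  rw [← image_openSegment, openSegment_eq_Ioo h]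

lemma eq_or_eq_or_mem_openSegment {a b x : ℝ × ℝ} (h : x ∈ segment ℝ a b) :
    x = a ∨ x = b ∨ x ∈ openSegment ℝ a b := by
  simpa [← insert_endpoints_openSegment ℝ a b] using h

lemma orient_eq_zero_of_mem_segment {a b x : ℝ × ℝ} (h : x ∈ segment ℝ a b) :
    orient a b x = 0 := by
  obtain ⟨θ, -, -, rfl⟩ := mem_segment_iff_lineMap.1 h
  rw [orient_lineMap, orient_self_left, orient_self_right, mul_zero, mul_zero, add_zero]

lemma orient_eq_zero_of_mem_openSegment {a b x : ℝ × ℝ} (h : x ∈ openSegment ℝ a b) :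
    orient a b x = 0 :=
  orient_eq_zero_of_mem_segment (openSegment_subset_segment _ _ _ h)

lemma fst_sub_ne_zero_or_snd_sub_ne_zero {a b : ℝ × ℝ} (h : a ≠ b) :
    b.1 - a.1 ≠ 0 ∨ b.2 - a.2 ≠ 0 := by
  contrapose! h
  exact Prod.ext (by linarith [h.1]) (by linarith [h.2])

lemma exists_lineMap_of_orient_eq_zero {a b x : ℝ × ℝ} (hab : a ≠ b) (h : orient a b x = 0) :
    ∃ θ : ℝ, AffineMap.lineMap a b θ = x := by
  simp only [orient, cross, Prod.fst_sub, Prod.snd_sub] at h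
  rcases fst_sub_ne_zero_or_snd_sub_ne_zero hab with h1 | h1
  · refine ⟨(x.1 - a.1) / (b.1 - a.1), Prod.ext ?_ ?_⟩
    · rw [fst_lineMap]; field_simp; ring
    · rw [snd_lineMap]; field_simp; linarith
  · refine ⟨(x.2 - a.2) / (b.2 - a.2), Prod.ext ?_ ?_⟩
    · rw [fst_lineMap]; field_simp; linarith
    · rw [snd_lineMap]; field_simp; ring

lemma orient_eq_zero_of_collinear {a b x y z : ℝ × ℝ} (hab : a ≠ b) (hx : orient a b x = 0)
    (hy : orient a b y = 0) (hz : orient a b z = 0) : orient x y z = 0 := by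
  obtain ⟨p, rfl⟩ := exists_lineMap_of_orient_eq_zero hab hx
  obtain ⟨q, rfl⟩ := exists_lineMap_of_orient_eq_zero hab hy
  obtain ⟨r, rfl⟩ := exists_lineMap_of_orient_eq_zero hab hz
  simp only [orient, cross, Prod.fst_sub, Prod.snd_sub, fst_lineMap, snd_lineMap]; ring

lemma eq_zero_of_cross_eq_zero {v w d : ℝ × ℝ} (h : cross v w ≠ 0) (hv : cross v d = 0)
    (hw : cross w d = 0) : d = 0 := by
  simp only [cross] at h hv hw
  refine Prod.ext (mul_right_cancel₀ h ?_) (mul_right_cancel₀ h ?_)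
  · simp only [Prod.fst_zero]; linear_combination w.1 * hv - v.1 * hw
  · simp only [Prod.snd_zero]; linear_combination w.2 * hv - v.2 * hw

lemma eq_of_mem_two_lines {a b c d x y : ℝ × ℝ} (h : cross (b - a) (d - c) ≠ 0)
    (hx : orient a b x = 0) (hx' : orient c d x = 0) (hy : orient a b y = 0)
    (hy' : orient c d y = 0) : x = y := by
  refine sub_eq_zero.1 (eq_zero_of_cross_eq_zero h ?_ ?_) <;> rw [cross_sub_eq_orient_sub]
  · rw [hx, hy, sub_zero]
  · rw [hx', hy', sub_zero]

lemma dense_orient_ne_zero {a b : ℝ × ℝ} (h : a ≠ b) : Dense {x | orient a b x ≠ 0} := by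
  obtain ⟨d, hd⟩ : ∃ d, cross (b - a) d ≠ 0 := by
    rcases fst_sub_ne_zero_or_snd_sub_ne_zero h with h1 | h1
    · exact ⟨(0, 1), by simpa [cross] using h1⟩
    · exact ⟨(-1, 0), by simpa [cross] using h1⟩
  intro x
  by_cases hx : orient a b x = 0
  swap
  · exact subset_closure hx
  have ht : Filter.Tendsto (fun ε : ℝ => x + ε • d) (nhdsWithin 0 {0}ᶜ) (nhds x) := by
    have hc : Continuous (fun ε : ℝ => x + ε • d) := by fun_prop
    simpa using (hc.tendsto 0).mono_left nhdsWithin_le_nhds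
  refine mem_closure_of_tendsto ht ?_
  filter_upwards [self_mem_nhdsWithin] with ε hε
  rw [orient_add, hx, cross_smul_right, zero_add]
  exact mul_ne_zero hε hd

/-! ### General position -/

/-- A point set together with all intersection points of non-parallel lines spanned by it. -/
def lineClosure (A : Set (ℝ × ℝ)) : Set (ℝ × ℝ) :=
  A ∪ {X | ∃ x₁ ∈ A, ∃ x₂ ∈ A, ∃ y₁ ∈ A, ∃ y₂ ∈ A, cross (x₂ - x₁) (y₂ - y₁) ≠ 0 ∧
    orient x₁ x₂ X = 0 ∧ orient y₁ y₂ X = 0}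

lemma finite_lineClosure {A : Set (ℝ × ℝ)} (hA : A.Finite) : (lineClosure A).Finite := by
  have hpair : ∀ x₁ x₂ y₁ y₂ : ℝ × ℝ, {X | cross (x₂ - x₁) (y₂ - y₁) ≠ 0 ∧
      orient x₁ x₂ X = 0 ∧ orient y₁ y₂ X = 0}.Finite := by
    refine fun x₁ x₂ y₁ y₂ => Set.Subsingleton.finite ?_
    rintro X ⟨h, hX, hX'⟩ Y ⟨-, hY, hY'⟩
    exact eq_of_mem_two_lines h hX hX' hY hY'
  refine hA.union (Set.Finite.subset (hA.biUnion fun x₁ _ => hA.biUnion fun x₂ _ =>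
    hA.biUnion fun y₁ _ => hA.biUnion fun y₂ _ => hpair x₁ x₂ y₁ y₂) ?_)
  rintro X ⟨x₁, h1, x₂, h2, y₁, h3, y₂, h4, h5⟩
  simp only [mem_iUnion]
  exact ⟨x₁, h1, x₂, h2, y₁, h3, y₂, h4, h5⟩

lemma exists_mem_open_orient_ne_zero {A O : Set (ℝ × ℝ)} (hA : A.Finite) (hO : IsOpen O)
    (hne : O.Nonempty) :
    ∃ w ∈ O, w ∉ A ∧ ∀ X ∈ A, ∀ Y ∈ A, X ≠ Y → orient X Y w ≠ 0 := by
  have hpt : Dense (⋂ p ∈ A, {w : ℝ × ℝ | w ≠ p}) :=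
    dense_biInter_of_isOpen (fun _ _ => isOpen_ne) hA.countable
      fun p _ => dense_compl_singleton p
  have hpt_open : IsOpen (⋂ p ∈ A, {w : ℝ × ℝ | w ≠ p}) :=
    hA.isOpen_biInter fun _ _ => isOpen_ne
  have hline : Dense (⋂ p ∈ A.offDiag, {w : ℝ × ℝ | orient p.1 p.2 w ≠ 0}) :=
    dense_biInter_of_isOpen
      (fun p _ => isOpen_ne_fun (continuous_orient p.1 p.2) continuous_const)
      hA.offDiag.countable fun p hp => dense_orient_ne_zero hp.2.2
  obtain ⟨w, hwO, hwpt, hwline⟩ :=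
    (hpt.inter_of_isOpen_left hline hpt_open).inter_open_nonempty O hO hne
  simp only [mem_iInter] at hwpt hwline
  exact ⟨w, hwO, fun hwA => hwpt w hwA rfl,
    fun X hX Y hY h => hwline (X, Y) ⟨hX, hY, h⟩⟩

/-- General position of the point set `Q` relative to the point set `F`: no three points are
collinear and no three spanned lines are concurrent, unless only points of `F` are involved. -/
structure InGeneralPosition (F Q : Set (ℝ × ℝ)) : Prop where
  noncollinear : ∀ x ∈ F ∪ Q, ∀ y ∈ F ∪ Q, ∀ z ∈ F ∪ Q, ¬(x ∈ F ∧ y ∈ F ∧ z ∈ F) →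
    x ≠ y → y ≠ z → x ≠ z → orient x y z ≠ 0
  nonconcurrent : ∀ x₁ ∈ F ∪ Q, ∀ x₂ ∈ F ∪ Q, ∀ y₁ ∈ F ∪ Q, ∀ y₂ ∈ F ∪ Q, ∀ z₁ ∈ F ∪ Q,
    ∀ z₂ ∈ F ∪ Q, ¬(x₁ ∈ F ∧ x₂ ∈ F ∧ y₁ ∈ F ∧ y₂ ∈ F ∧ z₁ ∈ F ∧ z₂ ∈ F) →
    cross (x₂ - x₁) (y₂ - y₁) ≠ 0 → cross (y₂ - y₁) (z₂ - z₁) ≠ 0 →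
    cross (x₂ - x₁) (z₂ - z₁) ≠ 0 →
    ∀ X, orient x₁ x₂ X = 0 → orient y₁ y₂ X = 0 → orient z₁ z₂ X = 0 →
    X = x₁ ∨ X = x₂ ∨ X = y₁ ∨ X = y₂ ∨ X = z₁ ∨ X = z₂

lemma eq_of_mem_line_through {w x a b X : ℝ × ℝ} (h : cross (x - w) (b - a) ≠ 0)
    (hx : orient w x X = 0) (hab : orient a b X = 0) (hw : w = a ∨ w = b) : X = w := by
  rcases hw with rfl | rfl
  · exact eq_of_mem_two_lines h hx hab (orient_self_left _ _) (orient_self_left _ _)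
  · exact eq_of_mem_two_lines h hx hab (orient_self_left _ _) (orient_self_right _ _)

lemma mem_endpoints_of_concurrent {A : Set (ℝ × ℝ)} {w x₁ x₂ y₁ y₂ z₁ z₂ X : ℝ × ℝ}
    (hw : ∀ X ∈ lineClosure A, ∀ Y ∈ lineClosure A, X ≠ Y → orient X Y w ≠ 0)
    (hwx : w = x₁ ∨ w = x₂) (hx₁ : x₁ ∈ insert w A) (hx₂ : x₂ ∈ insert w A)
    (hy₁ : y₁ ∈ insert w A) (hy₂ : y₂ ∈ insert w A) (hz₁ : z₁ ∈ insert w A)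
    (hz₂ : z₂ ∈ insert w A) (hxy : cross (x₂ - x₁) (y₂ - y₁) ≠ 0)
    (hyz : cross (y₂ - y₁) (z₂ - z₁) ≠ 0) (hxz : cross (x₂ - x₁) (z₂ - z₁) ≠ 0)
    (hX : orient x₁ x₂ X = 0) (hY : orient y₁ y₂ X = 0) (hZ : orient z₁ z₂ X = 0) :
    X = x₁ ∨ X = x₂ := by
  wlog h : w = x₁ generalizing x₁ x₂
  · have hrev : ∀ v : ℝ × ℝ, cross (x₁ - x₂) v = -cross (x₂ - x₁) v := fun v => by
      simp only [cross, Prod.fst_sub, Prod.snd_sub]; ring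
    exact (this hwx.symm hx₂ hx₁ (by rwa [hrev, neg_ne_zero]) (by rwa [hrev, neg_ne_zero])
      (by rw [orient_swap, hX, neg_zero]) (hwx.resolve_left h)).symm
  subst h
  by_cases hw_y : w = y₁ ∨ w = y₂
  · exact Or.inl (eq_of_mem_line_through hxy hX hY hw_y)
  by_cases hw_z : w = z₁ ∨ w = z₂
  · exact Or.inl (eq_of_mem_line_through hxz hX hZ hw_z)
  rw [not_or] at hw_y hw_z
  have hmem : ∀ {p : ℝ × ℝ}, p ∈ insert w A → w ≠ p → p ∈ A :=
    fun hp hne => hp.resolve_left hne.symm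
  have hXA : X ∈ lineClosure A := Or.inr ⟨y₁, hmem hy₁ hw_y.1, y₂, hmem hy₂ hw_y.2,
    z₁, hmem hz₁ hw_z.1, z₂, hmem hz₂ hw_z.2, hyz, hY, hZ⟩
  have hwx₂ : w ≠ x₂ := by
    rintro rfl
    simp [cross] at hxy
  by_contra! hne
  refine hw x₂ (Or.inl (hmem hx₂ hwx₂)) X hXA hne.2.symm ?_
  rwa [orient_rotate, orient_rotate]

lemma InGeneralPosition.insert {F Q : Set (ℝ × ℝ)} (h : InGeneralPosition F Q) {w : ℝ × ℝ}
    (hw : ∀ X ∈ lineClosure (F ∪ Q), ∀ Y ∈ lineClosure (F ∪ Q), X ≠ Y → orient X Y w ≠ 0) :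
    InGeneralPosition F (insert w Q) where
  noncollinear := by
    intro x hx y hy z hz hF hxy hyz hxz
    rw [union_insert] at hx hy hz
    have hmem : ∀ {p q : ℝ × ℝ}, p ∈ Set.insert w (F ∪ Q) → p ≠ q → w = q →
        p ∈ lineClosure (F ∪ Q) := fun hp hne hq =>
      Or.inl (hp.resolve_left (hq ▸ hne))
    rcases hz with rfl | hzA
    · exact hw x (hmem hx hxz rfl) y (hmem hy hyz rfl) hxy
    rcases hx with rfl | hxA
    · rw [orient_rotate]
      exact hw y (hmem hy hxy.symm rfl) z (Or.inl hzA) hyz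
    rcases hy with rfl | hyA
    · rw [orient_rotate, orient_rotate]
      exact hw z (Or.inl hzA) x (Or.inl hxA) hxz.symm
    exact h.noncollinear x hxA y hyA z hzA hF hxy hyz hxz
  nonconcurrent := by
    intro x₁ hx₁ x₂ hx₂ y₁ hy₁ y₂ hy₂ z₁ hz₁ z₂ hz₂ hF hxy hyz hxz X hX hY hZ
    rw [union_insert] at hx₁ hx₂ hy₁ hy₂ hz₁ hz₂
    by_cases hwx : w = x₁ ∨ w = x₂
    · have := mem_endpoints_of_concurrent hw hwx hx₁ hx₂ hy₁ hy₂ hz₁ hz₂ hxy hyz hxz hX hY hZ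
      tauto
    by_cases hwy : w = y₁ ∨ w = y₂
    · have := mem_endpoints_of_concurrent hw hwy hy₁ hy₂ hx₁ hx₂ hz₁ hz₂ (cross_swap_ne_zero hxy)
        hxz hyz hY hX hZ
      tauto
    by_cases hwz : w = z₁ ∨ w = z₂
    · have := mem_endpoints_of_concurrent hw hwz hz₁ hz₂ hx₁ hx₂ hy₁ hy₂ (cross_swap_ne_zero hxz)
        hxy (cross_swap_ne_zero hyz) hZ hX hY
      tauto
    have hmem : ∀ {p : ℝ × ℝ}, p ∈ Set.insert w (F ∪ Q) → w ≠ p → p ∈ F ∪ Q :=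
      fun hp hne => hp.resolve_left hne.symm
    rw [not_or] at hwx hwy hwz
    exact h.nonconcurrent x₁ (hmem hx₁ hwx.1) x₂ (hmem hx₂ hwx.2) y₁ (hmem hy₁ hwy.1) y₂
      (hmem hy₂ hwy.2) z₁ (hmem hz₁ hwz.1) z₂ (hmem hz₂ hwz.2) hF hxy hyz hxz X hX hY hZ

lemma inGeneralPosition_empty (F : Set (ℝ × ℝ)) : InGeneralPosition F ∅ := by
  constructor <;> simp_all

lemma exists_inGeneralPosition {ι : Type*} [Finite ι] {F : Set (ℝ × ℝ)} (hF : F.Finite)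
    (O : ι → Set (ℝ × ℝ)) (hO : ∀ a, IsOpen (O a)) (hne : ∀ a, (O a).Nonempty) :
    ∃ q : ι → ℝ × ℝ, (∀ a, q a ∈ O a) ∧ Function.Injective q ∧ (∀ a, q a ∉ F) ∧
      InGeneralPosition F (range q) := by
  classical
  have := Fintype.ofFinite ι
  suffices h : ∀ s : Finset ι, ∃ q : ι → ℝ × ℝ, (∀ a ∈ s, q a ∈ O a ∧ q a ∉ F) ∧
      InjOn q s ∧ InGeneralPosition F (q '' s) by
    obtain ⟨q, hq, hinj, hgen⟩ := h Finset.univ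
    rw [Finset.coe_univ] at hinj hgen
    exact ⟨q, fun a => (hq a (Finset.mem_univ a)).1, injOn_univ.1 hinj,
      fun a => (hq a (Finset.mem_univ a)).2, image_univ ▸ hgen⟩
  intro s
  induction s using Finset.induction_on with
  | empty => exact ⟨fun _ => 0, by simp, by simp, by simpa using inGeneralPosition_empty F⟩
  | insert a s ha ih =>
    obtain ⟨q, hq, hinj, hgen⟩ := ih
    obtain ⟨w, hwO, hwA, hw⟩ := exists_mem_open_orient_ne_zero
      (finite_lineClosure (hF.union (s.finite_toSet.image q))) (hO a) (hne a)
    have hwFQ : w ∉ F ∪ q '' s := fun h => hwA (Or.inl h)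
    have hold : EqOn (Function.update q a w) q s := fun b hb =>
      Function.update_of_ne (ne_of_mem_of_not_mem hb ha) _ _
    refine ⟨Function.update q a w, ?_, ?_, ?_⟩
    · refine Finset.forall_mem_insert _ _ _ |>.2 ⟨?_, fun b hb => ?_⟩
      · rw [Function.update_self]
        exact ⟨hwO, fun h => hwFQ (Or.inl h)⟩
      · rw [hold hb]
        exact hq b hb
    · rw [Finset.coe_insert, injOn_insert ha, Function.update_self, hold.image_eq]
      exact ⟨hold.injOn_iff.2 hinj, fun h => hwFQ (Or.inr h)⟩
    · rw [Finset.coe_insert, image_insert_eq, Function.update_self, hold.image_eq]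
      exact hgen.insert hw

/-! ### Systems of segments and polylines -/

/-- A family of segments from `left e` to `right e`, standing for the static edges, together with
polylines with vertices `pt i 0, …, pt i (len i)`, standing for the flexible paths. The values
`pt i r` with `len i < r` are irrelevant. -/
structure PolySystem (S ι : Type*) where
  left : S → ℝ × ℝ
  right : S → ℝ × ℝ
  len : ι → ℕ
  pt : ι → ℕ → ℝ × ℝ

/-- The segments from `A e` to `B e` have their ends in the point set `F`, contain no further
points of `F`, and meet pairwise in at most one point. -/
structure IsSegmentDrawing {S : Type*} (F : Set (ℝ × ℝ)) (A B : S → ℝ × ℝ) : Prop where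
  left_mem : ∀ e, A e ∈ F
  right_mem : ∀ e, B e ∈ F
  left_ne_right : ∀ e, A e ≠ B e
  eq_or_eq_of_mem : ∀ e, ∀ x ∈ F, x ∈ segment ℝ (A e) (B e) → x = A e ∨ x = B e
  inter_subsingleton : ∀ e e', e ≠ e' →
    (segment ℝ (A e) (B e) ∩ segment ℝ (A e') (B e')).Subsingleton

namespace PolySystem

variable {S ι : Type*}

/-- The segments of the system: the static ones and the `len i` segments of each polyline. -/
abbrev Host (D : PolySystem S ι) := S ⊕ (Σ i, Fin (D.len i))

/-- The first endpoint of a segment of the system. -/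
def src (D : PolySystem S ι) : D.Host → ℝ × ℝ
  | Sum.inl e => D.left e
  | Sum.inr ⟨i, r⟩ => D.pt i r

/-- The second endpoint of a segment of the system. -/
def tgt (D : PolySystem S ι) : D.Host → ℝ × ℝ
  | Sum.inl e => D.right e
  | Sum.inr ⟨i, r⟩ => D.pt i (r + 1)

/-- The closed segment with a given index. -/
abbrev seg (D : PolySystem S ι) (σ : D.Host) : Set (ℝ × ℝ) := segment ℝ (D.src σ) (D.tgt σ)

/-- The open segment with a given index. -/
abbrev openSeg (D : PolySystem S ι) (σ : D.Host) : Set (ℝ × ℝ) :=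
  openSegment ℝ (D.src σ) (D.tgt σ)

/-- The other segments of the system which meet the interior of a given one. -/
def crossings (D : PolySystem S ι) (σ : D.Host) : Set D.Host :=
  {σ' | σ' ≠ σ ∧ (D.openSeg σ ∩ D.seg σ').Nonempty}

/-- The inner vertices of the polylines. -/
def bends (D : PolySystem S ι) : Set (ℝ × ℝ) :=
  {x | ∃ i r, 0 < r ∧ r < D.len i ∧ D.pt i r = x}

/-- The system with the vertices of the polylines moved to new places. -/
abbrev redraw (D : PolySystem S ι) (b : ι → ℕ → ℝ × ℝ) : PolySystem S ι := { D with pt := b }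

/-- The static segments are properly drawn, the polylines join distinct points of `F`, and their
inner vertices are distinct new points in general position relative to `F`. -/
structure IsGeneric (D : PolySystem S ι) (F : Set (ℝ × ℝ)) : Prop
    extends IsSegmentDrawing F D.left D.right where
  two_le_len : ∀ i, 2 ≤ D.len i
  zero_mem : ∀ i, D.pt i 0 ∈ F
  last_mem : ∀ i, D.pt i (D.len i) ∈ F
  zero_ne_last : ∀ i, D.pt i 0 ≠ D.pt i (D.len i)
  bend_notMem : ∀ i r, 0 < r → r < D.len i → D.pt i r ∉ F
  bend_inj : ∀ i r i' r', 0 < r → r < D.len i → 0 < r' → r' < D.len i' →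
    D.pt i r = D.pt i' r' → i = i' ∧ r = r'
  inGeneralPosition : InGeneralPosition F D.bends

end PolySystem

lemma ne_left_of_mem_openSegment {a b x : ℝ × ℝ} (h : a ≠ b) (hx : x ∈ openSegment ℝ a b) :
    x ≠ a := by
  rintro rfl
  exact h (left_mem_openSegment_iff.1 hx)

lemma ne_right_of_mem_openSegment {a b x : ℝ × ℝ} (h : a ≠ b) (hx : x ∈ openSegment ℝ a b) :
    x ≠ b := by
  rintro rfl
  exact h (right_mem_openSegment_iff.1 hx)

lemma InGeneralPosition.mono {F Q Q' : Set (ℝ × ℝ)} (h : InGeneralPosition F Q) (hQ : Q' ⊆ Q) :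
    InGeneralPosition F Q' := by
  have hsub := union_subset_union_right F hQ
  exact ⟨fun x hx y hy z hz => h.noncollinear x (hsub hx) y (hsub hy) z (hsub hz),
    fun x₁ hx₁ x₂ hx₂ y₁ hy₁ y₂ hy₂ z₁ hz₁ z₂ hz₂ => h.nonconcurrent x₁ (hsub hx₁) x₂ (hsub hx₂)
      y₁ (hsub hy₁) y₂ (hsub hy₂) z₁ (hsub hz₁) z₂ (hsub hz₂)⟩

lemma InGeneralPosition.eq_ends_of_collinear {F Q : Set (ℝ × ℝ)} (h : InGeneralPosition F Q)
    {a d x y : ℝ × ℝ} (ha : a ∈ F ∪ Q) (haF : a ∉ F) (hd : d ∈ F ∪ Q) (hx : x ∈ F ∪ Q)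
    (hy : y ∈ F ∪ Q) (hxy : x ≠ y) (hda : d ≠ a) (h1 : orient x y a = 0) (h2 : orient x y d = 0) :
    s(a, d) = s(x, y) := by
  by_cases hax : x = a
  · subst hax
    by_contra! hne
    refine h.noncollinear d hd y hy x ha (fun hF => haF hF.2.2) (fun hdy => hne (hdy ▸ rfl))
      hxy.symm hda ?_
    exact orient_eq_zero_of_collinear hxy h2 (orient_self_right _ _) (orient_self_left _ _)
  by_cases hay : y = a
  · subst hay
    by_contra! hne
    refine h.noncollinear d hd x hx y ha (fun hF => haF hF.2.2)
      (fun hdx => hne (hdx ▸ Sym2.eq_swap)) hxy hda ?_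
    exact orient_eq_zero_of_collinear hxy h2 (orient_self_left _ _) (orient_self_right _ _)
  exact absurd h1 (h.noncollinear x hx y hy a ha (fun hF => haF hF.2.2) hxy hay hax)

lemma endpoint_mem_segment_of_collinear {a b c d x : ℝ × ℝ} (hab : a ≠ b) (hc : orient a b c = 0)
    (hd : orient a b d = 0) (hx : x ∈ segment ℝ a b) (hx' : x ∈ segment ℝ c d) :
    c ∈ segment ℝ a b ∨ d ∈ segment ℝ a b ∨ a ∈ segment ℝ c d := by
  obtain ⟨p, rfl⟩ := exists_lineMap_of_orient_eq_zero hab hc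
  obtain ⟨q, rfl⟩ := exists_lineMap_of_orient_eq_zero hab hd
  have hab' := AffineMap.lineMap_injective ℝ hab
  rw [← image_segment, segment_eq_uIcc] at hx' ⊢
  rw [segment_eq_image_lineMap] at hx ⊢
  obtain ⟨t, ht, rfl⟩ := hx
  rw [hab'.mem_set_image] at hx'
  have hparam : p ∈ Icc (0 : ℝ) 1 ∨ q ∈ Icc (0 : ℝ) 1 ∨ 0 ∈ uIcc p q := by
    simp only [mem_uIcc, mem_Icc] at hx' ht ⊢
    grind
  exact hparam.imp (mem_image_of_mem _) (Or.imp (mem_image_of_mem _)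
    fun h => ⟨0, h, AffineMap.lineMap_apply_zero _ _⟩)

namespace PolySystem.IsGeneric

variable {S ι : Type*} {D : PolySystem S ι} {F : Set (ℝ × ℝ)}

lemma pt_mem (h : D.IsGeneric F) {i : ι} {r : ℕ} (hr : r ≤ D.len i) :
    D.pt i r ∈ F ∪ D.bends := by
  rcases r.eq_zero_or_pos with rfl | h0
  · exact Or.inl (h.zero_mem i)
  rcases hr.eq_or_lt with rfl | h1
  · exact Or.inl (h.last_mem i)
  · exact Or.inr ⟨i, r, h0, h1, rfl⟩

lemma bend_eq (h : D.IsGeneric F) {i i' : ι} {r r' : ℕ} (h0 : 0 < r) (h1 : r < D.len i)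
    (hr' : r' ≤ D.len i') (he : D.pt i r = D.pt i' r') : i = i' ∧ r = r' := by
  have hF : D.pt i' r' ∉ F := he ▸ h.bend_notMem i r h0 h1
  refine h.bend_inj i r i' r' h0 h1 (Nat.pos_of_ne_zero ?_) (hr'.lt_of_ne ?_) he
  · rintro rfl
    exact hF (h.zero_mem i')
  · rintro rfl
    exact hF (h.last_mem i')

lemma pt_injOn (h : D.IsGeneric F) (i : ι) : InjOn (D.pt i) (Iic (D.len i)) := by
  intro r hr r' hr' he
  simp only [mem_Iic] at hr hr'
  by_cases hin : 0 < r ∧ r < D.len i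
  · exact (h.bend_eq hin.1 hin.2 hr' he).2
  by_cases hin' : 0 < r' ∧ r' < D.len i
  · exact (h.bend_eq hin'.1 hin'.2 hr he.symm).2.symm
  obtain rfl | rfl : r = 0 ∨ r = D.len i := by omega
  · obtain rfl | rfl : r' = 0 ∨ r' = D.len i := by omega
    · rfl
    · exact absurd he (h.zero_ne_last i)
  · obtain rfl | rfl : r' = 0 ∨ r' = D.len i := by omega
    · exact absurd he.symm (h.zero_ne_last i)
    · rfl

lemma src_mem (h : D.IsGeneric F) : ∀ σ, D.src σ ∈ F ∪ D.bends
  | Sum.inl e => Or.inl (h.left_mem e)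
  | Sum.inr ⟨_, r⟩ => h.pt_mem r.2.le

lemma tgt_mem (h : D.IsGeneric F) : ∀ σ, D.tgt σ ∈ F ∪ D.bends
  | Sum.inl e => Or.inl (h.right_mem e)
  | Sum.inr ⟨_, r⟩ => h.pt_mem r.2

lemma src_ne_tgt (h : D.IsGeneric F) : ∀ σ, D.src σ ≠ D.tgt σ
  | Sum.inl e => h.left_ne_right e
  | Sum.inr ⟨i, r⟩ => fun he =>
    absurd (h.pt_injOn i (mem_Iic.2 r.2.le) (mem_Iic.2 r.2) he) (by omega)

lemma src_notMem_or_tgt_notMem (h : D.IsGeneric F) (p : Σ i, Fin (D.len i)) :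
    D.src (Sum.inr p) ∉ F ∨ D.tgt (Sum.inr p) ∉ F := by
  obtain ⟨i, r⟩ := p
  have := h.two_le_len i
  by_cases h0 : 0 < (r : ℕ)
  · exact Or.inl (h.bend_notMem i r h0 r.2)
  · exact Or.inr (h.bend_notMem i (r + 1) (by omega) (by omega))

lemma ends_ne (h : D.IsGeneric F) {p : Σ i, Fin (D.len i)} {σ : D.Host} (hne : σ ≠ Sum.inr p) :
    s(D.src (Sum.inr p), D.tgt (Sum.inr p)) ≠ s(D.src σ, D.tgt σ) := by
  intro he
  have hnew := h.src_notMem_or_tgt_notMem p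
  obtain ⟨i, r⟩ := p
  obtain e | ⟨i', r'⟩ := σ
  · rcases Sym2.eq_iff.1 he with ⟨h1, h2⟩ | ⟨h1, h2⟩ <;> rw [h1, h2] at hnew
    · exact hnew.elim (fun hn => hn (h.left_mem e)) fun hn => hn (h.right_mem e)
    · exact hnew.elim (fun hn => hn (h.right_mem e)) fun hn => hn (h.left_mem e)
  have hi : ∀ a c, D.pt i r = D.pt i' a → D.pt i (r + 1) = D.pt i' c → a ≤ D.len i' →
      c ≤ D.len i' → i = i' := by
    intro a c h1 h2 ha hc
    have := h.two_le_len i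
    by_cases h0 : 0 < (r : ℕ)
    · exact (h.bend_eq h0 r.2 ha h1).1
    · exact (h.bend_eq (by omega) (by omega) hc h2).1
  have hr := r.2
  have hr' := r'.2
  rcases Sym2.eq_iff.1 he with ⟨h1, h2⟩ | ⟨h1, h2⟩
  · obtain rfl := hi r' (r' + 1) h1 h2 hr'.le hr'
    exact hne (by rw [Fin.ext (h.pt_injOn i hr.le hr'.le h1)])
  · obtain rfl := hi (r' + 1) r' h1 h2 hr' hr'.le
    have := h.pt_injOn i (mem_Iic.2 hr.le) (mem_Iic.2 hr') h1
    have := h.pt_injOn i (mem_Iic.2 hr) (mem_Iic.2 hr'.le) h2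
    omega

lemma not_collinear (h : D.IsGeneric F) {p : Σ i, Fin (D.len i)} {σ : D.Host}
    (hne : σ ≠ Sum.inr p) (h1 : orient (D.src σ) (D.tgt σ) (D.src (Sum.inr p)) = 0)
    (h2 : orient (D.src σ) (D.tgt σ) (D.tgt (Sum.inr p)) = 0) : False := by
  refine h.ends_ne hne ?_
  have hpt := h.src_ne_tgt (Sum.inr p)
  rcases h.src_notMem_or_tgt_notMem p with hF | hF
  · exact h.inGeneralPosition.eq_ends_of_collinear (h.src_mem _) hF (h.tgt_mem _) (h.src_mem σ)
      (h.tgt_mem σ) (h.src_ne_tgt σ) hpt.symm h1 h2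
  · rw [Sym2.eq_swap]
    exact h.inGeneralPosition.eq_ends_of_collinear (h.tgt_mem _) hF (h.src_mem _) (h.src_mem σ)
      (h.tgt_mem σ) (h.src_ne_tgt σ) hpt h2 h1

lemma eq_src_or_eq_tgt (h : D.IsGeneric F) {σ : D.Host} {x : ℝ × ℝ} (hx : x ∈ F ∪ D.bends)
    (hmem : x ∈ D.seg σ) : x = D.src σ ∨ x = D.tgt σ := by
  have h0 := orient_eq_zero_of_mem_segment hmem
  by_contra! hne
  have hnc := h.inGeneralPosition.noncollinear _ (h.src_mem σ) _ (h.tgt_mem σ) x hx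
  by_cases hF : D.src σ ∈ F ∧ D.tgt σ ∈ F ∧ x ∈ F
  · obtain e | p := σ
    · exact (h.eq_or_eq_of_mem e x hF.2.2 hmem).elim hne.1 hne.2
    · exact (h.src_notMem_or_tgt_notMem p).elim (fun hn => hn hF.1) fun hn => hn hF.2.1
  · exact hnc hF (h.src_ne_tgt σ) hne.2.symm hne.1.symm h0

lemma notMem_openSeg (h : D.IsGeneric F) (σ : D.Host) {x : ℝ × ℝ} (hx : x ∈ F ∪ D.bends) :
    x ∉ D.openSeg σ := by
  intro hmem
  rcases h.eq_src_or_eq_tgt hx (openSegment_subset_segment _ _ _ hmem) with hx' | hx'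
  · exact ne_left_of_mem_openSegment (h.src_ne_tgt σ) hmem hx'
  · exact ne_right_of_mem_openSegment (h.src_ne_tgt σ) hmem hx'

lemma cross_ne_zero (h : D.IsGeneric F) {p : Σ i, Fin (D.len i)} {σ : D.Host}
    (hne : σ ≠ Sum.inr p) {x : ℝ × ℝ}
    (hx : orient (D.src (Sum.inr p)) (D.tgt (Sum.inr p)) x = 0)
    (hx' : orient (D.src σ) (D.tgt σ) x = 0) :
    cross (D.tgt (Sum.inr p) - D.src (Sum.inr p)) (D.tgt σ - D.src σ) ≠ 0 := by
  intro h0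
  rw [cross_swap, neg_eq_zero, cross_sub_eq_orient_sub] at h0
  obtain ⟨θ, rfl⟩ := exists_lineMap_of_orient_eq_zero (h.src_ne_tgt _) hx
  rw [orient_lineMap] at hx'
  exact h.not_collinear hne (by linear_combination hx' - θ * h0)
    (by linear_combination hx' + (1 - θ) * h0)

lemma inter_subsingleton_of_ne_inr (h : D.IsGeneric F) {p : Σ i, Fin (D.len i)} {σ : D.Host}
    (hne : σ ≠ Sum.inr p) : (D.seg (Sum.inr p) ∩ D.seg σ).Subsingleton := by
  rintro x ⟨hx, hx'⟩ y ⟨hy, hy'⟩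
  have hx := orient_eq_zero_of_mem_segment hx
  have hx' := orient_eq_zero_of_mem_segment hx'
  exact eq_of_mem_two_lines (h.cross_ne_zero hne hx hx') hx hx' (orient_eq_zero_of_mem_segment hy)
    (orient_eq_zero_of_mem_segment hy')

lemma seg_inter_subsingleton (h : D.IsGeneric F) {σ σ' : D.Host} (hne : σ ≠ σ') :
    (D.seg σ ∩ D.seg σ').Subsingleton := by
  obtain e | p := σ
  · obtain e' | p' := σ'
    · exact h.inter_subsingleton e e' fun he => hne (congrArg Sum.inl he)
    · rw [inter_comm]
      exact h.inter_subsingleton_of_ne_inr hne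
  · exact h.inter_subsingleton_of_ne_inr hne.symm

lemma static_cross_ne_zero (h : D.IsGeneric F) {e e' : S} (hne : e ≠ e') {x : ℝ × ℝ} (hxF : x ∉ F)
    (hx : x ∈ D.seg (Sum.inl e)) (hx' : x ∈ D.seg (Sum.inl e')) :
    cross (D.right e - D.left e) (D.right e' - D.left e') ≠ 0 := by
  intro h0
  have hsub := h.inter_subsingleton e e' hne
  have hline : orient (D.left e) (D.right e) x = 0 := orient_eq_zero_of_mem_segment hx
  obtain ⟨θ, -, -, hθ⟩ := mem_segment_iff_lineMap.1 hx'
  rw [← hθ, orient_lineMap, PolySystem.src, PolySystem.tgt] at hline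
  rw [cross_sub_eq_orient_sub] at h0
  rcases endpoint_mem_segment_of_collinear (h.left_ne_right e)
    (c := D.left e') (d := D.right e') (by linear_combination hline - θ * h0)
    (by linear_combination hline + (1 - θ) * h0) hx hx' with hc | hd | ha
  · exact hxF (hsub ⟨hx, hx'⟩ ⟨hc, left_mem_segment ℝ _ _⟩ ▸ h.left_mem e')
  · exact hxF (hsub ⟨hx, hx'⟩ ⟨hd, right_mem_segment ℝ _ _⟩ ▸ h.right_mem e')
  · exact hxF (hsub ⟨hx, hx'⟩ ⟨left_mem_segment ℝ _ _, ha⟩ ▸ h.left_mem e)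

lemma cross_ne_zero_of_mem_seg (h : D.IsGeneric F) {σ σ' : D.Host} (hne : σ ≠ σ') {x : ℝ × ℝ}
    (hxF : x ∉ F) (hx : x ∈ D.seg σ) (hx' : x ∈ D.seg σ') :
    cross (D.tgt σ - D.src σ) (D.tgt σ' - D.src σ') ≠ 0 := by
  have h0 := orient_eq_zero_of_mem_segment hx
  have h0' := orient_eq_zero_of_mem_segment hx'
  obtain e | p := σ
  · obtain e' | p' := σ'
    · exact h.static_cross_ne_zero (fun he => hne (congrArg Sum.inl he)) hxF hx hx'
    · exact cross_swap_ne_zero (h.cross_ne_zero hne h0' h0)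
  · exact h.cross_ne_zero hne.symm h0 h0'

lemma eq_of_mem_openSeg (h : D.IsGeneric F) {p : Σ i, Fin (D.len i)} {σ σ' : D.Host}
    (hσ : σ ≠ Sum.inr p) (hσ' : σ' ≠ Sum.inr p) {x : ℝ × ℝ} (hx : x ∈ D.openSeg (Sum.inr p))
    (hxσ : x ∈ D.seg σ) (hxσ' : x ∈ D.seg σ') : σ = σ' := by
  by_contra hne
  have hnew : x ∉ F ∪ D.bends := fun hmem => h.notMem_openSeg _ hmem hx
  have hxF : x ∉ F := fun hmem => hnew (Or.inl hmem)
  have hxp := openSegment_subset_segment _ _ _ hx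
  rcases h.inGeneralPosition.nonconcurrent _ (h.src_mem (Sum.inr p)) _ (h.tgt_mem (Sum.inr p))
    _ (h.src_mem σ) _ (h.tgt_mem σ) _ (h.src_mem σ') _ (h.tgt_mem σ')
    (fun hF => (h.src_notMem_or_tgt_notMem p).elim (fun hn => hn hF.1) fun hn => hn hF.2.1)
    (h.cross_ne_zero_of_mem_seg hσ.symm hxF hxp hxσ)
    (h.cross_ne_zero_of_mem_seg hne hxF hxσ hxσ')
    (h.cross_ne_zero_of_mem_seg hσ'.symm hxF hxp hxσ') x (orient_eq_zero_of_mem_segment hxp)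
    (orient_eq_zero_of_mem_segment hxσ) (orient_eq_zero_of_mem_segment hxσ')
    with e | e | e | e | e | e <;> rw [e] at hnew
  exacts [hnew (h.src_mem _), hnew (h.tgt_mem _), hnew (h.src_mem _), hnew (h.tgt_mem _),
    hnew (h.src_mem _), hnew (h.tgt_mem _)]

end PolySystem.IsGeneric

lemma isCompact_segment (a b : ℝ × ℝ) : IsCompact (segment ℝ a b) := by
  rw [segment_eq_image_lineMap]
  exact isCompact_Icc.image AffineMap.lineMap_continuous

lemma exists_pos_forall_disjoint_segment {H : Type*} [Finite H] (A B : H → ℝ × ℝ) :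
    ∃ ρ > 0, ∀ A' B' : H → ℝ × ℝ, (∀ σ, dist (A' σ) (A σ) < ρ) → (∀ σ, dist (B' σ) (B σ) < ρ) →
      ∀ σ σ', Disjoint (segment ℝ (A σ) (B σ)) (segment ℝ (A σ') (B σ')) →
        Disjoint (segment ℝ (A' σ) (B' σ)) (segment ℝ (A' σ') (B' σ')) := by
  have hthick : ∀ p : H × H, ∃ δ > 0,
      Disjoint (segment ℝ (A p.1) (B p.1)) (segment ℝ (A p.2) (B p.2)) →
      Disjoint (Metric.thickening δ (segment ℝ (A p.1) (B p.1)))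
        (Metric.thickening δ (segment ℝ (A p.2) (B p.2))) := by
    intro p
    by_cases hd : Disjoint (segment ℝ (A p.1) (B p.1)) (segment ℝ (A p.2) (B p.2))
    · obtain ⟨δ, hδ, h⟩ := hd.exists_thickenings (isCompact_segment _ _)
        (isCompact_segment _ _).isClosed
      exact ⟨δ, hδ, fun _ => h⟩
    · exact ⟨1, one_pos, fun h => absurd h hd⟩
  choose δ hδ hdisj using hthick
  have hev : ∀ᶠ ρ in nhdsWithin (0 : ℝ) (Ioi 0), ∀ p, ρ < δ p :=
    Filter.eventually_all.2 fun p =>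
      (eventually_lt_nhds (hδ p)).filter_mono nhdsWithin_le_nhds
  obtain ⟨ρ, hρ, hρ0⟩ := (hev.and self_mem_nhdsWithin).exists
  refine ⟨ρ, hρ0, fun A' B' hA hB σ σ' hd => ?_⟩
  have hsub : ∀ τ, ∀ ε > ρ, segment ℝ (A' τ) (B' τ) ⊆
      Metric.thickening ε (segment ℝ (A τ) (B τ)) := fun τ ε hε =>
    ((convex_segment _ _).thickening ε).segment_subset
      (Metric.mem_thickening_iff.2 ⟨_, left_mem_segment ℝ _ _, (hA τ).trans hε⟩)
      (Metric.mem_thickening_iff.2 ⟨_, right_mem_segment ℝ _ _, (hB τ).trans hε⟩)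
  exact (hdisj (σ, σ') hd).mono (hsub σ _ (hρ (σ, σ'))) (hsub σ' _ (hρ (σ, σ')))

/-- `b` arises from the polylines of `D` by replacing each inner vertex `D.pt i r` by a point of
`U i r` while segments that are disjoint remain so. -/
structure PolySystem.IsPerturbation {S ι : Type*} (D : PolySystem S ι)
    (U : ι → ℕ → Set (ℝ × ℝ)) (b : ι → ℕ → ℝ × ℝ) : Prop where
  zero : ∀ i, b i 0 = D.pt i 0
  last : ∀ i, b i (D.len i) = D.pt i (D.len i)
  mem : ∀ i r, 0 < r → r < D.len i → b i r ∈ U i r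
  disjoint : ∀ σ σ' : D.Host, Disjoint (D.seg σ) (D.seg σ') →
    Disjoint ((D.redraw b).seg σ) ((D.redraw b).seg σ')

lemma PolySystem.exists_isPerturbation_isGeneric {S ι : Type*} [Finite S] [Finite ι]
    {F : Set (ℝ × ℝ)} (hF : F.Finite) (D : PolySystem S ι)
    (hst : IsSegmentDrawing F D.left D.right) (hlen : ∀ i, 2 ≤ D.len i)
    (hzero : ∀ i, D.pt i 0 ∈ F) (hlast : ∀ i, D.pt i (D.len i) ∈ F)
    (hne : ∀ i, D.pt i 0 ≠ D.pt i (D.len i)) {U : ι → ℕ → Set (ℝ × ℝ)}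
    (hU : ∀ i r, 0 < r → r < D.len i → IsOpen (U i r))
    (hDU : ∀ i r, 0 < r → r < D.len i → D.pt i r ∈ closure (U i r)) :
    ∃ b, D.IsPerturbation U b ∧ (D.redraw b).IsGeneric F := by
  obtain ⟨ρ, hρ, hdisj⟩ := exists_pos_forall_disjoint_segment D.src D.tgt
  obtain ⟨q, hqO, hqinj, hqF, hq⟩ := exists_inGeneralPosition hF
    (ι := {p : Σ i, Fin (D.len i) // 0 < (p.2 : ℕ)})
    (fun p => U p.1.1 p.1.2 ∩ Metric.ball (D.pt p.1.1 p.1.2) ρ)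
    (fun p => (hU _ _ p.2 p.1.2.2).inter Metric.isOpen_ball)
    (fun p => inter_comm (U _ _) _ ▸ mem_closure_iff.1 (hDU _ _ p.2 p.1.2.2) _ Metric.isOpen_ball
      (Metric.mem_ball_self hρ))
  let b : ι → ℕ → ℝ × ℝ := fun i r =>
    if h : 0 < r ∧ r < D.len i then q ⟨⟨i, ⟨r, h.2⟩⟩, h.1⟩ else D.pt i r
  have hb_end : ∀ i r, ¬(0 < r ∧ r < D.len i) → b i r = D.pt i r := fun i r h => dif_neg h
  have hb_bend : ∀ i r (h0 : 0 < r) (h1 : r < D.len i), b i r = q ⟨⟨i, ⟨r, h1⟩⟩, h0⟩ :=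
    fun i r h0 h1 => dif_pos ⟨h0, h1⟩
  have hb_zero : ∀ i, b i 0 = D.pt i 0 := fun i => hb_end i 0 (by omega)
  have hb_last : ∀ i, b i (D.len i) = D.pt i (D.len i) := fun i => hb_end i _ (by omega)
  have hb_dist : ∀ i r, dist (b i r) (D.pt i r) < ρ := fun i r => by
    by_cases h : 0 < r ∧ r < D.len i
    · rw [hb_bend i r h.1 h.2]
      exact (hqO ⟨⟨i, ⟨r, h.2⟩⟩, h.1⟩).2
    · rwa [hb_end i r h, dist_self]
  refine ⟨b, ⟨hb_zero, hb_last, fun i r h0 h1 => ?_, hdisj _ _ ?_ ?_⟩, ⟨hst, hlen,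
    fun i => (hb_zero i).symm ▸ hzero i,
    fun i => show b i (D.len i) ∈ F from (hb_last i).symm ▸ hlast i,
    fun i => ?_, fun i r h0 h1 => ?_, fun i r i' r' h0 h1 h0' h1' he => ?_, hq.mono ?_⟩⟩
  · exact hb_bend i r h0 h1 ▸ (hqO ⟨⟨i, ⟨r, h1⟩⟩, h0⟩).1
  · rintro (e | ⟨i, r⟩)
    exacts [(dist_self (D.left e)).trans_lt hρ, hb_dist i r]
  · rintro (e | ⟨i, r⟩)
    exacts [(dist_self (D.right e)).trans_lt hρ, hb_dist i (r + 1)]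
  · change b i 0 ≠ b i (D.len i)
    rw [hb_zero, hb_last]
    exact hne i
  · exact show b i r ∉ F from hb_bend i r h0 h1 ▸ hqF _
  · have he : b i r = b i' r' := he
    rw [hb_bend i r h0 h1, hb_bend i' r' h0' h1'] at he
    cases hqinj he
    exact ⟨rfl, rfl⟩
  · rintro _ ⟨i, r, h0, h1, rfl⟩
    exact ⟨_, (hb_bend i r h0 h1).symm⟩

/-! ### Drawings supported by a system of host segments -/

lemma exists_injective_eqOn_notMem {α β : Type*} [Finite α] {K : Set α} {p : α → β} {U : Set β}
    (hp : InjOn p K) (hK : MapsTo p K U) (hU : Uᶜ.Infinite) :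
    ∃ q, Function.Injective q ∧ EqOn q p K ∧ ∀ a ∉ K, q a ∉ U := by
  classical
  have := hU.to_subtype
  obtain ⟨φ⟩ : Nonempty (α ↪ (Uᶜ : Set β)) :=
    ⟨(Finite.equivFin α).toEmbedding.trans (Fin.valEmbedding.trans (Infinite.natEmbedding _))⟩
  refine ⟨K.piecewise p fun a => φ a, ?_, piecewise_eqOn _ _ _, fun a ha => ?_⟩
  · refine (injective_piecewise_iff _).2
      ⟨hp, fun a _ a' _ h => φ.injective (Subtype.ext h), fun a ha a' _ h => (φ a').2 ?_⟩
    exact h ▸ hK ha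
  · rw [piecewise_eq_of_notMem _ _ _ ha]
    exact (φ a).2

section HostedEdges

variable {V E H : Type*}

/-- The segments between the points `pos (x ε)` and `pos (y ε)` are pieces of the segments between
`A (host ε)` and `B (host ε)`, pieces of the same host do not overlap, and no vertex lies inside a
piece. -/
structure IsHosted (pos : V → ℝ × ℝ) (x y : E → V) (A B : H → ℝ × ℝ) (host : E → H) : Prop where
  subset : ∀ ε, segment ℝ (pos (x ε)) (pos (y ε)) ⊆ segment ℝ (A (host ε)) (B (host ε))
  disjoint : ∀ ε ε', ε ≠ ε' → host ε = host ε' →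
    Disjoint (openSegment ℝ (pos (x ε)) (pos (y ε))) (openSegment ℝ (pos (x ε')) (pos (y ε')))
  notMem : ∀ w ε, pos w ∉ openSegment ℝ (pos (x ε)) (pos (y ε))

lemma segment_eq_of_sym2_eq {a b c d : V} (h : s(a, b) = s(c, d)) (pos : V → ℝ × ℝ) :
    segment ℝ (pos a) (pos b) = segment ℝ (pos c) (pos d) := by
  rcases Sym2.eq_iff.1 h with ⟨rfl, rfl⟩ | ⟨rfl, rfl⟩
  exacts [rfl, segment_symm _ _ _]

lemma openSegment_eq_of_sym2_eq {a b c d : V} (h : s(a, b) = s(c, d)) (pos : V → ℝ × ℝ) :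
    openSegment ℝ (pos a) (pos b) = openSegment ℝ (pos c) (pos d) := by
  rcases Sym2.eq_iff.1 h with ⟨rfl, rfl⟩ | ⟨rfl, rfl⟩
  exacts [rfl, openSegment_symm _ _ _]

lemma isGeomDrawing_of_disjoint_or_subsingleton {G : SimpleGraph V} {pos : V → ℝ × ℝ}
    (hinj : Function.Injective pos)
    (hW : ∀ u v, G.Adj u v → ∀ w, pos w ∉ openSegment ℝ (pos u) (pos v))
    (hS : ∀ u v x y, G.Adj u v → G.Adj x y → s(u, v) ≠ s(x, y) →
      Disjoint (openSegment ℝ (pos u) (pos v)) (openSegment ℝ (pos x) (pos y)) ∨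
      (segment ℝ (pos u) (pos v) ∩ segment ℝ (pos x) (pos y)).Subsingleton) :
    IsGeomDrawing G pos := by
  have hends : ∀ u v, G.Adj u v → ∀ w, pos w ∈ segment ℝ (pos u) (pos v) → w = u ∨ w = v := by
    intro u v huv w hw
    rcases eq_or_eq_or_mem_openSegment hw with h | h | h
    exacts [Or.inl (hinj h), Or.inr (hinj h), absurd h (hW u v huv w)]
  refine ⟨hinj, hends, fun u v x y huv hxy hne => ?_⟩
  by_cases hd : Disjoint (openSegment ℝ (pos u) (pos v)) (openSegment ℝ (pos x) (pos y))
  · refine Or.inl fun p ⟨hp, hp'⟩ => ?_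
    have hvertex : ∃ w, pos w = p := by
      rcases eq_or_eq_or_mem_openSegment hp with h | h | h
      · exact ⟨u, h.symm⟩
      · exact ⟨v, h.symm⟩
      · rcases eq_or_eq_or_mem_openSegment hp' with h' | h' | h'
        exacts [⟨x, h'.symm⟩, ⟨y, h'.symm⟩, absurd h' (disjoint_left.1 hd h)]
    obtain ⟨w, rfl⟩ := hvertex
    exact ⟨⟨w, hends u v huv w hp, rfl⟩, ⟨w, hends x y hxy w hp', rfl⟩⟩
  · obtain ⟨p, hp, hp'⟩ := not_disjoint_iff.1 hd
    exact Or.inr ⟨p, ((hS u v x y huv hxy hne).resolve_left hd).eq_singleton_of_mem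
      ⟨openSegment_subset_segment _ _ _ hp, openSegment_subset_segment _ _ _ hp'⟩, hp, hp'⟩

namespace IsHosted

variable {G : SimpleGraph V} {pos : V → ℝ × ℝ} {x y : E → V} {A B : H → ℝ × ℝ} {host : E → H}

lemma isGeomDrawing (h : IsHosted pos x y A B host) (hinj : Function.Injective pos)
    (hE : ∀ u v, G.Adj u v → ∃ ε, s(u, v) = s(x ε, y ε))
    (hS : ∀ σ σ', σ ≠ σ' → (segment ℝ (A σ) (B σ) ∩ segment ℝ (A σ') (B σ')).Subsingleton) :
    IsGeomDrawing G pos := by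
  refine isGeomDrawing_of_disjoint_or_subsingleton hinj (fun u v huv w => ?_)
    (fun u v u' v' huv huv' hne => ?_)
  · obtain ⟨ε, hε⟩ := hE u v huv
    exact openSegment_eq_of_sym2_eq hε pos ▸ h.notMem w ε
  · obtain ⟨ε, hε⟩ := hE u v huv
    obtain ⟨ε', hε'⟩ := hE u' v' huv'
    rw [segment_eq_of_sym2_eq hε, segment_eq_of_sym2_eq hε', openSegment_eq_of_sym2_eq hε,
      openSegment_eq_of_sym2_eq hε']
    by_cases hh : host ε = host ε'
    · exact Or.inl (h.disjoint ε ε' (fun he => hne (by rw [hε, hε', he])) hh)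
    · exact Or.inr ((hS _ _ hh).anti (inter_subset_inter (h.subset ε) (h.subset ε')))

lemma exists_of_mem_crossingEdges (h : IsHosted pos x y A B host) (hinj : Function.Injective pos)
    (hE : ∀ u v, G.Adj u v → ∃ ε, s(u, v) = s(x ε, y ε)) {u v : V} (huv : G.Adj u v) {ε : E}
    (hε : s(u, v) = s(x ε, y ε)) {e : Sym2 V} (he : e ∈ crossingEdges G pos u v) :
    ∃ ε' p, e = s(x ε', y ε') ∧ host ε' ≠ host ε ∧ p ∈ openSegment ℝ (pos (x ε)) (pos (y ε)) ∧
      p ∈ openSegment ℝ (pos (x ε')) (pos (y ε')) := by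
  obtain ⟨hG, a, b, rfl, p, hsingle, hp, hp'⟩ := he
  obtain ⟨ε', hε'⟩ := hE a b hG
  rw [openSegment_eq_of_sym2_eq hε] at hp
  rw [openSegment_eq_of_sym2_eq hε'] at hp'
  refine ⟨ε', p, hε', fun hh => ?_, hp, hp'⟩
  have heq : ε' = ε := by
    by_contra hne
    exact disjoint_left.1 (h.disjoint ε' ε hne hh) hp' hp
  rw [segment_eq_of_sym2_eq hε', heq, ← segment_eq_of_sym2_eq hε, inter_self] at hsingle
  have hu : pos u = p := eq_of_mem_singleton (hsingle ▸ left_mem_segment ℝ _ _)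
  have hv : pos v = p := eq_of_mem_singleton (hsingle ▸ right_mem_segment ℝ _ _)
  exact huv.ne (hinj (hu.trans hv.symm))

lemma ncard_crossingEdges_le [Finite H] (h : IsHosted pos x y A B host)
    (hinj : Function.Injective pos) (hE : ∀ u v, G.Adj u v → ∃ ε, s(u, v) = s(x ε, y ε))
    (hS : ∀ σ σ', σ ≠ σ' → (segment ℝ (A σ) (B σ) ∩ segment ℝ (A σ') (B σ')).Subsingleton)
    {u v : V} (huv : G.Adj u v) {ε : E} (hε : s(u, v) = s(x ε, y ε)) :
    (crossingEdges G pos u v).ncard ≤ {σ | σ ≠ host ε ∧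
      (openSegment ℝ (pos (x ε)) (pos (y ε)) ∩ segment ℝ (A σ) (B σ)).Nonempty}.ncard := by
  have : Nonempty E := ⟨ε⟩
  have hsub : ∀ ε, openSegment ℝ (pos (x ε)) (pos (y ε)) ⊆ segment ℝ (A (host ε)) (B (host ε)) :=
    fun ε => (openSegment_subset_segment _ _ _).trans (h.subset ε)
  choose! φ p hφ hhost hp hp' using fun (e : Sym2 V) (he : e ∈ crossingEdges G pos u v) =>
    h.exists_of_mem_crossingEdges hinj hE huv hε he
  refine ncard_le_ncard_of_injOn (fun e => host (φ e))
    (fun e he => ⟨hhost e he, p e, hp e he, hsub _ (hp' e he)⟩) (fun e he e' he' hee => ?_)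
    (toFinite _)
  have hpp : p e = p e' := hS _ _ (hhost e he) ⟨hsub _ (hp' e he), hsub _ (hp e he)⟩
    ⟨by simp only at hee; rw [hee]; exact hsub _ (hp' e' he'), hsub _ (hp e' he')⟩
  have hφφ : φ e = φ e' := by
    by_contra hne
    exact disjoint_left.1 (h.disjoint _ _ hne hee) (hp' e he) (hpp ▸ hp' e' he')
  rw [hφ e he, hφ e' he', hφφ]

lemma isGeomKPlanar [Finite H] (h : IsHosted pos x y A B host)
    (hinj : Function.Injective pos) (hE : ∀ u v, G.Adj u v → ∃ ε, s(u, v) = s(x ε, y ε))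
    (hS : ∀ σ σ', σ ≠ σ' → (segment ℝ (A σ) (B σ) ∩ segment ℝ (A σ') (B σ')).Subsingleton)
    {k : ℕ} (hk : ∀ ε, {σ | σ ≠ host ε ∧
      (openSegment ℝ (pos (x ε)) (pos (y ε)) ∩ segment ℝ (A σ) (B σ)).Nonempty}.ncard ≤ k) :
    IsGeomKPlanar k G pos := by
  refine ⟨h.isGeomDrawing hinj hE hS, fun u v huv => ?_⟩
  obtain ⟨ε, hε⟩ := hE u v huv
  exact (h.ncard_crossingEdges_le hinj hE hS huv hε).trans (hk ε)

end IsHosted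

end HostedEdges

/-! ### Breakpoints on a polyline -/

lemma exists_strictMonoOn_image_eq {α : Type*} [LinearOrder α] {D : Set α} (hD : D.Finite) {t : ℕ}
    (hcard : D.ncard = t + 1) : ∃ τ : ℕ → α, StrictMonoOn τ (Iic t) ∧ τ '' Iic t = D := by
  let o := hD.toFinset.orderEmbOfFin ((ncard_eq_toFinset_card D hD).symm.trans hcard)
  have hrange : range o = D := by rw [Finset.range_orderEmbOfFin, hD.coe_toFinset]
  refine ⟨fun j => o ⟨min j t, by omega⟩, fun j hj j' hj' hlt => o.strictMono ?_, ?_⟩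
  · simp only [mem_Iic] at hj hj'
    simpa [hj, hj'] using hlt
  · rw [← hrange]
    refine Subset.antisymm (image_subset_iff.2 fun j _ => ⟨_, rfl⟩) ?_
    rintro _ ⟨j, rfl⟩
    have hj : (j : ℕ) ≤ t := by omega
    exact ⟨j, hj, congrArg o (Fin.ext (min_eq_left hj))⟩

/-- A subdivision of the interval from `0` to `n` into `t` pieces which refines the subdivision at
the integers and separates the points of `C`. -/
structure IsBreakpoints (n t : ℕ) (C : Set ℝ) (τ : ℕ → ℝ) : Prop where
  zero : τ 0 = 0
  last : τ t = n
  strictMonoOn : StrictMonoOn τ (Iic t)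
  natCast_mem : ∀ m ≤ n, (m : ℝ) ∈ τ '' Iic t
  notMem : ∀ j ≤ t, τ j ∉ C
  separated : ∀ j < t, (C ∩ Ioo (τ j) (τ (j + 1))).Subsingleton

lemma exists_separator {C : Set ℝ} (hC : C.Finite) {c b : ℝ} (hcb : c < b) :
    ∃ d ∈ Ioo c b, ∀ c' ∈ C, c < c' → d < c' := by
  have hev : ∀ᶠ d in nhdsWithin c (Ioi c), ∀ c' ∈ C, c < c' → d < c' :=
    (Filter.eventually_all_finite hC).2 fun c' _ => by
      by_cases h : c < c'
      · filter_upwards [Ioo_mem_nhdsGT h] with d hd _ using hd.2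
      · exact Filter.Eventually.of_forall fun d hc => absurd hc h
  obtain ⟨d, hd, hdC⟩ := (Filter.Eventually.and (Ioo_mem_nhdsGT hcb) hev).exists
  exact ⟨d, hd, hdC⟩

lemma IsBreakpoints.of_image_eq {n t : ℕ} {C D : Set ℝ} {τ : ℕ → ℝ} (hmono : StrictMonoOn τ (Iic t))
    (hτ : τ '' Iic t = D) (hD : D ⊆ Icc 0 (n : ℝ) \ C) (hnat : ∀ m ≤ n, (m : ℝ) ∈ D)
    (hsep : ∀ c ∈ C, ∀ c' ∈ C, c < c' → ∃ d ∈ D, c < d ∧ d < c') : IsBreakpoints n t C τ := by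
  subst hτ
  have hle : ∀ j ≤ t, τ j ∈ Icc 0 (n : ℝ) \ C := fun j hj => hD (mem_image_of_mem τ hj)
  refine ⟨?_, ?_, hmono, hnat, fun j hj => (hle j hj).2, fun j hj c hc c' hc' => ?_⟩
  · obtain ⟨j, hj, h0⟩ := hnat 0 n.zero_le
    refine le_antisymm ?_ (hle 0 t.zero_le).1.1
    exact (hmono.monotoneOn t.zero_le hj j.zero_le).trans_eq (by simpa using h0)
  · obtain ⟨j, hj, hn⟩ := hnat n le_rfl
    exact le_antisymm (hle t le_rfl).1.2 (hn ▸ hmono.monotoneOn hj self_mem_Iic hj)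
  · have hbetween : ∀ c ∈ C ∩ Ioo (τ j) (τ (j + 1)), ∀ c' ∈ C ∩ Ioo (τ j) (τ (j + 1)),
        ¬ c < c' := by
      intro c hc c' hc' hlt
      obtain ⟨_, ⟨i, hi, rfl⟩, h1, h2⟩ := hsep c hc.1 c' hc'.1 hlt
      have h3 := (hmono.lt_iff_lt (Nat.le_of_lt hj) hi).1 (hc.2.1.trans h1)
      have h4 := (hmono.lt_iff_lt hi hj).1 (h2.trans hc'.2.2)
      omega
    exact le_antisymm (not_lt.1 (hbetween c' hc' c hc)) (not_lt.1 (hbetween c hc c' hc'))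

lemma exists_isBreakpoints {n t : ℕ} (hn : 1 ≤ n) {C : Set ℝ} (hC : C.Finite)
    (hC_Ioo : C ⊆ Ioo 0 (n : ℝ)) (hC_nat : ∀ m : ℕ, (m : ℝ) ∉ C) (ht : n + C.ncard ≤ t) :
    ∃ τ, IsBreakpoints n t C τ := by
  choose! sep hsep hsepC using fun c (hc : c ∈ C) => exists_separator hC (hC_Ioo hc).2
  let D₁ : Set ℝ := Nat.cast '' Iic n ∪ sep '' C
  have hD₁ : D₁ ⊆ Icc 0 (n : ℝ) \ C := by
    rintro _ (⟨m, hm, rfl⟩ | ⟨c, hc, rfl⟩)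
    · exact ⟨⟨m.cast_nonneg, Nat.cast_le.2 hm⟩, hC_nat m⟩
    · exact ⟨⟨((hC_Ioo hc).1.trans (hsep c hc).1).le, (hsep c hc).2.le⟩,
        fun hmem => lt_irrefl _ (hsepC c hc _ hmem (hsep c hc).1)⟩
  have hD₁_fin : D₁.Finite := ((finite_Iic n).image _).union (hC.image _)
  have hD₁_card : D₁.ncard ≤ t + 1 := by
    have hnat := ncard_image_le (f := (Nat.cast : ℕ → ℝ)) (finite_Iic n)
    have hsep_card := ncard_image_le (f := sep) hC
    have hIic : (Iic n).ncard = n + 1 := by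
      rw [← Finset.coe_Iic, ncard_coe_finset, Nat.card_Iic]
    have hunion : D₁.ncard ≤ _ := ncard_union_le _ _
    omega
  have hinf : (Icc 0 (n : ℝ) \ C).Infinite :=
    (Icc_infinite (by exact_mod_cast hn)).sdiff hC
  obtain ⟨D, hD₁D, hD, hcard⟩ := hinf.exists_superset_ncard_eq hD₁ hD₁_fin hD₁_card
  obtain ⟨τ, hmono, hτ⟩ := exists_strictMonoOn_image_eq (finite_of_ncard_pos (by omega)) hcard
  exact ⟨τ, .of_image_eq hmono hτ hD (fun m hm => hD₁D (Or.inl ⟨m, hm, rfl⟩))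
    fun c hc c' hc' hlt => ⟨sep c, hD₁D (Or.inr ⟨c, hc, rfl⟩), (hsep c hc).1,
      hsepC c hc c' hc' hlt⟩⟩

lemma exists_natCast_or_mem_Ioo {n : ℕ} {c : ℝ} (hc : c ∈ Icc 0 (n : ℝ)) :
    (∃ r ≤ n, (r : ℝ) = c) ∨ ∃ r : Fin n, c ∈ Ioo (r : ℝ) (r + 1) := by
  rcases (Nat.floor_le hc.1).eq_or_lt with h | h
  · exact Or.inl ⟨⌊c⌋₊, Nat.floor_le_of_le hc.2, h⟩
  · exact Or.inr ⟨⟨⌊c⌋₊, by exact_mod_cast h.trans_le hc.2⟩, h, Nat.lt_floor_add_one c⟩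

namespace PolySystem

variable {S ι : Type*}

/-- The `i`-th polyline, parametrized so that the vertex `pt i r` sits at the parameter `r`. -/
def curve (D : PolySystem S ι) (i : ι) (c : ℝ) : ℝ × ℝ :=
  AffineMap.lineMap (D.pt i ⌊c⌋₊) (D.pt i (⌊c⌋₊ + 1)) (c - ⌊c⌋₊)

/-- The parameters, other than the integers, at which the `i`-th polyline meets another segment. -/
def hits (D : PolySystem S ι) (i : ι) : Set ℝ :=
  {c | ∃ r : Fin (D.len i), c ∈ Ioo (r : ℝ) (r + 1) ∧ ∃ σ ≠ Sum.inr ⟨i, r⟩, D.curve i c ∈ D.seg σ}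

lemma curve_eq (D : PolySystem S ι) (i : ι) {r : ℕ} {c : ℝ} (hc : c ∈ Icc (r : ℝ) (r + 1)) :
    D.curve i c = AffineMap.lineMap (D.pt i r) (D.pt i (r + 1)) (c - r) := by
  rcases hc.2.eq_or_lt with rfl | hlt
  · have hfloor : ⌊(r : ℝ) + 1⌋₊ = r + 1 := by exact_mod_cast Nat.floor_natCast (r + 1)
    simp [curve, hfloor]
  · rw [curve, (Nat.floor_eq_iff (r.cast_nonneg.trans hc.1)).2 ⟨hc.1, hlt⟩]

lemma curve_natCast (D : PolySystem S ι) (i : ι) (r : ℕ) : D.curve i r = D.pt i r := by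
  simp [D.curve_eq i (left_mem_Icc.2 (le_add_of_nonneg_right zero_le_one))]

lemma curve_mem_openSeg (D : PolySystem S ι) {i : ι} (r : Fin (D.len i)) {c : ℝ}
    (hc : c ∈ Ioo (r : ℝ) (r + 1)) : D.curve i c ∈ D.openSeg (Sum.inr ⟨i, r⟩) := by
  rw [D.curve_eq i (Ioo_subset_Icc_self hc)]
  exact mem_openSegment_iff_lineMap.2 ⟨_, sub_pos.2 hc.1, by linarith [hc.2], rfl⟩

lemma segment_curve_subset (D : PolySystem S ι) {i : ι} (r : Fin (D.len i)) {c d : ℝ}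
    (hc : c ∈ Icc (r : ℝ) (r + 1)) (hd : d ∈ Icc (r : ℝ) (r + 1)) :
    segment ℝ (D.curve i c) (D.curve i d) ⊆ D.seg (Sum.inr ⟨i, r⟩) := by
  have hmem : ∀ c ∈ Icc (r : ℝ) (r + 1), D.curve i c ∈ D.seg (Sum.inr ⟨i, r⟩) := fun c hc => by
    rw [D.curve_eq i hc]
    exact mem_segment_iff_lineMap.2 ⟨_, sub_nonneg.2 hc.1, by linarith [hc.2], rfl⟩
  exact (convex_segment _ _).segment_subset (hmem c hc) (hmem d hd)

lemma openSegment_curve (D : PolySystem S ι) (i : ι) {r : ℕ} {c d : ℝ} (hcd : c < d)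
    (hc : (r : ℝ) ≤ c) (hd : d ≤ r + 1) :
    openSegment ℝ (D.curve i c) (D.curve i d) = D.curve i '' Ioo c d := by
  rw [D.curve_eq i ⟨hc, hcd.le.trans hd⟩, D.curve_eq i ⟨hc.trans hcd.le, hd⟩,
    openSegment_lineMap (sub_lt_sub_right hcd _), ← image_sub_const_Ioo, image_image]
  exact image_congr fun x hx =>
    (D.curve_eq i ⟨hc.trans hx.1.le, hx.2.le.trans hd⟩).symm

namespace IsGeneric

variable {D : PolySystem S ι} {F : Set (ℝ × ℝ)}

lemma curve_injOn_Icc (h : D.IsGeneric F) {i : ι} (r : Fin (D.len i)) :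
    InjOn (D.curve i) (Icc (r : ℝ) (r + 1)) := fun c hc d hd he => by
  rw [D.curve_eq i hc, D.curve_eq i hd] at he
  exact sub_left_injective (AffineMap.lineMap_injective ℝ (h.src_ne_tgt (Sum.inr ⟨i, r⟩)) he)

lemma eq_inr_of_curve_mem_openSeg (h : D.IsGeneric F) {i : ι} {c : ℝ} (hc : c ∈ Icc 0 (D.len i : ℝ))
    (hhit : c ∉ D.hits i) {σ : D.Host} (hσ : D.curve i c ∈ D.openSeg σ) :
    ∃ r : Fin (D.len i), σ = Sum.inr ⟨i, r⟩ ∧ c ∈ Ioo (r : ℝ) (r + 1) := by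
  rcases exists_natCast_or_mem_Ioo hc with ⟨r, hr, rfl⟩ | ⟨r, hr⟩
  · rw [curve_natCast] at hσ
    exact absurd hσ (h.notMem_openSeg σ (h.pt_mem hr))
  · refine ⟨r, ?_, hr⟩
    by_contra hne
    exact hhit ⟨r, hr, σ, hne, openSegment_subset_segment _ _ _ hσ⟩

lemma curve_inj (h : D.IsGeneric F) {i i' : ι} {c c' : ℝ} (hc : c ∈ Ioo 0 (D.len i : ℝ))
    (hhit : c ∉ D.hits i) (hc' : c' ∈ Icc 0 (D.len i' : ℝ)) (he : D.curve i c = D.curve i' c') :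
    i = i' ∧ c = c' := by
  rcases exists_natCast_or_mem_Ioo hc' with ⟨r', hr', rfl⟩ | ⟨r', hr'⟩
  · rcases exists_natCast_or_mem_Ioo (Ioo_subset_Icc_self hc) with ⟨r, -, rfl⟩ | ⟨r, hr⟩
    · rw [curve_natCast, curve_natCast] at he
      obtain ⟨rfl, rfl⟩ :=
        h.bend_eq (Nat.cast_pos.1 hc.1) (Nat.cast_lt.1 hc.2) hr' he
      exact ⟨rfl, rfl⟩
    · refine absurd (he ▸ D.curve_mem_openSeg r hr) (h.notMem_openSeg _ ?_)
      rw [curve_natCast]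
      exact h.pt_mem hr'
  · obtain ⟨r, hσ, hr⟩ := h.eq_inr_of_curve_mem_openSeg (Ioo_subset_Icc_self hc) hhit
      (he ▸ D.curve_mem_openSeg r' hr')
    cases hσ
    exact ⟨rfl, h.curve_injOn_Icc r (Ioo_subset_Icc_self hr)
      (Ioo_subset_Icc_self hr') he⟩

lemma exists_injOn_hits (h : D.IsGeneric F) (i : ι) :
    ∃ φ : ℝ → Fin (D.len i) × D.Host, InjOn φ (D.hits i) ∧
      MapsTo φ (D.hits i) {p | p.2 ∈ D.crossings (Sum.inr ⟨i, p.1⟩)} := by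
  have hlen : 0 < D.len i := two_pos.trans_le (h.two_le_len i)
  have : Nonempty (Fin (D.len i) × D.Host) := ⟨⟨0, hlen⟩, Sum.inr ⟨i, ⟨0, hlen⟩⟩⟩
  have hch : ∀ c ∈ D.hits i, ∃ p : Fin (D.len i) × D.Host, c ∈ Ioo (p.1 : ℝ) (p.1 + 1) ∧
      p.2 ≠ Sum.inr ⟨i, p.1⟩ ∧ D.curve i c ∈ D.seg p.2 :=
    fun c ⟨r, hr, σ, hσ, hmem⟩ => ⟨(r, σ), hr, hσ, hmem⟩
  choose! φ hφ hne hmem using hch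
  have hmem' : ∀ c ∈ D.hits i, D.curve i c ∈ D.openSeg (Sum.inr ⟨i, (φ c).1⟩) :=
    fun c hc => D.curve_mem_openSeg _ (hφ c hc)
  refine ⟨φ, fun c hc d hd he => ?_, fun c hc => ⟨hne c hc, _, hmem' c hc, hmem c hc⟩⟩
  refine h.curve_injOn_Icc (φ c).1 (Ioo_subset_Icc_self (hφ c hc))
    (Ioo_subset_Icc_self (he ▸ hφ d hd)) (h.seg_inter_subsingleton (hne c hc)
      ⟨hmem c hc, openSegment_subset_segment _ _ _ (hmem' c hc)⟩
      ⟨he ▸ hmem d hd, openSegment_subset_segment _ _ _ (he ▸ hmem' d hd)⟩)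

lemma exists_isBreakpoints [Finite S] [Finite ι] (h : D.IsGeneric F) {i : ι} {t : ℕ}
    (ht : D.len i + {p : Fin (D.len i) × D.Host |
      p.2 ∈ D.crossings (Sum.inr ⟨i, p.1⟩)}.ncard ≤ t) :
    ∃ τ, IsBreakpoints (D.len i) t (D.hits i) τ := by
  obtain ⟨φ, hinj, hmaps⟩ := h.exists_injOn_hits i
  refine _root_.exists_isBreakpoints (one_le_two.trans (h.two_le_len i))
    (Finite.of_finite_image ((toFinite _).subset hmaps.image_subset) hinj) ?_ ?_
    ((Nat.add_le_add_left (ncard_le_ncard_of_injOn φ hmaps hinj (toFinite _)) _).trans ht)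
  · rintro c ⟨r, hr, -⟩
    have hlen : ((r : ℕ) : ℝ) + 1 ≤ D.len i := by exact_mod_cast r.2
    exact ⟨(Nat.cast_nonneg _).trans_lt hr.1, hr.2.trans_le hlen⟩
  · rintro m ⟨r, hr, -⟩
    have h1 : (r : ℕ) < m := Nat.cast_lt.1 hr.1
    have h2 : m < r + 1 := by exact_mod_cast hr.2
    omega

end IsGeneric

end PolySystem

namespace IsBreakpoints

variable {n t : ℕ} {C : Set ℝ} {τ : ℕ → ℝ}

lemma mem_Icc (h : IsBreakpoints n t C τ) {j : ℕ} (hj : j ≤ t) : τ j ∈ Icc 0 (n : ℝ) :=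
  ⟨h.zero ▸ h.strictMonoOn.monotoneOn t.zero_le hj j.zero_le,
    h.last ▸ h.strictMonoOn.monotoneOn hj self_mem_Iic hj⟩

lemma mem_Ioo (h : IsBreakpoints n t C τ) {j : ℕ} (h0 : 0 < j) (hj : j < t) :
    τ j ∈ Ioo 0 (n : ℝ) :=
  ⟨h.zero ▸ h.strictMonoOn t.zero_le hj.le h0, h.last ▸ h.strictMonoOn hj.le self_mem_Iic hj⟩

lemma lt_succ (h : IsBreakpoints n t C τ) {j : ℕ} (hj : j < t) : τ j < τ (j + 1) :=
  h.strictMonoOn hj.le hj j.lt_succ_self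

lemma disjoint_Ioo (h : IsBreakpoints n t C τ) {j j' : ℕ} (hj : j < t) (hj' : j' < t)
    (hne : j ≠ j') : Disjoint (Ioo (τ j) (τ (j + 1))) (Ioo (τ j') (τ (j' + 1))) := by
  wlog hlt : j < j' generalizing j j'
  · exact (this hj' hj hne.symm (by omega)).symm
  · exact disjoint_left.2 fun c hc hc' =>
      ((h.strictMonoOn.monotoneOn hj hj'.le hlt).trans_lt hc'.1).not_gt hc.2

lemma notMem_Ioo (h : IsBreakpoints n t C τ) {j j' : ℕ} (hj : j < t) (hj' : j' ≤ t) :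
    τ j' ∉ Ioo (τ j) (τ (j + 1)) := fun hmem => by
  have h1 := (h.strictMonoOn.lt_iff_lt hj.le hj').1 hmem.1
  have h2 := (h.strictMonoOn.lt_iff_lt hj' hj).1 hmem.2
  omega

lemma floor_lt (h : IsBreakpoints n t C τ) {j : ℕ} (hj : j < t) : ⌊τ j⌋₊ < n :=
  (Nat.floor_lt (h.mem_Icc hj.le).1).2 (h.last ▸ h.strictMonoOn hj.le self_mem_Iic hj)

lemma le_floor_add_one (h : IsBreakpoints n t C τ) {j : ℕ} (hj : j < t) :
    τ (j + 1) ≤ ⌊τ j⌋₊ + 1 := by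
  obtain ⟨j', hj', he⟩ := h.natCast_mem (⌊τ j⌋₊ + 1) (h.floor_lt hj)
  push_cast at he
  rw [← he]
  refine h.strictMonoOn.monotoneOn hj hj' ((h.strictMonoOn.lt_iff_lt hj.le hj').1 ?_)
  exact he ▸ Nat.lt_floor_add_one _

lemma floor_le (h : IsBreakpoints n t C τ) {j : ℕ} (hj : j < t) : (⌊τ j⌋₊ : ℝ) ≤ τ j :=
  Nat.floor_le (h.mem_Icc hj.le).1

end IsBreakpoints

/-! ### Drawing subdivided paths along polylines -/

/-- The edges of `G` are the edges `left e — right e` and the edges of the paths with vertices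
`vert i 0, …, vert i t`, whose inner vertices are distinct and lie on no other edge. -/
structure Threading {V : Type*} (G : SimpleGraph V) (S ι : Type*) (t : ℕ) where
  left : S → V
  right : S → V
  vert : ι → ℕ → V
  cover : ∀ u v, G.Adj u v → (∃ e, s(u, v) = s(left e, right e)) ∨
    ∃ i, ∃ j < t, s(u, v) = s(vert i j, vert i (j + 1))
  vert_inj : ∀ i j i' j', 0 < j → j < t → j' ≤ t → vert i j = vert i' j' → i = i' ∧ j = j'
  left_ne_vert : ∀ e i j, 0 < j → j < t → left e ≠ vert i j
  right_ne_vert : ∀ e i j, 0 < j → j < t → right e ≠ vert i j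

namespace Threading

variable {V S ι : Type*} {G : SimpleGraph V} {t : ℕ}

/-- The endpoints of the static edges and of the paths. -/
def terminals (T : Threading G S ι t) : Set V :=
  {w | (∃ e, w = T.left e ∨ w = T.right e) ∨ ∃ i, w = T.vert i 0 ∨ w = T.vert i t}

/-- The points `p w` are distinct, place the terminals at the ends of the segments and polylines of
`D`, and otherwise avoid `D`. -/
structure IsPlacement (T : Threading G S ι t) (D : PolySystem S ι) (F : Set (ℝ × ℝ))
    (p : V → ℝ × ℝ) : Prop where
  injective : Function.Injective p
  left : ∀ e, D.left e = p (T.left e)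
  right : ∀ e, D.right e = p (T.right e)
  zero : ∀ i, D.pt i 0 = p (T.vert i 0)
  last : ∀ i, D.pt i (D.len i) = p (T.vert i t)
  avoids : ∀ w, p w ∈ F ∨ ∀ σ, p w ∉ D.seg σ

/-- The placement `p` with the inner vertex `vert i j` moved to the parameter `τ i j` of the `i`-th
polyline. -/
def position (T : Threading G S ι t) (D : PolySystem S ι) (τ : ι → ℕ → ℝ) (p : V → ℝ × ℝ) :
    V → ℝ × ℝ :=
  Function.extend (fun q : ι × Ioo 0 t => T.vert q.1 q.2) (fun q => D.curve q.1 (τ q.1 q.2)) p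

/-- The first endpoint of an edge. -/
def edgeLeft (T : Threading G S ι t) : S ⊕ (ι × Fin t) → V
  | Sum.inl e => T.left e
  | Sum.inr (i, j) => T.vert i j

/-- The second endpoint of an edge. -/
def edgeRight (T : Threading G S ι t) : S ⊕ (ι × Fin t) → V
  | Sum.inl e => T.right e
  | Sum.inr (i, j) => T.vert i (j + 1)

lemma exists_edge_of_adj (T : Threading G S ι t) {u v : V} (huv : G.Adj u v) :
    ∃ ε, s(u, v) = s(T.edgeLeft ε, T.edgeRight ε) := by
  rcases T.cover u v huv with ⟨e, he⟩ | ⟨i, j, hj, he⟩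
  exacts [⟨Sum.inl e, he⟩, ⟨Sum.inr (i, ⟨j, hj⟩), he⟩]

lemma position_vert (T : Threading G S ι t) (D : PolySystem S ι) (τ : ι → ℕ → ℝ) (p : V → ℝ × ℝ)
    (i : ι) {j : ℕ} (h0 : 0 < j) (hj : j < t) :
    T.position D τ p (T.vert i j) = D.curve i (τ i j) := by
  have hinj : Function.Injective fun q : ι × Ioo 0 t => T.vert q.1 q.2 := fun q q' he =>
    have h := T.vert_inj _ _ _ _ q.2.2.1 q.2.2.2 q'.2.2.2.le he
    Prod.ext h.1 (Subtype.ext h.2)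
  exact hinj.extend_apply (fun q => D.curve q.1 (τ q.1 q.2)) p (i, ⟨j, h0, hj⟩)

lemma position_of_ne (T : Threading G S ι t) (D : PolySystem S ι) (τ : ι → ℕ → ℝ) (p : V → ℝ × ℝ)
    {w : V} (hw : ∀ i j, 0 < j → j < t → w ≠ T.vert i j) : T.position D τ p w = p w :=
  Function.extend_apply' _ _ _ fun ⟨q, hq⟩ => hw q.1 q.2 q.2.2.1 q.2.2.2 hq.symm

namespace IsPlacement

variable {T : Threading G S ι t} {D : PolySystem S ι} {F : Set (ℝ × ℝ)} {p : V → ℝ × ℝ}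
  {τ : ι → ℕ → ℝ}

lemma position_left (hp : T.IsPlacement D F p) (e : S) :
    T.position D τ p (T.left e) = D.left e := by
  rw [T.position_of_ne _ _ _ (T.left_ne_vert e), hp.left]

lemma position_right (hp : T.IsPlacement D F p) (e : S) :
    T.position D τ p (T.right e) = D.right e := by
  rw [T.position_of_ne _ _ _ (T.right_ne_vert e), hp.right]

lemma position_vert (hp : T.IsPlacement D F p)
    (hτ : ∀ i, IsBreakpoints (D.len i) t (D.hits i) (τ i)) (i : ι) {j : ℕ} (ht : 0 < t)
    (hj : j ≤ t) : T.position D τ p (T.vert i j) = D.curve i (τ i j) := by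
  rcases j.eq_zero_or_pos with rfl | h0
  · rw [T.position_of_ne, (hτ i).zero, ← Nat.cast_zero (R := ℝ), D.curve_natCast, hp.zero]
    rintro i' j' h0 hj' he
    exact h0.ne' (T.vert_inj _ _ _ _ h0 hj' t.zero_le he.symm).2
  rcases hj.eq_or_lt with rfl | hj
  · rw [T.position_of_ne, (hτ i).last, D.curve_natCast, hp.last]
    rintro i' j' h0 hj' he
    exact hj'.ne (T.vert_inj _ _ _ _ h0 hj' le_rfl he.symm).2
  · exact T.position_vert D τ p i h0 hj

lemma notMem_openSeg (hp : T.IsPlacement D F p) (h : D.IsGeneric F) (w : V) (σ : D.Host) :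
    p w ∉ D.openSeg σ := fun hmem =>
  (hp.avoids w).elim (fun hF => h.notMem_openSeg σ (Or.inl hF) hmem)
    fun hseg => hseg σ (openSegment_subset_segment _ _ _ hmem)

lemma ne_curve (hp : T.IsPlacement D F p) (h : D.IsGeneric F) (w : V) {i : ι} {c : ℝ}
    (hc : c ∈ Ioo 0 (D.len i : ℝ)) : p w ≠ D.curve i c := by
  rcases exists_natCast_or_mem_Ioo (Ioo_subset_Icc_self hc) with ⟨r, -, rfl⟩ | ⟨r, hr⟩
  · rw [D.curve_natCast]
    rintro he
    have h0 := Nat.cast_pos.1 hc.1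
    have h1 := Nat.cast_lt.1 hc.2
    refine (hp.avoids w).elim (fun hF => h.bend_notMem i r h0 h1 (he ▸ hF)) fun hseg => ?_
    exact hseg (Sum.inr ⟨i, ⟨r, h1⟩⟩) (he ▸ left_mem_segment ℝ _ _)
  · exact fun he => hp.notMem_openSeg h w _ (he ▸ D.curve_mem_openSeg r hr)

lemma injective_position (hp : T.IsPlacement D F p) (h : D.IsGeneric F)
    (hτ : ∀ i, IsBreakpoints (D.len i) t (D.hits i) (τ i)) :
    Function.Injective (T.position D τ p) := by
  intro w w' he
  by_cases hw : ∃ i j, 0 < j ∧ j < t ∧ w = T.vert i j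
  · obtain ⟨i, j, h0, hj, rfl⟩ := hw
    rw [T.position_vert D τ p i h0 hj] at he
    by_cases hw' : ∃ i j, 0 < j ∧ j < t ∧ w' = T.vert i j
    · obtain ⟨i', j', h0', hj', rfl⟩ := hw'
      rw [T.position_vert D τ p i' h0' hj'] at he
      obtain ⟨rfl, hττ⟩ := h.curve_inj ((hτ i).mem_Ioo h0 hj) ((hτ i).notMem j hj.le)
        ((hτ i').mem_Icc hj'.le) he
      rw [(hτ i).strictMonoOn.injOn hj.le hj'.le hττ]
    · push Not at hw'
      rw [T.position_of_ne D τ p hw'] at he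
      exact absurd he.symm (hp.ne_curve h w' ((hτ i).mem_Ioo h0 hj))
  · push Not at hw
    rw [T.position_of_ne D τ p hw] at he
    by_cases hw' : ∃ i j, 0 < j ∧ j < t ∧ w' = T.vert i j
    · obtain ⟨i', j', h0', hj', rfl⟩ := hw'
      rw [T.position_vert D τ p i' h0' hj'] at he
      exact absurd he (hp.ne_curve h w ((hτ i').mem_Ioo h0' hj'))
    · push Not at hw'
      rw [T.position_of_ne D τ p hw'] at he
      exact hp.injective he

/-- The segment of `D` which carries an edge. -/
def carrier (D : PolySystem S ι) (hτ : ∀ i, IsBreakpoints (D.len i) t (D.hits i) (τ i)) :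
    S ⊕ (ι × Fin t) → D.Host
  | Sum.inl e => Sum.inl e
  | Sum.inr (i, j) => Sum.inr ⟨i, ⟨⌊τ i j⌋₊, (hτ i).floor_lt j.2⟩⟩

lemma openSegment_position (hp : T.IsPlacement D F p)
    (hτ : ∀ i, IsBreakpoints (D.len i) t (D.hits i) (τ i)) (i : ι) (j : Fin t) :
    openSegment ℝ (T.position D τ p (T.vert i j)) (T.position D τ p (T.vert i (j + 1))) =
      D.curve i '' Ioo (τ i j) (τ i (j + 1)) := by
  rw [hp.position_vert hτ i j.pos j.2.le, hp.position_vert hτ i j.pos j.2,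
    D.openSegment_curve i ((hτ i).lt_succ j.2) ((hτ i).floor_le j.2) ((hτ i).le_floor_add_one j.2)]

lemma Icc_subset_Icc_floor {i : ι} (hτ : IsBreakpoints (D.len i) t (D.hits i) (τ i)) (j : Fin t) :
    Icc (τ i j) (τ i (j + 1)) ⊆ Icc (⌊τ i j⌋₊ : ℝ) (⌊τ i j⌋₊ + 1) :=
  Icc_subset_Icc (hτ.floor_le j.2) (hτ.le_floor_add_one j.2)

lemma segment_edge_subset (hp : T.IsPlacement D F p)
    (hτ : ∀ i, IsBreakpoints (D.len i) t (D.hits i) (τ i)) (ε : S ⊕ (ι × Fin t)) :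
    segment ℝ (T.position D τ p (T.edgeLeft ε)) (T.position D τ p (T.edgeRight ε)) ⊆
      D.seg (carrier D hτ ε) := by
  rcases ε with e | ⟨i, j⟩
  · exact (congrArg₂ (segment ℝ) (hp.position_left e) (hp.position_right e)).subset
  · have hsub := Icc_subset_Icc_floor (hτ i) j
    have hlt := ((hτ i).lt_succ j.2).le
    simp only [edgeLeft, edgeRight]
    rw [hp.position_vert hτ i j.pos j.2.le, hp.position_vert hτ i j.pos j.2]
    exact D.segment_curve_subset ⟨_, (hτ i).floor_lt j.2⟩ (hsub (left_mem_Icc.2 hlt))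
      (hsub (right_mem_Icc.2 hlt))

lemma openSegment_edge_subset (hp : T.IsPlacement D F p)
    (hτ : ∀ i, IsBreakpoints (D.len i) t (D.hits i) (τ i)) (ε : S ⊕ (ι × Fin t)) :
    openSegment ℝ (T.position D τ p (T.edgeLeft ε)) (T.position D τ p (T.edgeRight ε)) ⊆
      D.openSeg (carrier D hτ ε) := by
  rcases ε with e | ⟨i, j⟩
  · exact (congrArg₂ (openSegment ℝ) (hp.position_left e) (hp.position_right e)).subset
  · simp only [edgeLeft, edgeRight, hp.openSegment_position hτ]
    rintro _ ⟨c, hc, rfl⟩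
    exact D.curve_mem_openSeg ⟨_, (hτ i).floor_lt j.2⟩
      ⟨((hτ i).floor_le j.2).trans_lt hc.1, hc.2.trans_le ((hτ i).le_floor_add_one j.2)⟩

lemma disjoint_openSegment_edge (hp : T.IsPlacement D F p) (h : D.IsGeneric F)
    (hτ : ∀ i, IsBreakpoints (D.len i) t (D.hits i) (τ i)) {ε ε' : S ⊕ (ι × Fin t)} (hne : ε ≠ ε')
    (hh : carrier D hτ ε = carrier D hτ ε') :
    Disjoint (openSegment ℝ (T.position D τ p (T.edgeLeft ε)) (T.position D τ p (T.edgeRight ε)))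
      (openSegment ℝ (T.position D τ p (T.edgeLeft ε'))
        (T.position D τ p (T.edgeRight ε'))) := by
  rcases ε with e | ⟨i, j⟩ <;> rcases ε' with e' | ⟨i', j'⟩
  · exact absurd (congrArg Sum.inl (Sum.inl.inj hh)) hne
  · cases hh
  · cases hh
  obtain rfl : i = i' := congrArg Sigma.fst (Sum.inr.inj hh)
  have hfloor : ⌊τ i j⌋₊ = ⌊τ i j'⌋₊ := by simpa [carrier] using hh
  have hjj : (j : ℕ) ≠ j' := fun he => hne (by rw [Fin.ext he])
  have hsub := fun j : Fin t => Ioo_subset_Icc_self.trans (Icc_subset_Icc_floor (hτ i) j)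
  simp only [edgeLeft, edgeRight, hp.openSegment_position hτ]
  rw [disjoint_iff_inter_eq_empty, ← (h.curve_injOn_Icc ⟨_, (hτ i).floor_lt j.2⟩).image_inter
    (hsub j) (by simpa only [hfloor] using hsub j'),
    ((hτ i).disjoint_Ioo j.2 j'.2 hjj).inter_eq, image_empty]

lemma position_notMem_openSegment (hp : T.IsPlacement D F p) (h : D.IsGeneric F)
    (hτ : ∀ i, IsBreakpoints (D.len i) t (D.hits i) (τ i)) (w : V) (ε : S ⊕ (ι × Fin t)) :
    T.position D τ p w ∉
      openSegment ℝ (T.position D τ p (T.edgeLeft ε)) (T.position D τ p (T.edgeRight ε)) := by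
  intro hmem
  by_cases hw : ∃ i j, 0 < j ∧ j < t ∧ w = T.vert i j
  · obtain ⟨i, j, h0, hj, rfl⟩ := hw
    rw [T.position_vert D τ p i h0 hj] at hmem
    have hIoo := (hτ i).mem_Ioo h0 hj
    have hhit := (hτ i).notMem j hj.le
    rcases ε with e | ⟨i', j'⟩
    · obtain ⟨r, hr, -⟩ := h.eq_inr_of_curve_mem_openSeg (Ioo_subset_Icc_self hIoo) hhit
        (hp.openSegment_edge_subset hτ _ hmem)
      cases hr
    · simp only [edgeLeft, edgeRight, hp.openSegment_position hτ] at hmem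
      obtain ⟨c, hc, he⟩ := hmem
      obtain ⟨rfl, rfl⟩ := h.curve_inj hIoo hhit ⟨((hτ i').mem_Icc j'.2.le).1.trans hc.1.le,
        hc.2.le.trans ((hτ i').mem_Icc j'.2).2⟩ he.symm
      exact (hτ i).notMem_Ioo j'.2 hj.le hc
  · push Not at hw
    rw [T.position_of_ne D τ p hw] at hmem
    exact hp.notMem_openSeg h w _ (hp.openSegment_edge_subset hτ ε hmem)

lemma isHosted_position (hp : T.IsPlacement D F p) (h : D.IsGeneric F)
    (hτ : ∀ i, IsBreakpoints (D.len i) t (D.hits i) (τ i)) :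
    IsHosted (T.position D τ p) T.edgeLeft T.edgeRight D.src D.tgt (carrier D hτ) where
  subset := hp.segment_edge_subset hτ
  disjoint _ _ := hp.disjoint_openSegment_edge h hτ
  notMem := hp.position_notMem_openSegment h hτ

lemma subsingleton_crossings_piece (hp : T.IsPlacement D F p) (h : D.IsGeneric F)
    (hτ : ∀ i, IsBreakpoints (D.len i) t (D.hits i) (τ i)) (q : ι × Fin t) :
    {σ | σ ≠ carrier D hτ (Sum.inr q) ∧
      (openSegment ℝ (T.position D τ p (T.edgeLeft (Sum.inr q)))
        (T.position D τ p (T.edgeRight (Sum.inr q))) ∩ D.seg σ).Nonempty}.Subsingleton := by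
  obtain ⟨i, j⟩ := q
  have hfloor : ∀ c ∈ Ioo (τ i j) (τ i (j + 1)), c ∈ Ioo (⌊τ i j⌋₊ : ℝ) (⌊τ i j⌋₊ + 1) :=
    fun c hc => ⟨((hτ i).floor_le j.2).trans_lt hc.1,
      hc.2.trans_le ((hτ i).le_floor_add_one j.2)⟩
  rintro σ ⟨hσ, x, hx, hxσ⟩ σ' ⟨hσ', x', hx', hxσ'⟩
  simp only [edgeLeft, edgeRight, hp.openSegment_position hτ] at hx hx'
  obtain ⟨c, hc, rfl⟩ := hx
  obtain ⟨c', hc', rfl⟩ := hx'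
  obtain rfl := (hτ i).separated j j.2
    ⟨⟨⟨_, (hτ i).floor_lt j.2⟩, hfloor c hc, σ, hσ, hxσ⟩, hc⟩
    ⟨⟨⟨_, (hτ i).floor_lt j.2⟩, hfloor c' hc', σ', hσ', hxσ'⟩, hc'⟩
  exact h.eq_of_mem_openSeg hσ hσ' (D.curve_mem_openSeg _ (hfloor c hc)) hxσ hxσ'

lemma isGeomKPlanar_position [Finite S] [Finite ι] (hp : T.IsPlacement D F p)
    (h : D.IsGeneric F) (hτ : ∀ i, IsBreakpoints (D.len i) t (D.hits i) (τ i)) {k : ℕ} (hk : 1 ≤ k)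
    (hstatic : ∀ e, (D.crossings (Sum.inl e)).ncard ≤ k) :
    IsGeomKPlanar k G (T.position D τ p) := by
  refine (hp.isHosted_position h hτ).isGeomKPlanar (hp.injective_position h hτ)
    (fun _ _ => T.exists_edge_of_adj) (fun _ _ => h.seg_inter_subsingleton) ?_
  rintro (e | q)
  · simp only [edgeLeft, edgeRight, hp.position_left, hp.position_right]
    exact hstatic e
  · exact (ncard_le_one_iff_subsingleton.2 (hp.subsingleton_crossings_piece h hτ q)).trans hk

end IsPlacement

/-- The placement `pos` of the terminals and the system `D` have the same segment ends and the same
polyline ends. -/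
structure IsAttached (T : Threading G S ι t) (D : PolySystem S ι) (pos : V → ℝ × ℝ) : Prop where
  injOn : InjOn pos T.terminals
  left : ∀ e, D.left e = pos (T.left e)
  right : ∀ e, D.right e = pos (T.right e)
  zero : ∀ i, D.pt i 0 = pos (T.vert i 0)
  last : ∀ i, D.pt i (D.len i) = pos (T.vert i t)

namespace IsAttached

variable {T : Threading G S ι t} {D : PolySystem S ι} {F : Set (ℝ × ℝ)} {pos : V → ℝ × ℝ}

lemma mem_of_isGeneric (hT : T.IsAttached D pos) (h : D.IsGeneric F) {w : V}
    (hw : w ∈ T.terminals) : pos w ∈ F := by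
  rcases hw with ⟨e, rfl | rfl⟩ | ⟨i, rfl | rfl⟩
  exacts [hT.left e ▸ h.left_mem e, hT.right e ▸ h.right_mem e, hT.zero i ▸ h.zero_mem i,
    hT.last i ▸ h.last_mem i]

lemma exists_isPlacement [Finite V] [Finite S] [Finite ι] (hT : T.IsAttached D pos)
    (h : D.IsGeneric F) : ∃ p, T.IsPlacement D F p := by
  set U := (⋃ σ, D.seg σ) ∪ pos '' T.terminals
  have hU : IsCompact U := (isCompact_iUnion fun _ => isCompact_segment _ _).union
    (toFinite (pos '' T.terminals)).isCompact
  obtain ⟨p, hinj, heq, havoid⟩ := exists_injective_eqOn_notMem hT.injOn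
    ((mapsTo_image pos _).mono_right subset_union_right) (U := U) fun hfin =>
      noncompact_univ (ℝ × ℝ) (union_compl_self U ▸ hU.union hfin.isCompact)
  refine ⟨p, hinj, fun e => ?_, fun e => ?_, fun i => ?_, fun i => ?_, fun w => ?_⟩
  · rw [hT.left, heq (Or.inl ⟨e, Or.inl rfl⟩)]
  · rw [hT.right, heq (Or.inl ⟨e, Or.inr rfl⟩)]
  · rw [hT.zero, heq (Or.inr ⟨i, Or.inl rfl⟩)]
  · rw [hT.last, heq (Or.inr ⟨i, Or.inr rfl⟩)]
  · by_cases hw : w ∈ T.terminals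
    · exact Or.inl (heq hw ▸ hT.mem_of_isGeneric h hw)
    · exact Or.inr fun σ hσ => havoid w hw (Or.inl (mem_iUnion.2 ⟨σ, hσ⟩))

lemma geomKPlanar [Finite V] [Finite S] [Finite ι] (hT : T.IsAttached D pos) (h : D.IsGeneric F)
    {k : ℕ} (hk : 1 ≤ k) (hstatic : ∀ e, (D.crossings (Sum.inl e)).ncard ≤ k)
    (hflex : ∀ i, D.len i + {p : Fin (D.len i) × D.Host |
      p.2 ∈ D.crossings (Sum.inr ⟨i, p.1⟩)}.ncard ≤ t) : GeomKPlanar k G := by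
  obtain ⟨p, hp⟩ := hT.exists_isPlacement h
  choose τ hτ using fun i => h.exists_isBreakpoints (hflex i)
  exact ⟨_, hp.isGeomKPlanar_position h hτ hk hstatic⟩

end IsAttached

end Threading

/-! ### Cells of a line arrangement -/

/-- The sign `1` or `-1` attached to a side of a line. -/
def sgn (b : Bool) : ℝ := if b then 1 else -1

lemma sgn_not (b : Bool) : sgn (!b) = -sgn b := by cases b <;> simp [sgn]

lemma sgn_ne_zero (b : Bool) : sgn b ≠ 0 := by cases b <;> simp [sgn]

lemma eq_of_sgn_mul_pos {b b' : Bool} {x : ℝ} (h : 0 < sgn b * x) (h' : 0 < sgn b' * x) :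
    b = b' := by
  by_contra hne
  rw [Bool.eq_not.2 hne, sgn_not, neg_mul] at h
  exact lt_asymm h' (neg_pos.1 h)

section Cells

variable {S : Type*}

/-- The open cell with sign vector `c` of the arrangement of the lines through `A e` and `B e`. -/
def openCell (A B : S → ℝ × ℝ) (c : S → Bool) : Set (ℝ × ℝ) :=
  {x | ∀ e, 0 < sgn (c e) * orient (A e) (B e) x}

/-- The closed cell with sign vector `c` of the arrangement of the lines through `A e` and `B e`. -/
def closedCell (A B : S → ℝ × ℝ) (c : S → Bool) : Set (ℝ × ℝ) :=
  {x | ∀ e, 0 ≤ sgn (c e) * orient (A e) (B e) x}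

/-- The point `p` lies in the relative interior of a common side of the cells `c` and `c'`. The
lines through `p` all coincide, because several `e` may span the same line. -/
structure CellStep (A B : S → ℝ × ℝ) (c : S → Bool) (p : ℝ × ℝ) (c' : S → Bool) : Prop where
  exists_zero : ∃ e, orient (A e) (B e) p = 0
  pos : ∀ e, orient (A e) (B e) p ≠ 0 → 0 < sgn (c e) * orient (A e) (B e) p ∧ c' e = c e
  flip : ∀ e, orient (A e) (B e) p = 0 → c' e = !c e
  dir : ∃ d, ∀ e, orient (A e) (B e) p = 0 → 0 < sgn (c' e) * cross (B e - A e) d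
  parallel : ∀ e e', orient (A e) (B e) p = 0 → orient (A e') (B e') p = 0 →
    cross (B e - A e) (B e' - A e') = 0

variable {A B : S → ℝ × ℝ} {c c' : S → Bool} {p x : ℝ × ℝ}

lemma isOpen_openCell [Finite S] (A B : S → ℝ × ℝ) (c : S → Bool) : IsOpen (openCell A B c) := by
  have hcell : openCell A B c = ⋂ e, {x | 0 < sgn (c e) * orient (A e) (B e) x} := by
    ext x
    simp [openCell]
  rw [hcell]
  exact isOpen_iInter_of_finite fun e =>
    isOpen_lt continuous_const (continuous_const.mul (continuous_orient _ _))

lemma openCell_subset_closedCell (A B : S → ℝ × ℝ) (c : S → Bool) :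
    openCell A B c ⊆ closedCell A B c := fun _ hx e => (hx e).le

lemma orient_ne_zero_of_mem_openCell (hx : x ∈ openCell A B c) (e : S) :
    orient (A e) (B e) x ≠ 0 :=
  right_ne_zero_of_mul (hx e).ne'

lemma eq_of_mem_openCell (h : x ∈ openCell A B c) (h' : x ∈ openCell A B c') : c = c' :=
  funext fun e => eq_of_sgn_mul_pos (h e) (h' e)

lemma orient_eq_zero_of_parallel {a b c d x p : ℝ × ℝ} (hab : a ≠ b) (hx : orient a b x = 0)
    (hp : orient a b p = 0) (hp' : orient c d p = 0) (hpar : cross (b - a) (d - c) = 0) :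
    orient c d x = 0 := by
  obtain ⟨θ, rfl⟩ := exists_lineMap_of_orient_eq_zero hab hx
  obtain ⟨φ, rfl⟩ := exists_lineMap_of_orient_eq_zero hab hp
  have hdir : cross (d - c) (b - a) = 0 := by rwa [cross_swap, neg_eq_zero] at hpar
  rw [cross_sub_eq_orient_sub] at hdir
  rw [orient_lineMap] at hp' ⊢
  linear_combination hp' + (θ - φ) * hdir

namespace CellStep

lemma orient_eq_zero (hAB : ∀ e, A e ≠ B e) (h : CellStep A B c p c') {e e' : S}
    (he : orient (A e) (B e) p = 0) (he' : orient (A e') (B e') p = 0)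
    (hx : orient (A e) (B e) x = 0) : orient (A e') (B e') x = 0 :=
  orient_eq_zero_of_parallel (hAB e) hx he he' (h.parallel e e' he he')

lemma mem_closedCell_right_of_left (hAB : ∀ e, A e ≠ B e) (h : CellStep A B c p c') {e : S}
    (hp : orient (A e) (B e) p = 0) (hxe : orient (A e) (B e) x = 0) (hx : x ∈ closedCell A B c) :
    x ∈ closedCell A B c' := fun e' => by
  by_cases he' : orient (A e') (B e') p = 0
  · rw [h.orient_eq_zero hAB hp he' hxe, mul_zero]
  · rw [(h.pos e' he').2]
    exact hx e'

lemma mem_closedCell_left_of_right (hAB : ∀ e, A e ≠ B e) (h : CellStep A B c p c') {e : S}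
    (hp : orient (A e) (B e) p = 0) (hxe : orient (A e) (B e) x = 0)
    (hx : x ∈ closedCell A B c') : x ∈ closedCell A B c := fun e' => by
  by_cases he' : orient (A e') (B e') p = 0
  · rw [h.orient_eq_zero hAB hp he' hxe, mul_zero]
  · rw [← (h.pos e' he').2]
    exact hx e'

end CellStep

lemma sum_mul_cross [Fintype S] (l : S → ℝ) (v : S → ℝ × ℝ) (w : ℝ × ℝ) :
    ∑ e, l e * cross (v e) w = cross (∑ e, l e • v e) w := by
  simp only [cross, Prod.fst_sum, Prod.snd_sum, Prod.smul_fst, Prod.smul_snd, smul_eq_mul,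
    Finset.sum_mul, ← Finset.sum_sub_distrib]
  exact Finset.sum_congr rfl fun _ _ => by ring

/-- More than two lines leave some sign vector unrealized: a linear dependence between their
directions makes a combination of the functions `orient (A e) (B e)` constant, and this constant
cannot be both positive and negative. -/
lemma exists_openCell_eq_empty [Fintype S] (A B : S → ℝ × ℝ) (hS : 2 < Fintype.card S) :
    ∃ c, openCell A B c = ∅ := by
  obtain ⟨l, hl, e₀, he₀⟩ : ∃ l : S → ℝ, ∑ e, l e • (B e - A e) = 0 ∧ ∃ e, l e ≠ 0 := by
    refine Fintype.not_linearIndependent_iff.1 fun hli => hS.not_ge ?_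
    simpa using hli.fintype_card_le_finrank
  have hconst : ∀ x y, ∑ e, l e * orient (A e) (B e) x = ∑ e, l e * orient (A e) (B e) y :=
    fun x y => by
      rw [← sub_eq_zero, ← Finset.sum_sub_distrib]
      simp only [← mul_sub, ← cross_sub_eq_orient_sub]
      rw [sum_mul_cross, hl]
      simp [cross]
  have hsum : ∀ ε : ℝ, ∀ v : S → ℝ, (∀ e, 0 < sgn (decide (0 < l e)) * (ε * v e)) →
      0 < ε * ∑ e, l e * v e := fun ε v hv => by
    have hterm : ∀ e, l e * (ε * v e) = |l e| * (sgn (decide (0 < l e)) * (ε * v e)) := fun e => by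
      by_cases he : 0 < l e
      · simp [sgn, he, abs_of_pos he]
      · simp [sgn, he, abs_of_nonpos (not_lt.1 he)]
    rw [Finset.mul_sum]
    simp only [mul_left_comm ε, hterm]
    exact Finset.sum_pos' (fun e _ => mul_nonneg (abs_nonneg _) (hv e).le)
      ⟨e₀, Finset.mem_univ _, mul_pos (abs_pos.2 he₀) (hv e₀)⟩
  by_contra! hne
  obtain ⟨x, hx⟩ := hne fun e => decide (0 < l e)
  obtain ⟨y, hy⟩ := hne fun e => !decide (0 < l e)
  have hpos := hsum 1 (fun e => orient (A e) (B e) x) fun e => by simpa using hx e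
  have hneg := hsum (-1) (fun e => orient (A e) (B e) y) fun e => by
    simpa [sgn_not] using hy e
  rw [hconst x y] at hpos
  linarith

lemma card_le_two_of_shatters [DecidableEq S] {A B : S → ℝ × ℝ} {𝒞 : Finset (Finset S)}
    (h𝒞 : ∀ P ∈ 𝒞, (openCell A B fun e => decide (e ∈ P)).Nonempty) {P : Finset S}
    (hP : 𝒞.Shatters P) : P.card ≤ 2 := by
  by_contra! hcard
  obtain ⟨c, hc⟩ := exists_openCell_eq_empty (fun e : P => A e) (fun e : P => B e)
    (by rwa [Fintype.card_coe])
  have hsub : (Finset.univ.filter fun e : P => c e = true).map (.subtype _) ⊆ P := fun e he => by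
    obtain ⟨e', -, rfl⟩ := Finset.mem_map.1 he
    exact e'.2
  obtain ⟨Q, hQ, hPQ⟩ := hP hsub
  obtain ⟨x, hx⟩ := h𝒞 Q hQ
  refine (hc ▸ notMem_empty x) fun e => ?_
  have hmem : (e : S) ∈ Q ↔ c e = true := by
    simpa using Finset.ext_iff.1 hPQ e
  have hce : decide ((e : S) ∈ Q) = c e := by
    rw [Bool.eq_iff_iff, decide_eq_true_iff, hmem]
  exact hce ▸ hx e

lemma two_mul_sum_choose_le (n : ℕ) : 2 * ∑ k ∈ Finset.Iic 2, n.choose k ≤ n ^ 2 + n + 2 := by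
  have hIic : (Finset.Iic 2 : Finset ℕ) = {0, 1, 2} := by decide
  have hsq : n * (n - 1) + n = n ^ 2 := by
    cases n with
    | zero => rfl
    | succ n => rw [Nat.add_sub_cancel]; ring
  have hdiv := Nat.div_mul_le_self (n * (n - 1)) 2
  simp only [hIic, Finset.sum_insert, Finset.mem_insert, Finset.mem_singleton,
    OfNat.zero_ne_ofNat, zero_ne_one, or_self, not_false_eq_true, Finset.sum_singleton,
    Nat.choose_zero_right, Nat.choose_one_right, OfNat.one_ne_ofNat, Nat.choose_two_right]
  omega

lemma two_mul_card_le_of_openCell_nonempty [Fintype S] {A B : S → ℝ × ℝ} {𝒞 : Finset (S → Bool)}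
    (h𝒞 : ∀ c ∈ 𝒞, (openCell A B c).Nonempty) :
    2 * 𝒞.card ≤ Fintype.card S ^ 2 + Fintype.card S + 2 := by
  classical
  let φ : (S → Bool) → Finset S := fun c => Finset.univ.filter fun e => c e = true
  have hdec : ∀ c, (fun e => decide (e ∈ φ c)) = c := fun c => by simp [φ]
  have hinj : Function.Injective φ := fun c c' he => by rw [← hdec c, he, hdec]
  have hvc : (𝒞.image φ).vcDim ≤ 2 := Finset.sup_le fun P hP => by
    refine card_le_two_of_shatters (A := A) (B := B) ?_ (Finset.mem_shatterer.1 hP)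
    simpa [hdec] using h𝒞
  refine le_trans (Nat.mul_le_mul_left 2 ?_) (two_mul_sum_choose_le _)
  rw [← Finset.card_image_of_injective 𝒞 hinj]
  exact (Finset.card_le_card_shatterer _).trans (Finset.card_shatterer_le_sum_vcDim.trans
    (Finset.sum_le_sum_of_subset (Finset.Iic_subset_Iic.2 hvc)))

end Cells

/-! ### Routes through the cells -/

/-- A route from `x` to `y` through the cells `cell 0, …, cell len` of the arrangement of the lines
through `A e` and `B e`, which passes from `cell r` to `cell (r + 1)` at the point `pt r`. Later
values of `cell` and `pt` are irrelevant. -/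
structure Route {S : Type*} (A B : S → ℝ × ℝ) (x y : ℝ × ℝ) where
  len : ℕ
  cell : ℕ → S → Bool
  pt : ℕ → ℝ × ℝ
  start : x ∈ closedCell A B (cell 0)
  last : y ∈ closedCell A B (cell len)
  step : ∀ r < len, CellStep A B (cell r) (pt r) (cell (r + 1))
  nonempty : ∀ r ≤ len, (openCell A B (cell r)).Nonempty

namespace Route

variable {S : Type*} {A B : S → ℝ × ℝ} {x y : ℝ × ℝ}

/-- The steps of a route which take place on a given segment. -/
def uses (R : Route A B x y) (e : S) : Set ℕ := {r | r < R.len ∧ R.pt r ∈ segment ℝ (A e) (B e)}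

/-- The route visits each cell at most once, and does not leave its first cell, or enter its last
one, on a line through the respective end of the route. -/
structure IsReduced (R : Route A B x y) : Prop where
  injOn : InjOn R.cell (Iic R.len)
  start_ne : 0 < R.len → ∀ e, orient (A e) (B e) x = 0 → orient (A e) (B e) (R.pt 0) ≠ 0
  last_ne : 0 < R.len → ∀ e, orient (A e) (B e) y = 0 →
    orient (A e) (B e) (R.pt (R.len - 1)) ≠ 0

lemma finite_uses (R : Route A B x y) (e : S) : (R.uses e).Finite :=
  (finite_lt_nat R.len).subset fun _ hr => hr.1

lemma ncard_uses_le_of_reindex {R R' : Route A B x y} {φ : ℕ → ℕ} (hφ : Function.Injective φ)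
    (hlt : ∀ r < R'.len, φ r < R.len) (hpt : ∀ r, R'.pt r = R.pt (φ r)) (e : S) :
    (R'.uses e).ncard ≤ (R.uses e).ncard :=
  ncard_le_ncard_of_injOn φ (fun r hr => ⟨hlt r hr.1, hpt r ▸ hr.2⟩) hφ.injOn (R.finite_uses e)

lemma exists_cut (R : Route A B x y) {a b : ℕ} (hab : a < b) (hb : b ≤ R.len)
    (hc : R.cell a = R.cell b) :
    ∃ R' : Route A B x y, R'.len < R.len ∧ ∀ e, (R'.uses e).ncard ≤ (R.uses e).ncard := by
  obtain ⟨d, rfl⟩ := Nat.exists_eq_add_of_lt hab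
  set φ : ℕ → ℕ := fun r => if r < a then r else r + (d + 1) with hφ
  have hcell : ∀ r ≤ a, R.cell (φ r) = R.cell r := fun r hr => by
    rcases hr.lt_or_eq with hlt | rfl
    · simp [hφ, hlt]
    · simp only [hφ, lt_irrefl, if_false, hc, add_assoc]
  have hφ' : ∀ r, a ≤ r → φ r = r + (d + 1) := fun r hr => if_neg hr.not_gt
  have hinj : Function.Injective φ := fun r r' he => by
    simp only [hφ] at he
    split_ifs at he <;> omega
  have hle : ∀ r, φ r ≤ r + (d + 1) := fun r => by
    simp only [hφ]
    split_ifs <;> omega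
  refine ⟨⟨R.len - (d + 1), R.cell ∘ φ, R.pt ∘ φ, ?_, ?_, fun r hr => ?_, fun r hr => ?_⟩,
    Nat.sub_lt (by omega) d.succ_pos, ncard_uses_le_of_reindex hinj
      (fun r hr => (hle r).trans_lt (by change r < R.len - (d + 1) at hr; omega)) fun _ => rfl⟩
  · rw [Function.comp_apply, hcell 0 a.zero_le]
    exact R.start
  · rw [Function.comp_apply, hφ' _ (by omega), Nat.sub_add_cancel (by omega)]
    exact R.last
  · rcases lt_or_ge r a with hra | hra
    · simp only [Function.comp_apply, hcell _ hra.le, hcell _ hra]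
      rw [show φ r = r from if_pos hra]
      exact R.step r (by omega)
    · simp only [Function.comp_apply, hφ' r hra, hφ' (r + 1) (by omega)]
      rw [add_right_comm]
      exact R.step _ (by omega)
  · exact R.nonempty _ ((hle r).trans (by omega))

lemma exists_dropFirst (hAB : ∀ e, A e ≠ B e) (R : Route A B x y) (hR : 0 < R.len) {e : S}
    (hx : orient (A e) (B e) x = 0) (hp : orient (A e) (B e) (R.pt 0) = 0) :
    ∃ R' : Route A B x y, R'.len < R.len ∧ ∀ e, (R'.uses e).ncard ≤ (R.uses e).ncard :=
  ⟨⟨R.len - 1, fun r => R.cell (r + 1), fun r => R.pt (r + 1),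
    (R.step 0 hR).mem_closedCell_right_of_left hAB hp hx R.start,
    (Nat.sub_add_cancel hR).symm ▸ R.last, fun r hr => R.step (r + 1) (by omega),
    fun r hr => R.nonempty _ (by omega)⟩, Nat.sub_lt hR one_pos,
    ncard_uses_le_of_reindex (add_left_injective 1)
      (fun r (hr : r < R.len - 1) => (by omega : r + 1 < R.len)) fun _ => rfl⟩

lemma exists_dropLast (hAB : ∀ e, A e ≠ B e) (R : Route A B x y) (hR : 0 < R.len) {e : S}
    (hy : orient (A e) (B e) y = 0) (hp : orient (A e) (B e) (R.pt (R.len - 1)) = 0) :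
    ∃ R' : Route A B x y, R'.len < R.len ∧ ∀ e, (R'.uses e).ncard ≤ (R.uses e).ncard :=
  have hstep := R.step (R.len - 1) (Nat.sub_lt hR one_pos)
  ⟨⟨R.len - 1, R.cell, R.pt, R.start, hstep.mem_closedCell_left_of_right hAB hp hy
      ((Nat.sub_add_cancel hR).symm ▸ R.last), fun r hr => R.step r (by omega),
    fun r hr => R.nonempty _ (by omega)⟩, Nat.sub_lt hR one_pos,
    ncard_uses_le_of_reindex Function.injective_id
      (fun r (hr : r < R.len - 1) => (by omega : r < R.len)) fun _ => rfl⟩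

lemma exists_isReduced (hAB : ∀ e, A e ≠ B e) (R : Route A B x y) :
    ∃ R' : Route A B x y, R'.IsReduced ∧ ∀ e, (R'.uses e).ncard ≤ (R.uses e).ncard := by
  obtain ⟨R', hR', hmin⟩ := (measure (len : Route A B x y → ℕ)).wf.has_min
    {R' | ∀ e, (R'.uses e).ncard ≤ (R.uses e).ncard} ⟨R, fun _ => le_rfl⟩
  have hirred : ¬ ∃ R'' : Route A B x y, R''.len < R'.len ∧
      ∀ e, (R''.uses e).ncard ≤ (R'.uses e).ncard := fun ⟨R'', hlt, huses⟩ =>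
    hmin R'' (fun e => (huses e).trans (hR' e)) hlt
  refine ⟨R', ⟨fun a ha b hb hc => ?_, fun hm e hx hp => hirred (R'.exists_dropFirst hAB hm hx hp),
    fun hm e hy hp => hirred (R'.exists_dropLast hAB hm hy hp)⟩, hR'⟩
  rcases lt_trichotomy a b with hab | hab | hab
  · exact absurd (R'.exists_cut hab hb hc) hirred
  · exact hab
  · exact absurd (R'.exists_cut hab ha hc.symm) hirred

lemma IsReduced.two_mul_len_le [Fintype S] {R : Route A B x y} (hR : R.IsReduced) :
    2 * (R.len + 1) ≤ Fintype.card S ^ 2 + Fintype.card S + 2 := by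
  classical
  have hcard : ((Finset.Iic R.len).image R.cell).card = R.len + 1 := by
    rw [Finset.card_image_of_injOn (by simpa using hR.injOn), Nat.card_Iic]
  rw [← hcard]
  refine two_mul_card_le_of_openCell_nonempty (A := A) (B := B) fun c hc => ?_
  obtain ⟨r, hr, rfl⟩ := Finset.mem_image.1 hc
  exact R.nonempty r (Finset.mem_Iic.1 hr)

end Route

/-! ### The route of a polyline -/

lemma exists_sorted {T : Set ℝ} (hT : T.Finite) {a b : ℝ} (hab : a < b) (hTab : T ⊆ Ioo a b) :
    ∃ σ : ℕ → ℝ, StrictMonoOn σ (Iic (T.ncard + 1)) ∧ σ 0 = a ∧ σ (T.ncard + 1) = b ∧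
      ∀ x, x ∈ T ↔ ∃ r < T.ncard, σ (r + 1) = x := by
  have hb : b ∉ T := fun h => lt_irrefl b (hTab h).2
  have ha : a ∉ insert b T := fun h => h.elim hab.ne fun h => lt_irrefl a (hTab h).1
  obtain ⟨σ, hσ, himage⟩ := exists_strictMonoOn_image_eq ((hT.insert b).insert a)
    (t := T.ncard + 1)
    (by rw [ncard_insert_of_notMem ha (hT.insert b), ncard_insert_of_notMem hb hT])
  have hmem : ∀ {j}, j ≤ T.ncard + 1 → σ j ∈ insert a (insert b T) := fun {j} hj =>
    himage.subset (mem_image_of_mem σ (mem_Iic.2 hj))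
  have hIcc : ∀ {j}, j ≤ T.ncard + 1 → σ j ∈ Icc a b := fun {j} hj => by
    rcases hmem hj with h | h | h
    exacts [⟨h.ge, h.trans_le hab.le⟩, ⟨hab.le.trans_eq h.symm, h.le⟩, Ioo_subset_Icc_self (hTab h)]
  obtain ⟨k, hk, hka⟩ := himage.superset (Or.inl rfl)
  obtain ⟨l, hl, hlb⟩ := himage.superset (Or.inr (Or.inl rfl))
  have h0 : σ 0 = a := le_antisymm
    ((hσ.monotoneOn (Nat.zero_le _) hk k.zero_le).trans_eq hka) (hIcc (Nat.zero_le _)).1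
  have hlast : σ (T.ncard + 1) = b := le_antisymm (hIcc le_rfl).2
    (hlb.symm.trans_le (hσ.monotoneOn hl self_mem_Iic hl))
  refine ⟨σ, hσ, h0, hlast, fun x => ⟨fun hx => ?_, ?_⟩⟩
  · obtain ⟨j, hj, rfl⟩ := himage.superset (Or.inr (Or.inr hx))
    have hj0 : j ≠ 0 := fun h => (hTab hx).1.ne' (h ▸ h0)
    have hj1 : j ≠ T.ncard + 1 := fun h => (hTab hx).2.ne (h ▸ hlast)
    have hj' : j ≤ T.ncard + 1 := hj
    exact ⟨j - 1, by omega, by rw [Nat.sub_add_cancel (by omega)]⟩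
  · rintro ⟨r, hr, rfl⟩
    have hr' : r + 1 ∈ Iic (T.ncard + 1) := Nat.succ_le_succ hr.le
    refine ((hmem hr').resolve_left fun h => ?_).resolve_left fun h => ?_
    · exact (hσ (Nat.zero_le _) hr' r.succ_pos).ne (h0.trans h.symm)
    · exact (hσ hr' self_mem_Iic (Nat.succ_lt_succ hr)).ne (h.trans hlast.symm)

lemma exists_interlacing {T : Set ℝ} (hT : T.Finite) {a b : ℝ} (hab : a < b)
    (hTab : T ⊆ Ioo a b) : ∃ τ μ : ℕ → ℝ, StrictMonoOn τ (Iio T.ncard) ∧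
      (∀ r < T.ncard, τ r ∈ T) ∧ (∀ r ≤ T.ncard, μ r ∈ Ioo a b) ∧
      (∀ r < T.ncard, τ r ∈ Ioo (μ r) (μ (r + 1)) ∧ T ∩ Icc (μ r) (μ (r + 1)) ⊆ {τ r}) ∧
      T ∩ Icc a (μ 0) = ∅ ∧ T ∩ Icc (μ T.ncard) b = ∅ := by
  obtain ⟨σ, hσ, rfl, rfl, hσT⟩ := exists_sorted hT hab hTab
  have hlt : ∀ {j j'}, j ≤ T.ncard + 1 → j' ≤ T.ncard + 1 → (σ j < σ j' ↔ j < j') :=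
    fun hj hj' => hσ.lt_iff_lt hj hj'
  have hmid : ∀ r ≤ T.ncard, σ r < (σ r + σ (r + 1)) / 2 ∧ (σ r + σ (r + 1)) / 2 < σ (r + 1) :=
    fun r hr => by
      have := (hlt (by omega) (by omega)).2 r.lt_succ_self
      constructor <;> linarith
  refine ⟨fun r => σ (r + 1), fun r => (σ r + σ (r + 1)) / 2,
    fun r hr r' hr' h => (hlt (Nat.succ_le_succ (mem_Iio.1 hr).le)
      (Nat.succ_le_succ (mem_Iio.1 hr').le)).2 (Nat.succ_lt_succ h),
    fun r hr => (hσT _).2 ⟨r, hr, rfl⟩, fun r hr => ⟨?_, ?_⟩,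
    fun r hr => ⟨⟨(hmid r hr.le).2, (hmid (r + 1) hr).1⟩, ?_⟩, ?_, ?_⟩
  · exact (hσ.monotoneOn (Nat.zero_le _) (hr.trans (Nat.le_succ _)) r.zero_le).trans_lt
      (hmid r hr).1
  · exact (hmid r hr).2.trans_le
      (hσ.monotoneOn (Nat.succ_le_succ hr) self_mem_Iic (Nat.succ_le_succ hr))
  · rintro x ⟨hx, hx1, hx2⟩
    obtain ⟨j, hj, rfl⟩ := (hσT x).1 hx
    have h1 := (hlt (by omega) (by omega)).1 ((hmid r hr.le).1.trans_le hx1)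
    have h2 := (hlt (by omega) (by omega)).1 (hx2.trans_lt (hmid (r + 1) hr).2)
    rw [mem_singleton_iff, show j = r by omega]
  · refine eq_empty_of_forall_notMem fun x ⟨hx, _, hx2⟩ => ?_
    obtain ⟨j, hj, rfl⟩ := (hσT x).1 hx
    have h2 := (hlt (by omega) (by omega)).1 (hx2.trans_lt (hmid 0 (Nat.zero_le _)).2)
    omega
  · refine eq_empty_of_forall_notMem fun x ⟨hx, hx1, _⟩ => ?_
    obtain ⟨j, hj, rfl⟩ := (hσT x).1 hx
    have h1 := (hlt (by omega) (by omega)).1 ((hmid _ le_rfl).1.trans_le hx1)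
    omega

namespace PolySystem

variable {S ι : Type*}

lemma continuousOn_curve (D : PolySystem S ι) (i : ι) :
    ∀ n : ℕ, ContinuousOn (D.curve i) (Icc 0 n)
  | 0 => by simp
  | n + 1 => by
    have hlast : ContinuousOn (D.curve i) (Icc (n : ℝ) (n + 1)) := by
      refine ContinuousOn.congr ?_ fun c hc => D.curve_eq i hc
      exact (AffineMap.lineMap_continuous.comp (continuous_id.sub continuous_const)).continuousOn
    rw [Nat.cast_succ, ← Icc_union_Icc_eq_Icc n.cast_nonneg (le_add_of_nonneg_right zero_le_one)]
    exact (D.continuousOn_curve i n).union_of_isClosed hlast isClosed_Icc isClosed_Icc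

/-- The signed area which tells on which side of the line of the static edge `e` the `i`-th
polyline runs at the parameter `c`. -/
abbrev side (D : PolySystem S ι) (i : ι) (e : S) (c : ℝ) : ℝ :=
  orient (D.left e) (D.right e) (D.curve i c)

/-- The inner parameters at which the `i`-th polyline meets the line of a static edge. -/
def events (D : PolySystem S ι) (i : ι) : Set ℝ :=
  {c | c ∈ Ioo 0 (D.len i : ℝ) ∧ ∃ e, D.side i e c = 0}

/-- The sign vector of the cell which contains the `i`-th polyline at a parameter where it is off
all lines of static edges. -/
def cellAt (D : PolySystem S ι) (i : ι) (c : ℝ) (e : S) : Bool := decide (0 < D.side i e c)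

lemma side_eq (D : PolySystem S ι) (i : ι) (e : S) {r : ℕ} {c c₀ : ℝ}
    (hc : c ∈ Icc (r : ℝ) (r + 1)) (hc₀ : c₀ ∈ Icc (r : ℝ) (r + 1)) (hz : D.side i e c₀ = 0) :
    D.side i e c =
      (c - c₀) * cross (D.right e - D.left e) (D.pt i (r + 1) - D.pt i r) := by
  rw [side, D.curve_eq i hc₀, orient_lineMap] at hz
  rw [side, D.curve_eq i hc, orient_lineMap, cross_sub_eq_orient_sub]
  linear_combination hz

lemma sgn_cellAt_mul_side_pos (D : PolySystem S ι) {i : ι} {e : S} {I : Set ℝ}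
    (hI : IsPreconnected I) (hIn : I ⊆ Icc 0 (D.len i : ℝ)) (hz : ∀ c ∈ I, D.side i e c ≠ 0)
    {c d : ℝ} (hc : c ∈ I) (hd : d ∈ I) : 0 < sgn (D.cellAt i c e) * D.side i e d := by
  have hcont : ContinuousOn (D.side i e) I :=
    (continuous_orient _ _).comp_continuousOn ((D.continuousOn_curve i _).mono hIn)
  have hzero : (0 : ℝ) ∉ D.side i e '' I := fun ⟨x, hx, h0⟩ => hz x hx h0
  have hcon := hI.image _ hcont
  rcases (hz c hc).lt_or_gt with hneg | hpos
  · have hd_neg : D.side i e d < 0 := by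
      by_contra! hd0
      exact hzero (hcon.Icc_subset (mem_image_of_mem _ hc) (mem_image_of_mem _ hd) ⟨hneg.le, hd0⟩)
    simpa [sgn, cellAt, hneg.not_gt] using hd_neg
  · have hd_pos : 0 < D.side i e d := by
      by_contra! hd0
      exact hzero (hcon.Icc_subset (mem_image_of_mem _ hd) (mem_image_of_mem _ hc) ⟨hd0, hpos.le⟩)
    simpa [sgn, cellAt, hpos] using hd_pos

lemma side_ne_zero (D : PolySystem S ι) {i : ι} {c : ℝ} (hc : c ∈ Ioo 0 (D.len i : ℝ))
    (hev : c ∉ D.events i) (e : S) : D.side i e c ≠ 0 := fun he => hev ⟨hc, e, he⟩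

lemma curve_mem_openCell_cellAt (D : PolySystem S ι) {i : ι} {c : ℝ}
    (hc : c ∈ Ioo 0 (D.len i : ℝ)) (hev : c ∉ D.events i) :
    D.curve i c ∈ openCell D.left D.right (D.cellAt i c) := fun _ =>
  D.sgn_cellAt_mul_side_pos isPreconnected_singleton
    (singleton_subset_iff.2 (Ioo_subset_Icc_self hc))
    (by rintro _ rfl; exact D.side_ne_zero hc hev _) rfl rfl

lemma curve_mem_closedCell_cellAt (D : PolySystem S ι) {i : ι} {c d : ℝ}
    (hc : c ∈ Ioo 0 (D.len i : ℝ)) (hd : d ∈ Icc 0 (D.len i : ℝ))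
    (hev : D.events i ∩ uIcc c d = ∅) :
    D.curve i d ∈ closedCell D.left D.right (D.cellAt i c) := fun e => by
  by_cases hde : D.side i e d = 0
  · exact (mul_eq_zero_of_right _ hde).ge
  refine (D.sgn_cellAt_mul_side_pos isPreconnected_uIcc
    (uIcc_subset_Icc (Ioo_subset_Icc_self hc) hd) (fun c' hc' he => ?_) left_mem_uIcc
    right_mem_uIcc).le
  have hne : c' ≠ d := fun h => hde (h ▸ he)
  have hmem : c' ∈ Ioo 0 (D.len i : ℝ) := by
    rcases mem_uIcc.1 hc' with h | h
    · exact ⟨hc.1.trans_le h.1, (h.2.lt_of_ne hne).trans_le hd.2⟩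
    · exact ⟨hd.1.trans_lt (h.1.lt_of_ne hne.symm), h.2.trans_lt hc.2⟩
  exact (hev.subset ⟨⟨hmem, e, he⟩, hc'⟩).elim

namespace IsGeneric

variable {D : PolySystem S ι} {F : Set (ℝ × ℝ)}

lemma bend_orient_ne_zero (h : D.IsGeneric F) {i : ι} {r : ℕ} (h0 : 0 < r) (h1 : r < D.len i)
    (e : S) : orient (D.left e) (D.right e) (D.pt i r) ≠ 0 := by
  have hF := h.bend_notMem i r h0 h1
  exact h.inGeneralPosition.noncollinear _ (Or.inl (h.left_mem e)) _ (Or.inl (h.right_mem e)) _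
    (h.pt_mem h1.le) (fun hh => hF hh.2.2) (h.left_ne_right e)
    (fun he => hF (he ▸ h.right_mem e)) fun he => hF (he ▸ h.left_mem e)

lemma parallel_of_mem_openSeg (h : D.IsGeneric F) {p : Σ i, Fin (D.len i)} {x : ℝ × ℝ}
    (hx : x ∈ D.openSeg (Sum.inr p)) {e e' : S} (he : orient (D.left e) (D.right e) x = 0)
    (he' : orient (D.left e') (D.right e') x = 0) :
    cross (D.right e - D.left e) (D.right e' - D.left e') = 0 := by
  by_contra hcross
  have hxp := orient_eq_zero_of_mem_openSegment hx
  have hne : ∀ e, orient (D.left e) (D.right e) x = 0 →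
      cross (D.right e - D.left e) (D.tgt (Sum.inr p) - D.src (Sum.inr p)) ≠ 0 := fun e he =>
    cross_swap_ne_zero (h.cross_ne_zero (σ := Sum.inl e) (by simp) hxp he)
  have hnotF := h.src_notMem_or_tgt_notMem p
  have hends := h.inGeneralPosition.nonconcurrent _ (h.src_mem (Sum.inl e)) _
    (h.tgt_mem (Sum.inl e)) _ (h.src_mem (Sum.inl e')) _ (h.tgt_mem (Sum.inl e')) _
    (h.src_mem (Sum.inr p)) _ (h.tgt_mem (Sum.inr p))
    (fun hF => hnotF.elim (fun hn => hn hF.2.2.2.2.1) fun hn => hn hF.2.2.2.2.2)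
    hcross (hne e' he') (hne e he) x he he' hxp
  refine h.notMem_openSeg (Sum.inr p) ?_ hx
  rcases hends with hx | hx | hx | hx | hx | hx <;> rw [hx]
  exacts [h.src_mem _, h.tgt_mem _, h.src_mem _, h.tgt_mem _, h.src_mem _, h.tgt_mem _]

lemma exists_mem_Ioo_of_mem_events (h : D.IsGeneric F) {i : ι} {c : ℝ} (hc : c ∈ D.events i) :
    ∃ r : Fin (D.len i), c ∈ Ioo (r : ℝ) (r + 1) := by
  obtain ⟨hcn, e, he⟩ := hc
  refine (exists_natCast_or_mem_Ioo (Ioo_subset_Icc_self hcn)).resolve_left ?_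
  rintro ⟨r, -, rfl⟩
  rw [side, curve_natCast] at he
  exact h.bend_orient_ne_zero (Nat.cast_pos.1 hcn.1) (Nat.cast_lt.1 hcn.2) e he

lemma slope_ne_zero (h : D.IsGeneric F) {i : ι} (r : Fin (D.len i)) {c : ℝ}
    (hc : c ∈ Icc (r : ℝ) (r + 1)) {e : S} (he : D.side i e c = 0) :
    cross (D.right e - D.left e) (D.pt i (r + 1) - D.pt i r) ≠ 0 := by
  refine cross_swap_ne_zero (h.cross_ne_zero (p := ⟨i, r⟩) (σ := Sum.inl e) (by simp) ?_ he)
  refine orient_eq_zero_of_mem_segment ?_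
  rw [D.curve_eq i hc]
  exact mem_segment_iff_lineMap.2 ⟨_, sub_nonneg.2 hc.1, by linarith [hc.2], rfl⟩

lemma eq_of_side_eq_zero (h : D.IsGeneric F) {i : ι} (r : Fin (D.len i)) {c d : ℝ}
    (hc : c ∈ Icc (r : ℝ) (r + 1)) (hd : d ∈ Icc (r : ℝ) (r + 1)) {e : S}
    (hce : D.side i e c = 0) (hde : D.side i e d = 0) : c = d := by
  rw [D.side_eq i e hc hd hde] at hce
  exact sub_eq_zero.1 ((mul_eq_zero.1 hce).resolve_right (h.slope_ne_zero r hd hde))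

lemma finite_events [Finite S] (h : D.IsGeneric F) (i : ι) : (D.events i).Finite := by
  have hsub : D.events i ⊆ ⋃ p : Fin (D.len i) × S,
      {c | c ∈ Icc (p.1 : ℝ) (p.1 + 1) ∧ D.side i p.2 c = 0} := fun c hc => by
    obtain ⟨r, hr⟩ := h.exists_mem_Ioo_of_mem_events hc
    obtain ⟨-, e, he⟩ := hc
    exact mem_iUnion.2 ⟨(r, e), Ioo_subset_Icc_self hr, he⟩
  exact (finite_iUnion fun p => Set.Subsingleton.finite fun c hc d hd =>
    h.eq_of_side_eq_zero p.1 hc.1 hd.1 hc.2 hd.2).subset hsub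

lemma sgn_cellAt_mul_slope_pos {i : ι} {r : ℕ} {c c₀ : ℝ} (hc₀ : c₀ ∈ Ioo (r : ℝ) (r + 1))
    (hn : uIcc c₀ c ⊆ Icc 0 (D.len i : ℝ)) (hne : c ≠ c₀) {e : S} (he : D.side i e c₀ = 0)
    (hz : ∀ d ∈ uIcc c₀ c, d ≠ c₀ → D.side i e d ≠ 0) :
    0 < sgn (D.cellAt i c e) *
      ((c - c₀) * cross (D.right e - D.left e) (D.pt i (r + 1) - D.pt i r)) := by
  have hcont : Continuous (AffineMap.lineMap c₀ c : ℝ → ℝ) := AffineMap.lineMap_continuous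
  have hsub : AffineMap.lineMap c₀ c '' Ioc (0 : ℝ) 1 ⊆ uIcc c₀ c := by
    rw [← segment_eq_uIcc, segment_eq_image_lineMap]
    exact image_mono Ioc_subset_Icc_self
  have hev : ∀ᶠ η in nhdsWithin (0 : ℝ) (Ioi 0),
      AffineMap.lineMap c₀ c η ∈ Ioo (r : ℝ) (r + 1) :=
    nhdsWithin_le_nhds ((hcont.tendsto' 0 c₀ (by simp)).eventually (Ioo_mem_nhds hc₀.1 hc₀.2))
  obtain ⟨η, hη, hηr⟩ := (Filter.Eventually.and (Ioc_mem_nhdsGT one_pos) hev).exists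
  have hpos := D.sgn_cellAt_mul_side_pos (isPreconnected_Ioc.image _ hcont.continuousOn)
    (hsub.trans hn) (e := e) (fun d hd => hz d (hsub hd) ?_) (c := c)
    ⟨1, right_mem_Ioc.2 one_pos, AffineMap.lineMap_apply_one _ _⟩ ⟨η, hη, rfl⟩
  · rw [D.side_eq i e (Ioo_subset_Icc_self hηr) (Ioo_subset_Icc_self hc₀) he,
      AffineMap.lineMap_apply_ring', add_sub_cancel_right, mul_assoc, mul_left_comm] at hpos
    exact (mul_pos_iff_of_pos_left hη.1).1 hpos
  · obtain ⟨θ, hθ, rfl⟩ := hd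
    simp [hθ.1.ne', hne.symm]

lemma cellStep_cellAt (h : D.IsGeneric F) {i : ι} {c₁ c₀ c₂ : ℝ}
    (hc₁ : c₁ ∈ Ioo 0 (D.len i : ℝ)) (hc₂ : c₂ ∈ Ioo 0 (D.len i : ℝ)) (hc₀ : c₀ ∈ Ioo c₁ c₂)
    (hev : c₀ ∈ D.events i) (honly : D.events i ∩ Icc c₁ c₂ ⊆ {c₀}) :
    CellStep D.left D.right (D.cellAt i c₁) (D.curve i c₀) (D.cellAt i c₂) := by
  have hsub : Icc c₁ c₂ ⊆ Ioo 0 (D.len i : ℝ) := Icc_subset_Ioo hc₁.1 hc₂.2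
  have hsub' : Icc c₁ c₂ ⊆ Icc 0 (D.len i : ℝ) := hsub.trans Ioo_subset_Icc_self
  have hne : ∀ e, ∀ d ∈ Icc c₁ c₂, d ≠ c₀ → D.side i e d ≠ 0 := fun e d hd hd0 he =>
    hd0 (honly ⟨⟨hsub hd, e, he⟩, hd⟩)
  have h₀ : c₀ ∈ Icc c₁ c₂ := Ioo_subset_Icc_self hc₀
  have hle : c₁ ≤ c₂ := (hc₀.1.trans hc₀.2).le
  obtain ⟨r, hr⟩ := h.exists_mem_Ioo_of_mem_events hev
  have hslope : ∀ e, D.side i e c₀ = 0 → ∀ c ∈ Icc c₁ c₂, c ≠ c₀ → 0 < sgn (D.cellAt i c e) *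
      ((c - c₀) * cross (D.right e - D.left e) (D.pt i (r + 1) - D.pt i r)) :=
    fun e he c hc hcne => sgn_cellAt_mul_slope_pos hr ((uIcc_subset_Icc h₀ hc).trans hsub') hcne he
      fun d hd => hne e d (uIcc_subset_Icc h₀ hc hd)
  have hleft : ∀ e, D.side i e c₀ = 0 →
      0 < -sgn (D.cellAt i c₁ e) * cross (D.right e - D.left e) (D.pt i (r + 1) - D.pt i r) :=
    fun e he => (mul_pos_iff_of_pos_left (sub_pos.2 hc₀.1)).1
      (by linarith [hslope e he c₁ (left_mem_Icc.2 hle) hc₀.1.ne])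
  have hright : ∀ e, D.side i e c₀ = 0 →
      0 < sgn (D.cellAt i c₂ e) * cross (D.right e - D.left e) (D.pt i (r + 1) - D.pt i r) :=
    fun e he => (mul_pos_iff_of_pos_left (sub_pos.2 hc₀.2)).1
      (by linarith [hslope e he c₂ (right_mem_Icc.2 hle) hc₀.2.ne'])
  refine ⟨hev.2, fun e he => ?_, fun e he => ?_, ⟨_, hright⟩, fun e e' he he' => ?_⟩
  · have hpos : ∀ c ∈ Icc c₁ c₂, 0 < sgn (D.cellAt i c e) * D.side i e c₀ := fun c hc =>
      D.sgn_cellAt_mul_side_pos isPreconnected_Icc hsub'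
        (fun d hd hd0 => (eq_or_ne d c₀).elim (fun hdc => he (hdc ▸ hd0))
          fun hdc => hne e d hd hdc hd0) hc h₀
    exact ⟨hpos c₁ (left_mem_Icc.2 hle), eq_of_sgn_mul_pos (hpos c₂ (right_mem_Icc.2 hle))
      (hpos c₁ (left_mem_Icc.2 hle))⟩
  · exact eq_of_sgn_mul_pos (hright e he) (by rw [sgn_not]; exact hleft e he)
  · exact h.parallel_of_mem_openSeg (D.curve_mem_openSeg r hr) he he'

lemma exists_route_events [Finite S] (h : D.IsGeneric F) (i : ι) :
    ∃ R : Route D.left D.right (D.pt i 0) (D.pt i (D.len i)), ∃ τ : ℕ → ℝ,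
      InjOn τ (Iio R.len) ∧ ∀ r < R.len, τ r ∈ D.events i ∧ R.pt r = D.curve i (τ r) := by
  have hlen : (0 : ℝ) < D.len i := Nat.cast_pos.2 (two_pos.trans_le (h.two_le_len i))
  obtain ⟨τ, μ, hτ, hτT, hμ, hstep, hstart, hlast⟩ :=
    exists_interlacing (h.finite_events i) hlen fun c hc => hc.1
  have hμT : ∀ r ≤ (D.events i).ncard, μ r ∉ D.events i := fun r hr hev => by
    rcases hr.lt_or_eq with hr | rfl
    · have hτr := (hstep r hr).1
      exact hτr.1.ne ((hstep r hr).2 ⟨hev, left_mem_Icc.2 (hτr.1.trans hτr.2).le⟩)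
    · exact hlast.subset ⟨hev, left_mem_Icc.2 (hμ _ le_rfl).2.le⟩
  refine ⟨⟨(D.events i).ncard, fun r => D.cellAt i (μ r), fun r => D.curve i (τ r), ?_, ?_,
    fun r hr => h.cellStep_cellAt (hμ r hr.le) (hμ (r + 1) hr) (hstep r hr).1 (hτT r hr)
      (hstep r hr).2,
    fun r hr => ⟨_, D.curve_mem_openCell_cellAt (hμ r hr) (hμT r hr)⟩⟩, τ, hτ.injOn,
    fun r hr => ⟨hτT r hr, rfl⟩⟩
  · have h0 := hμ 0 (Nat.zero_le _)
    rw [← D.curve_natCast, Nat.cast_zero]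
    exact D.curve_mem_closedCell_cellAt h0 ⟨le_rfl, hlen.le⟩ (by rwa [uIcc_of_ge h0.1.le])
  · have h1 := hμ _ le_rfl
    rw [← D.curve_natCast]
    exact D.curve_mem_closedCell_cellAt h1 ⟨hlen.le, le_rfl⟩ (by rwa [uIcc_of_le h1.2.le])

lemma exists_route [Finite S] (h : D.IsGeneric F) (i : ι) :
    ∃ R : Route D.left D.right (D.pt i 0) (D.pt i (D.len i)), ∀ e, (R.uses e).ncard ≤
      {r : Fin (D.len i) | Sum.inl e ∈ D.crossings (Sum.inr ⟨i, r⟩)}.ncard := by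
  obtain ⟨R, τ, hinj, hτ⟩ := h.exists_route_events i
  refine ⟨R, fun e => ?_⟩
  have : Nonempty (Fin (D.len i)) := ⟨⟨0, two_pos.trans_le (h.two_le_len i)⟩⟩
  choose! ρ hρ using fun r (hr : r < R.len) => h.exists_mem_Ioo_of_mem_events (hτ r hr).1
  refine ncard_le_ncard_of_injOn ρ (fun r hr => ?_) (fun r hr r' hr' he => ?_) (toFinite _)
  · refine ⟨by simp, R.pt r, ?_, hr.2⟩
    rw [(hτ r hr.1).2]
    exact D.curve_mem_openSeg _ (hρ r hr.1)
  · have hzero : ∀ r ∈ R.uses e, D.side i e (τ r) = 0 := fun r hr => by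
      rw [side, ← (hτ r hr.1).2]
      exact orient_eq_zero_of_mem_segment hr.2
    exact hinj hr.1 hr'.1 (h.eq_of_side_eq_zero (ρ r) (Ioo_subset_Icc_self (hρ r hr.1))
      (Ioo_subset_Icc_self (he ▸ hρ r' hr'.1)) (hzero r hr) (hzero r' hr'))

lemma notMem_seg_of_mem_crossings (h : D.IsGeneric F) {σ σ' : D.Host} (hσ' : σ' ∈ D.crossings σ)
    {x : ℝ × ℝ} (hx : x ∈ F ∪ D.bends) (hxσ : x ∈ D.seg σ) : x ∉ D.seg σ' := fun hxσ' => by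
  obtain ⟨hne, y, hy, hyσ'⟩ := hσ'
  rw [h.seg_inter_subsingleton hne ⟨hyσ', openSegment_subset_segment _ _ _ hy⟩ ⟨hxσ', hxσ⟩] at hy
  exact h.notMem_openSeg σ hx hy

end IsGeneric

/-- The segments of the `i`-th polyline which meet the static segment `e`, except for an end
segment if that end of the polyline lies on `e`. -/
def contacts (D : PolySystem S ι) (i : ι) (e : S) : Set (Fin (D.len i)) :=
  {r | (D.seg (Sum.inr ⟨i, r⟩) ∩ D.seg (Sum.inl e)).Nonempty ∧
    ((r : ℕ) = 0 → D.pt i 0 ∉ D.seg (Sum.inl e)) ∧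
    ((r : ℕ) + 1 = D.len i → D.pt i (D.len i) ∉ D.seg (Sum.inl e))}

lemma IsPerturbation.mem_contacts {D : PolySystem S ι} {F : Set (ℝ × ℝ)}
    {U : ι → ℕ → Set (ℝ × ℝ)} {b : ι → ℕ → ℝ × ℝ} (hb : D.IsPerturbation U b)
    (h : (D.redraw b).IsGeneric F) {i : ι} {e : S} {r : Fin (D.len i)}
    (hr : Sum.inl e ∈ (D.redraw b).crossings (Sum.inr ⟨i, r⟩)) : r ∈ D.contacts i e := by
  have hend : ∀ {x}, x ∈ F → x ∈ (D.redraw b).seg (Sum.inr ⟨i, r⟩) → x ∉ D.seg (Sum.inl e) :=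
    fun hxF => h.notMem_seg_of_mem_crossings hr (Or.inl hxF)
  refine ⟨?_, fun hr0 => hend (hb.zero i ▸ h.zero_mem i) ?_,
    fun hrn => hend (hb.last i ▸ h.last_mem i) ?_⟩
  · obtain ⟨-, x, hx, hxe⟩ := hr
    by_contra hdis
    rw [← not_disjoint_iff_nonempty_inter, not_not] at hdis
    exact disjoint_left.1 (hb.disjoint _ _ hdis) (openSegment_subset_segment _ _ _ hx) hxe
  · rw [← hb.zero i, ← hr0]
    exact left_mem_segment ℝ _ _
  · rw [← hb.last i, ← hrn]
    exact right_mem_segment ℝ _ _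

lemma exists_route [Finite S] [Finite ι] {F : Set (ℝ × ℝ)} (hF : F.Finite) (D : PolySystem S ι)
    (hst : IsSegmentDrawing F D.left D.right) (hlen : ∀ i, 2 ≤ D.len i)
    (hzero : ∀ i, D.pt i 0 ∈ F) (hlast : ∀ i, D.pt i (D.len i) ∈ F)
    (hne : ∀ i, D.pt i 0 ≠ D.pt i (D.len i)) (i : ι) :
    ∃ R : Route D.left D.right (D.pt i 0) (D.pt i (D.len i)),
      ∀ e, (R.uses e).ncard ≤ (D.contacts i e).ncard := by
  obtain ⟨b, hb, h⟩ := D.exists_isPerturbation_isGeneric hF hst hlen hzero hlast hne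
    (U := fun _ _ => univ) (fun _ _ _ _ => isOpen_univ) fun _ _ _ _ => by simp
  have hroute := h.exists_route i
  rw [show (D.redraw b).pt i 0 = D.pt i 0 from hb.zero i,
    show (D.redraw b).pt i (D.len i) = D.pt i (D.len i) from hb.last i] at hroute
  obtain ⟨R, hR⟩ := hroute
  exact ⟨R, fun e => (hR e).trans (ncard_le_ncard (fun r hr => hb.mem_contacts h hr) (toFinite _))⟩

end PolySystem

/-! ### Moving the points of passage -/

namespace CellStep

variable {S : Type*} {A B : S → ℝ × ℝ} {c c' : S → Bool} {p p' : ℝ × ℝ}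

lemma slide (h : CellStep A B c p c')
    (hiff : ∀ e, orient (A e) (B e) p' = 0 ↔ orient (A e) (B e) p = 0)
    (hpos : ∀ e, orient (A e) (B e) p ≠ 0 → 0 < sgn (c e) * orient (A e) (B e) p') :
    CellStep A B c p' c' where
  exists_zero := h.exists_zero.imp fun e => (hiff e).2
  pos e he := ⟨hpos e (he ∘ (hiff e).2), (h.pos e (he ∘ (hiff e).2)).2⟩
  flip e he := h.flip e ((hiff e).1 he)
  dir := h.dir.imp fun _ hd e he => hd e ((hiff e).1 he)
  parallel e e' he he' := h.parallel e e' ((hiff e).1 he) ((hiff e').1 he')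

lemma infinite_setOf_slide [Finite S] (hAB : ∀ e, A e ≠ B e) (h : CellStep A B c p c') :
    {p' | CellStep A B c p' c' ∧ (∀ e, orient (A e) (B e) p' = 0 → orient (A e) (B e) p = 0) ∧
      ∀ e, p' ∈ segment ℝ (A e) (B e) → p ∈ segment ℝ (A e) (B e)}.Infinite := by
  obtain ⟨e₀, he₀⟩ := h.exists_zero
  let φ : ℝ → ℝ × ℝ := fun α => p + α • (B e₀ - A e₀)
  have hφ : Filter.Tendsto φ (nhds 0) (nhds p) :=
    Continuous.tendsto' (by fun_prop) 0 p (by simp [φ])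
  have hinj : Function.Injective φ :=
    (add_right_injective p).comp (smul_left_injective ℝ (sub_ne_zero.2 (hAB e₀).symm))
  have hzero : ∀ e, orient (A e) (B e) p = 0 → ∀ α, orient (A e) (B e) (φ α) = 0 := fun e he α => by
    rw [orient_add, cross_smul_right, h.parallel e e₀ he he₀, he, mul_zero, add_zero]
  have hpos : ∀ᶠ α in nhds (0 : ℝ), ∀ e, orient (A e) (B e) p ≠ 0 →
      0 < sgn (c e) * orient (A e) (B e) (φ α) := by
    refine Filter.eventually_all.2 fun e => Filter.eventually_imp_distrib_left.2 fun he => ?_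
    exact (((continuous_orient _ _).tendsto p).comp hφ |>.const_mul (sgn (c e))).eventually
      (lt_mem_nhds (h.pos e he).1)
  have hseg : ∀ᶠ α in nhds (0 : ℝ), ∀ e,
      φ α ∈ segment ℝ (A e) (B e) → p ∈ segment ℝ (A e) (B e) := by
    refine Filter.eventually_all.2 fun e => ?_
    by_cases he : p ∈ segment ℝ (A e) (B e)
    · exact Filter.Eventually.of_forall fun _ _ => he
    · exact (hφ.eventually ((isCompact_segment _ _).isClosed.isOpen_compl.mem_nhds he)).mono
        fun _ hα hα' => absurd hα' hα
  refine ((infinite_of_mem_nhds (0 : ℝ) (hpos.and hseg)).image hinj.injOn).mono ?_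
  rintro _ ⟨α, ⟨hα, hαseg⟩, rfl⟩
  have hiff : ∀ e, orient (A e) (B e) (φ α) = 0 ↔ orient (A e) (B e) p = 0 := fun e =>
    ⟨fun he => by_contra fun hne => right_ne_zero_of_mul (hα e hne).ne' he, fun he => hzero e he α⟩
  exact ⟨h.slide hiff hα, fun e => (hiff e).1, hαseg⟩

end CellStep

section Closure

variable {S : Type*} {A B : S → ℝ × ℝ} {c c' : S → Bool} {p : ℝ × ℝ}

lemma mem_closure_openCell [Finite S] {d : ℝ × ℝ}
    (hpos : ∀ e, orient (A e) (B e) p ≠ 0 → 0 < sgn (c e) * orient (A e) (B e) p)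
    (hdir : ∀ e, orient (A e) (B e) p = 0 → 0 < sgn (c e) * cross (B e - A e) d) :
    p ∈ closure (openCell A B c) := by
  have hlim : Filter.Tendsto (fun α : ℝ => p + α • d) (nhds 0) (nhds p) :=
    Continuous.tendsto' (by fun_prop) 0 p (by simp)
  refine mem_closure_of_tendsto (hlim.mono_left (nhdsWithin_le_nhds (s := Ioi 0)))
    (Filter.eventually_all.2 fun e => ?_)
  by_cases he : orient (A e) (B e) p = 0
  · filter_upwards [self_mem_nhdsWithin] with α hα
    rw [orient_add, cross_smul_right, he, zero_add, mul_left_comm]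
    exact mul_pos hα (hdir e he)
  · exact nhdsWithin_le_nhds ((((continuous_orient _ _).tendsto p).comp hlim
      |>.const_mul (sgn (c e))).eventually (lt_mem_nhds (hpos e he)))

lemma CellStep.mem_closure_right [Finite S] (h : CellStep A B c p c') :
    p ∈ closure (openCell A B c') := by
  obtain ⟨d, hd⟩ := h.dir
  exact mem_closure_openCell (fun e he => by rw [(h.pos e he).2]; exact (h.pos e he).1) hd

lemma CellStep.mem_closure_left [Finite S] (h : CellStep A B c p c') :
    p ∈ closure (openCell A B c) := by
  obtain ⟨d, hd⟩ := h.dir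
  refine mem_closure_openCell (d := (-1 : ℝ) • d) (fun e he => (h.pos e he).1) fun e he => ?_
  have hflip := hd e he
  rw [h.flip e he, sgn_not] at hflip
  rw [cross_smul_right]
  linarith

end Closure

lemma exists_injective_forall_mem {ι α : Type*} [Finite ι] {T : ι → Set α}
    (hT : ∀ a, (T a).Infinite) : ∃ φ : ι → α, Function.Injective φ ∧ ∀ a, φ a ∈ T a := by
  classical
  have := Fintype.ofFinite ι
  choose s hs hcard using fun a => (hT a).exists_subset_card_eq (Fintype.card ι)
  obtain ⟨φ, hφ, hφs⟩ := (Finset.all_card_le_biUnion_card_iff_exists_injective s).1 fun t => by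
    rcases t.eq_empty_or_nonempty with rfl | ⟨a, ha⟩
    · simp
    · exact (Finset.card_le_univ t).trans ((hcard a).ge.trans
        (Finset.card_le_card (Finset.subset_biUnion_of_mem s ha)))
  exact ⟨φ, hφ, fun a => hs a (hφs a)⟩

/-- A family of reduced routes which pass from cell to cell at distinct points outside `Z`. -/
structure Route.IsSeparated {S ι : Type*} {A B : S → ℝ × ℝ} {x y : ι → ℝ × ℝ}
    (R : ∀ i, Route A B (x i) (y i)) (Z : Set (ℝ × ℝ)) : Prop where
  reduced : ∀ i, (R i).IsReduced
  pt_inj : ∀ i r i' r', r < (R i).len → r' < (R i').len → (R i).pt r = (R i').pt r' →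
    i = i' ∧ r = r'
  pt_notMem : ∀ i, ∀ r < (R i).len, (R i).pt r ∉ Z

lemma Route.exists_isSeparated {S ι : Type*} [Finite S] [Finite ι] {A B : S → ℝ × ℝ}
    (hAB : ∀ e, A e ≠ B e) {x y : ι → ℝ × ℝ} {Z : Set (ℝ × ℝ)} (hZ : Z.Finite)
    (R : ∀ i, Route A B (x i) (y i)) : ∃ R' : ∀ i, Route A B (x i) (y i),
      Route.IsSeparated R' Z ∧ ∀ i e, ((R' i).uses e).ncard ≤ ((R i).uses e).ncard := by
  choose R₁ hred huses using fun i => (R i).exists_isReduced hAB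
  obtain ⟨φ, hφ, hφT⟩ := exists_injective_forall_mem (ι := Σ i, Fin (R₁ i).len)
    fun a => (((R₁ a.1).step a.2 a.2.2).infinite_setOf_slide hAB).sdiff hZ
  let pt : ι → ℕ → ℝ × ℝ := fun i r => if hr : r < (R₁ i).len then φ ⟨i, ⟨r, hr⟩⟩ else 0
  have hpt : ∀ {i r} (hr : r < (R₁ i).len), pt i r = φ ⟨i, ⟨r, hr⟩⟩ := fun hr => dif_pos hr
  have hptZ : ∀ {i r}, r < (R₁ i).len → pt i r ∉ Z := fun hr => hpt hr ▸ (hφT ⟨_, _, hr⟩).2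
  have hz : ∀ {i r}, r < (R₁ i).len → ∀ e, orient (A e) (B e) ((R₁ i).pt r) ≠ 0 →
      orient (A e) (B e) (pt i r) ≠ 0 := fun hr e he => by
    rw [hpt hr]
    exact he ∘ (hφT ⟨_, _, hr⟩).1.2.1 e
  refine ⟨fun i => ⟨(R₁ i).len, (R₁ i).cell, pt i, (R₁ i).start, (R₁ i).last,
    fun r hr => hpt hr ▸ (hφT ⟨i, ⟨r, hr⟩⟩).1.1, (R₁ i).nonempty⟩, ⟨fun i => ⟨(hred i).injOn,
    fun h0 e he => hz h0 e ((hred i).start_ne h0 e he),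
    fun h0 e he => hz (Nat.sub_lt h0 one_pos) e ((hred i).last_ne h0 e he)⟩,
    fun i r i' r' hr hr' he => ?_, fun i r hr => hptZ hr⟩,
    fun i e => (ncard_le_ncard ?_ ((R₁ i).finite_uses e)).trans (huses i e)⟩
  · obtain ⟨rfl, h⟩ := Sigma.mk.inj_iff.1 (hφ ((hpt hr).symm.trans (he.trans (hpt hr'))))
    exact ⟨rfl, Fin.mk.inj_iff.1 (eq_of_heq h)⟩
  · rintro r ⟨hr, hmem⟩
    exact ⟨hr, (hφT ⟨i, ⟨r, hr⟩⟩).1.2.2 e (hpt hr ▸ hmem)⟩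

/-! ### Redrawing along routes -/

lemma openSegment_subset_openCell {S : Type*} {A B : S → ℝ × ℝ} {c : S → Bool} {a b : ℝ × ℝ}
    (ha : a ∈ closedCell A B c) (hb : b ∈ closedCell A B c)
    (hne : ∀ e, orient (A e) (B e) a = 0 → orient (A e) (B e) b ≠ 0) :
    openSegment ℝ a b ⊆ openCell A B c := by
  intro x hx e
  obtain ⟨θ, h0, h1, rfl⟩ := mem_openSegment_iff_lineMap.1 hx
  have h1' := sub_pos.2 h1
  rw [orient_lineMap, mul_add, mul_left_comm, mul_left_comm (sgn (c e)) θ]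
  by_cases he : orient (A e) (B e) a = 0
  · exact add_pos_of_nonneg_of_pos (mul_nonneg h1'.le (ha e))
      (mul_pos h0 ((hb e).lt_of_ne (mul_ne_zero (sgn_ne_zero _) (hne e he)).symm))
  · exact add_pos_of_pos_of_nonneg
      (mul_pos h1' ((ha e).lt_of_ne (mul_ne_zero (sgn_ne_zero _) he).symm))
      (mul_nonneg h0.le (hb e))

lemma closure_openCell_subset {S : Type*} (A B : S → ℝ × ℝ) (c : S → Bool) :
    closure (openCell A B c) ⊆ closedCell A B c := by
  refine closure_minimal (openCell_subset_closedCell A B c) ?_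
  have hcell : closedCell A B c = ⋂ e, {x | 0 ≤ sgn (c e) * orient (A e) (B e) x} := by
    ext x
    simp [closedCell]
  rw [hcell]
  exact isClosed_iInter fun e =>
    isClosed_le continuous_const (continuous_const.mul (continuous_orient _ _))

namespace Route

variable {S : Type*} {A B : S → ℝ × ℝ} {x y : ℝ × ℝ}

/-- The number of segments of a polyline drawn along a route: one inside each cell and one for each
change of cells. At least two are needed in order to have a freely movable vertex. -/
def steps (R : Route A B x y) : ℕ := max 2 (2 * R.len + 1)

/-- The segments of this polyline which pass from one cell to the next one. -/
def IsHop (R : Route A B x y) (r : ℕ) : Prop := r % 2 = 1 ∧ r / 2 < R.len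

/-- The limit positions of the vertices of this polyline: both ends of a hop are at the point at
which the route passes from cell to cell. -/
def layout (R : Route A B x y) (r : ℕ) : ℝ × ℝ :=
  if r = 0 then x else if R.steps ≤ r then y else
    if (r - 1) / 2 < R.len then R.pt ((r - 1) / 2) else (R.nonempty 0 R.len.zero_le).some

variable (R : Route A B x y)

lemma two_le_steps : 2 ≤ R.steps := le_max_left _ _

lemma steps_of_len_eq_zero (h : R.len = 0) : R.steps = 2 := by
  rw [steps, h]
  rfl

lemma steps_of_len_pos (h : 0 < R.len) : R.steps = 2 * R.len + 1 := max_eq_right (by omega)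

variable {R}

lemma div_two_le_len {r : ℕ} (hr : r < R.steps) : r / 2 ≤ R.len := by
  have h : r < max 2 (2 * R.len + 1) := hr
  omega

lemma IsHop.succ_lt_steps {r : ℕ} (h : R.IsHop r) : r + 1 < R.steps :=
  lt_max_of_lt_right (by have := h.1; have := h.2; omega)

lemma even_of_not_isHop {r : ℕ} (hlen : 0 < R.len) (hr : r < R.steps) (h : ¬ R.IsHop r) :
    r % 2 = 0 := by
  by_contra hodd
  rw [R.steps_of_len_pos hlen] at hr
  exact h ⟨by omega, by omega⟩

variable (R)

lemma layout_zero : R.layout 0 = x := if_pos rfl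

lemma layout_steps : R.layout R.steps = y := by
  have := R.two_le_steps
  rw [layout, if_neg (by omega), if_pos le_rfl]

variable {R}

lemma layout_inner {r : ℕ} (h0 : 0 < r) (h1 : r < R.steps) (h : (r - 1) / 2 < R.len) :
    R.layout r = R.pt ((r - 1) / 2) := by
  rw [layout, if_neg h0.ne', if_neg h1.not_ge, if_pos h]

lemma layout_mem_openCell {r : ℕ} (h0 : 0 < r) (h1 : r < R.steps) (h : R.len = 0) :
    R.layout r ∈ openCell A B (R.cell (r / 2)) := by
  have hr : r = 1 := by
    rw [R.steps_of_len_eq_zero h] at h1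
    omega
  rw [layout, if_neg h0.ne', if_neg h1.not_ge, if_neg (by omega), hr]
  exact (R.nonempty 0 R.len.zero_le).some_mem

lemma IsHop.layout_eq {r : ℕ} (h : R.IsHop r) : R.layout r = R.pt (r / 2) := by
  have hodd := h.1
  have hlen := h.2
  rw [layout_inner (by omega) (by have := h.succ_lt_steps; omega) (by omega),
    show (r - 1) / 2 = r / 2 by omega]

lemma IsHop.layout_succ_eq {r : ℕ} (h : R.IsHop r) : R.layout (r + 1) = R.pt (r / 2) :=
  layout_inner r.succ_pos h.succ_lt_steps h.2

lemma layout_mem_closure [Finite S] {r : ℕ} (h0 : 0 < r) (h1 : r < R.steps) :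
    R.layout r ∈ closure (openCell A B (R.cell (r / 2))) := by
  rcases R.len.eq_zero_or_pos with hlen | hlen
  · exact subset_closure (layout_mem_openCell h0 h1 hlen)
  rw [R.steps_of_len_pos hlen] at h1
  have hr : (r - 1) / 2 < R.len := by omega
  rw [layout_inner h0 (h1.trans_eq (R.steps_of_len_pos hlen).symm) hr]
  rcases Nat.mod_two_eq_zero_or_one r with heven | hodd
  · have := (R.step _ hr).mem_closure_right
    rwa [show (r - 1) / 2 + 1 = r / 2 by omega] at this
  · have := (R.step _ hr).mem_closure_left
    rwa [show R.cell ((r - 1) / 2) = R.cell (r / 2) by congr 1; omega] at this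

/-- Otherwise the route would be back in the same cell after two steps. -/
lemma IsReduced.orient_pt_succ_ne_zero (hAB : ∀ e, A e ≠ B e) (hR : R.IsReduced) {r : ℕ}
    (hr : r + 1 < R.len) {e : S} (he : orient (A e) (B e) (R.pt r) = 0) :
    orient (A e) (B e) (R.pt (r + 1)) ≠ 0 := by
  intro he'
  have hstep := R.step r (by omega)
  have hstep' := R.step (r + 1) hr
  have hcell : R.cell r = R.cell (r + 2) := by
    funext e'
    by_cases hz : orient (A e') (B e') (R.pt r) = 0
    · rw [hstep'.flip e' (hstep.orient_eq_zero hAB he hz he'), hstep.flip e' hz, Bool.not_not]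
    · have hz' : orient (A e') (B e') (R.pt (r + 1)) ≠ 0 := fun hz' =>
        hz (hstep'.orient_eq_zero hAB he' hz' he)
      rw [(hstep'.pos e' hz').2, (hstep.pos e' hz).2]
  have := hR.injOn (mem_Iic.2 (by omega)) (mem_Iic.2 (show r + 2 ≤ R.len by omega)) hcell
  omega

lemma IsReduced.orient_layout_succ_ne_zero (hAB : ∀ e, A e ≠ B e) (hR : R.IsReduced) {r : ℕ}
    (hr : r < R.steps) (hhop : ¬ R.IsHop r) (e : S) (he : orient (A e) (B e) (R.layout r) = 0) :
    orient (A e) (B e) (R.layout (r + 1)) ≠ 0 := by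
  rcases R.len.eq_zero_or_pos with hlen | hlen
  · have hsteps := R.steps_of_len_eq_zero hlen
    rcases r.eq_zero_or_pos with rfl | h0
    · exact orient_ne_zero_of_mem_openCell (layout_mem_openCell one_pos (by omega) hlen) e
    · exact absurd he (orient_ne_zero_of_mem_openCell (layout_mem_openCell h0 hr hlen) e)
  have hsteps := R.steps_of_len_pos hlen
  have heven := even_of_not_isHop hlen hr hhop
  rcases r.eq_zero_or_pos with rfl | h0
  · rw [layout_zero] at he
    rw [zero_add, layout_inner one_pos (by omega) (by omega)]
    exact hR.start_ne hlen e he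
  rw [layout_inner h0 hr (by omega), show (r - 1) / 2 = r / 2 - 1 by omega] at he
  by_cases hlast : r + 1 = R.steps
  · rw [hlast, layout_steps]
    rw [show r / 2 = R.len by omega] at he
    exact fun hy => hR.last_ne hlen e hy he
  · rw [layout_inner (by omega) (by omega) (by omega),
      show (r + 1 - 1) / 2 = r / 2 - 1 + 1 by omega]
    exact hR.orient_pt_succ_ne_zero hAB (by omega) he

lemma openSegment_subset_openCell_of_not_isHop {w : ℕ → ℝ × ℝ} (hzero : w 0 = x)
    (hlast : w R.steps = y)
    (hw : ∀ r, 0 < r → r < R.steps → w r ∈ closedCell A B (R.cell (r / 2))) {r : ℕ}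
    (hr : r < R.steps) (hhop : ¬ R.IsHop r)
    (hne : ∀ e, orient (A e) (B e) (w r) = 0 → orient (A e) (B e) (w (r + 1)) ≠ 0) :
    openSegment ℝ (w r) (w (r + 1)) ⊆ openCell A B (R.cell (r / 2)) := by
  refine openSegment_subset_openCell ?_ ?_ hne
  · rcases r.eq_zero_or_pos with rfl | h0
    · rw [hzero]
      exact R.start
    · exact hw r h0 hr
  have hpos := R.len.eq_zero_or_pos
  have hsteps := R.steps_of_len_eq_zero
  have hsteps' := R.steps_of_len_pos
  have heven := fun hlen => even_of_not_isHop hlen hr hhop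
  by_cases hlast' : r + 1 = R.steps
  · rw [hlast', hlast, show r / 2 = R.len by grind]
    exact R.last
  · have := hw (r + 1) r.succ_pos (by omega)
    rwa [show (r + 1) / 2 = r / 2 by grind] at this

end Route

namespace Route

variable {S ι : Type*} {A B : S → ℝ × ℝ} {x y : ι → ℝ × ℝ} {R : ∀ i, Route A B (x i) (y i)}
  {Z F : Set (ℝ × ℝ)}

lemma IsSeparated.eq_of_eq_layout (hR : IsSeparated R Z) {i j : ι} (hx : x i ∈ Z) (hy : y i ∈ Z)
    {r q : ℕ} (hr : r ≤ (R i).steps) (hq : q < (R j).len) (he : (R j).pt q = (R i).layout r) :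
    i = j ∧ 0 < r ∧ (r - 1) / 2 = q := by
  have hZ := hR.pt_notMem j q hq
  rcases r.eq_zero_or_pos with rfl | h0
  · rw [he, layout_zero] at hZ
    exact absurd hx hZ
  rcases hr.eq_or_lt with rfl | h1
  · rw [he, layout_steps] at hZ
    exact absurd hy hZ
  by_cases hlen : (r - 1) / 2 < (R i).len
  · rw [layout_inner h0 h1 hlen] at he
    obtain ⟨hij, hqr⟩ := hR.pt_inj _ _ _ _ hq hlen he
    exact ⟨hij.symm, h0, hqr.symm⟩
  · obtain ⟨e, hzero⟩ := ((R j).step q hq).exists_zero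
    rw [he] at hzero
    have := (R i).steps_of_len_pos
    exact absurd hzero (orient_ne_zero_of_mem_openCell (layout_mem_openCell h0 h1 (by omega)) e)

lemma IsSeparated.eq_of_mem_layout [Finite S] (hAB : ∀ e, A e ≠ B e) (hR : IsSeparated R Z)
    {i j : ι} (hx : x i ∈ Z) (hy : y i ∈ Z) {r ρ : ℕ} (hr : r < (R i).steps) (hρ : (R j).IsHop ρ)
    (hmem : (R j).pt (ρ / 2) ∈ segment ℝ ((R i).layout r) ((R i).layout (r + 1))) :
    i = j ∧ (r = ρ ∨ r + 1 = ρ ∨ r = ρ + 1) := by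
  have hodd := hρ.1
  have hpt : ∀ r' ≤ (R i).steps, (R j).pt (ρ / 2) = (R i).layout r' →
      i = j ∧ 0 < r' ∧ (r' - 1) / 2 = ρ / 2 := fun r' hr' => hR.eq_of_eq_layout hx hy hr' hρ.2
  by_cases hhop : (R i).IsHop r
  · rw [hhop.layout_succ_eq, ← hhop.layout_eq, segment_same, mem_singleton_iff] at hmem
    obtain ⟨rfl, h0, hr2⟩ := hpt r hr.le hmem
    have := hhop.1
    exact ⟨rfl, by omega⟩
  rcases eq_or_eq_or_mem_openSegment hmem with he | he | hopen
  · obtain ⟨rfl, h0, hr2⟩ := hpt r hr.le he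
    exact ⟨rfl, by omega⟩
  · obtain ⟨rfl, -, hr2⟩ := hpt (r + 1) hr he
    exact ⟨rfl, by omega⟩
  · obtain ⟨e, he⟩ := ((R j).step _ hρ.2).exists_zero
    have hcell := openSegment_subset_openCell_of_not_isHop (R i).layout_zero (R i).layout_steps
      (fun r h0 h1 => closure_openCell_subset _ _ _ (layout_mem_closure h0 h1)) hr hhop
      ((hR.reduced i).orient_layout_succ_ne_zero hAB hr hhop) hopen
    exact absurd he (orient_ne_zero_of_mem_openCell hcell e)

/-- The given static segments together with polylines with as many segments as are needed to follow
the given routes. -/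
abbrev system (R : ∀ i, Route A B (x i) (y i)) (b : ι → ℕ → ℝ × ℝ) : PolySystem S ι :=
  ⟨A, B, fun i => (R i).steps, b⟩

/-- The polylines follow the given routes closely: apart from the hops, each segment stays inside a
cell, and a hop crosses only the static segments which the route crosses there. -/
structure IsRealization (R : ∀ i, Route A B (x i) (y i)) (b : ι → ℕ → ℝ × ℝ) : Prop where
  openSegment_subset : ∀ i, ∀ r < (R i).steps, ¬ (R i).IsHop r →
    openSegment ℝ (b i r) (b i (r + 1)) ⊆ openCell A B ((R i).cell (r / 2))
  exists_of_hop : ∀ i (r : Fin (R i).steps), (R i).IsHop r → ∀ σ,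
    σ ∈ (system R b).crossings (Sum.inr ⟨i, r⟩) ∨ Sum.inr ⟨i, r⟩ ∈ (system R b).crossings σ →
    ∃ e, σ = Sum.inl e ∧ (R i).pt (r / 2) ∈ segment ℝ (A e) (B e)

lemma IsSeparated.exists_eq_inl_of_hop [Finite S] (hR : IsSeparated R Z) (hFZ : F ⊆ Z)
    (hx : ∀ i, x i ∈ F) (hy : ∀ i, y i ∈ F) {b : ι → ℕ → ℝ × ℝ} {U : ι → ℕ → Set (ℝ × ℝ)}
    (hb : (system R fun i => (R i).layout).IsPerturbation U b) (h : (system R b).IsGeneric F)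
    {j : ι} {ρ : Fin (R j).steps} (hρ : (R j).IsHop ρ) {σ : (system R b).Host}
    (hσ : σ ∈ (system R b).crossings (Sum.inr ⟨j, ρ⟩) ∨
      Sum.inr ⟨j, ρ⟩ ∈ (system R b).crossings σ) :
    ∃ e, σ = Sum.inl e ∧ (R j).pt (ρ / 2) ∈ segment ℝ (A e) (B e) := by
  have hend : ∀ X ∈ F ∪ (system R b).bends, X ∈ (system R b).seg (Sum.inr ⟨j, ρ⟩) →
      X ∉ (system R b).seg σ := fun X hX hXρ hXσ => hσ.elim
    (fun hσ => h.notMem_seg_of_mem_crossings hσ hX hXρ hXσ)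
    fun hσ => h.notMem_seg_of_mem_crossings hσ hX hXσ hXρ
  have hmeet : ¬ Disjoint ((system R b).seg (Sum.inr ⟨j, ρ⟩)) ((system R b).seg σ) := by
    rw [not_disjoint_iff]
    rcases hσ with ⟨-, X, hX, hX'⟩ | ⟨-, X, hX, hX'⟩
    · exact ⟨X, openSegment_subset_segment _ _ _ hX, hX'⟩
    · exact ⟨X, hX', openSegment_subset_segment _ _ _ hX⟩
  have hlimit : (R j).pt (ρ / 2) ∈ (system R fun i => (R i).layout).seg σ := by
    by_contra hnot
    refine hmeet (hb.disjoint (Sum.inr ⟨j, ρ⟩) σ ?_)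
    change Disjoint (segment ℝ ((R j).layout ρ) ((R j).layout (ρ + 1))) _
    rwa [hρ.layout_eq, hρ.layout_succ_eq, segment_same, disjoint_singleton_left]
  rcases σ with e | ⟨i, r⟩
  · exact ⟨e, rfl, hlimit⟩
  exfalso
  have hAB : ∀ e, A e ≠ B e := h.left_ne_right
  obtain ⟨rfl, heq | hprev | hnext⟩ :=
    hR.eq_of_mem_layout hAB (hFZ (hx i)) (hFZ (hy i)) r.2 hρ hlimit
  · obtain rfl := Fin.ext heq
    exact hσ.elim (fun hσ => hσ.1 rfl) fun hσ => hσ.1 rfl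
  · exact hend _ (h.pt_mem ρ.2.le) (left_mem_segment ℝ _ _)
      (show b i ρ ∈ segment ℝ (b i r) (b i (r + 1)) from hprev ▸ right_mem_segment ℝ _ _)
  · exact hend _ (h.pt_mem ρ.2) (right_mem_segment ℝ _ _)
      (show b i (ρ + 1) ∈ segment ℝ (b i r) (b i (r + 1)) from hnext ▸ left_mem_segment ℝ _ _)

lemma IsSeparated.exists_isRealization [Finite S] [Finite ι] (hR : IsSeparated R Z)
    (hF : F.Finite) (hFZ : F ⊆ Z) (hst : IsSegmentDrawing F A B) (hx : ∀ i, x i ∈ F)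
    (hy : ∀ i, y i ∈ F) (hxy : ∀ i, x i ≠ y i) :
    ∃ b, (system R b).IsGeneric F ∧ IsRealization R b ∧ (∀ i, b i 0 = x i) ∧
      ∀ i, b i (R i).steps = y i := by
  have hzero : ∀ i, (R i).layout 0 = x i := fun i => (R i).layout_zero
  have hlast : ∀ i, (R i).layout (R i).steps = y i := fun i => (R i).layout_steps
  obtain ⟨b, hb, h⟩ := (system R fun i => (R i).layout).exists_isPerturbation_isGeneric hF hst
    (fun i => (R i).two_le_steps) (fun i => mem_of_eq_of_mem (hzero i) (hx i))
    (fun i => mem_of_eq_of_mem (hlast i) (hy i))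
    (fun i => ((hzero i).trans_ne (hxy i)).trans_eq (hlast i).symm)
    (U := fun i r => openCell A B ((R i).cell (r / 2))) (fun i r _ _ => isOpen_openCell _ _ _)
    fun i r h0 h1 => layout_mem_closure h0 h1
  have hbx : ∀ i, b i 0 = x i := fun i => (hb.zero i).trans (hzero i)
  have hby : ∀ i, b i (R i).steps = y i := fun i => (hb.last i).trans (hlast i)
  refine ⟨b, h, ⟨fun i r hr hhop => ?_, fun j ρ hρ σ hσ =>
    hR.exists_eq_inl_of_hop hFZ hx hy hb h hρ hσ⟩, hbx, hby⟩
  refine openSegment_subset_openCell_of_not_isHop (hbx i) (hby i) (fun r h0 h1 =>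
    openCell_subset_closedCell _ _ _ (hb.mem i r h0 h1)) hr hhop fun e he => ?_
  rcases r.eq_zero_or_pos with rfl | h0
  · exact h.bend_orient_ne_zero one_pos (R i).two_le_steps e
  · exact absurd he (h.bend_orient_ne_zero h0 hr e)

end Route

/-! ### Counting the crossings of the new drawing -/

/-- The other segments from `A e'` to `B e'` which meet the interior of the one from `A e` to
`B e`. -/
def segCrossings {S : Type*} (A B : S → ℝ × ℝ) (e : S) : Set S :=
  {e' | e' ≠ e ∧ (openSegment ℝ (A e) (B e) ∩ segment ℝ (A e') (B e')).Nonempty}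

lemma ncard_le_ncard_inl_add_sum {α ι : Type*} [Fintype ι] {β : ι → Type*} [Finite α]
    [∀ i, Finite (β i)] (T : Set (α ⊕ Σ i, β i)) :
    T.ncard ≤ {a | Sum.inl a ∈ T}.ncard + ∑ i, {b : β i | Sum.inr ⟨i, b⟩ ∈ T}.ncard := by
  have hT : T ⊆ Sum.inl '' {a | Sum.inl a ∈ T} ∪
      ⋃ i, (fun b => Sum.inr ⟨i, b⟩) '' {b : β i | Sum.inr ⟨i, b⟩ ∈ T} := by
    rintro (a | ⟨i, b⟩) hmem
    · exact Or.inl ⟨a, hmem, rfl⟩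
    · exact Or.inr (mem_iUnion.2 ⟨i, b, hmem, rfl⟩)
  refine (ncard_le_ncard hT (toFinite _)).trans ((ncard_union_le _ _).trans ?_)
  exact add_le_add (ncard_image_le (toFinite _)) ((ncard_iUnion_le_of_fintype _).trans
    (Finset.sum_le_sum fun i _ => ncard_image_le (toFinite _)))

lemma ncard_setOf_mem_le {α β : Type*} [Finite α] [Finite β] (s : Set α) (T : α → Set β) {m : ℕ}
    (hT : ∀ a ∈ s, (T a).ncard ≤ m) : {p : α × β | p.1 ∈ s ∧ p.2 ∈ T p.1}.ncard ≤ s.ncard * m := by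
  classical
  have := Fintype.ofFinite α
  have := Fintype.ofFinite β
  rw [ncard_eq_toFinset_card', ncard_eq_toFinset_card' s, mul_comm]
  refine Finset.card_le_mul_card_image_of_maps_to (f := Prod.fst) (fun p hp => ?_) m fun a ha => ?_
  · exact mem_toFinset.2 (mem_toFinset.1 hp).1
  · refine le_trans ?_ (hT a (mem_toFinset.1 ha))
    rw [ncard_eq_toFinset_card']
    refine Finset.card_le_card_of_injOn Prod.snd (fun p hp => ?_) fun p hp q hq he => ?_
    · grind
    · grind

namespace PolySystem.IsGeneric

variable {S ι : Type*} {D : PolySystem S ι} {F : Set (ℝ × ℝ)}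

lemma mem_openSeg_of_mem_seg (h : D.IsGeneric F) {σ σ' : D.Host} {x : ℝ × ℝ}
    (hx : x ∈ D.openSeg σ) (hx' : x ∈ D.seg σ') : x ∈ D.openSeg σ' := by
  rcases eq_or_eq_or_mem_openSegment hx' with rfl | rfl | hopen
  · exact absurd hx (h.notMem_openSeg σ (h.src_mem σ'))
  · exact absurd hx (h.notMem_openSeg σ (h.tgt_mem σ'))
  · exact hopen

lemma succ_ne_of_mem_crossings (h : D.IsGeneric F) {i : ι} {r r' : Fin (D.len i)}
    (hr : Sum.inr ⟨i, r'⟩ ∈ D.crossings (Sum.inr ⟨i, r⟩)) :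
    (r : ℕ) + 1 ≠ r' ∧ (r' : ℕ) + 1 ≠ r := by
  refine ⟨fun he => h.notMem_seg_of_mem_crossings hr (h.pt_mem r.2) (right_mem_segment ℝ _ _) ?_,
    fun he => h.notMem_seg_of_mem_crossings hr (h.pt_mem r.2.le) (left_mem_segment ℝ _ _) ?_⟩
  · exact show D.pt i (r + 1) ∈ segment ℝ (D.pt i r') (D.pt i (r' + 1)) from
      he ▸ left_mem_segment ℝ _ _
  · exact show D.pt i r ∈ segment ℝ (D.pt i r') (D.pt i (r' + 1)) from
      he ▸ right_mem_segment ℝ _ _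

end PolySystem.IsGeneric

namespace Route

section Hops

variable {S : Type*} {A B : S → ℝ × ℝ} {x y : ℝ × ℝ}

lemma injOn_div_two_setOf_isHop (R : Route A B x y) : InjOn (· / 2) {r | R.IsHop r} :=
  fun r hr r' hr' he => by
    have := hr.1
    have := hr'.1
    simp only at he
    omega

lemma ncard_setOf_not_isHop_le (R : Route A B x y) :
    {r : Fin R.steps | ¬ R.IsHop r}.ncard ≤ max 2 (R.len + 1) := by
  rcases R.len.eq_zero_or_pos with hlen | hlen
  · refine (ncard_le_card _).trans (le_max_of_le_left ?_)
    rw [Nat.card_fin, R.steps_of_len_eq_zero hlen]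
  · refine le_max_of_le_right ?_
    rw [← ncard_Iic_nat]
    refine ncard_le_ncard_of_injOn (fun r => (r : ℕ) / 2)
      (fun r _ => mem_Iic.2 (div_two_le_len r.2)) (fun r hr r' hr' he => Fin.ext ?_)
      (finite_Iic _)
    have := even_of_not_isHop hlen r.2 hr
    have := even_of_not_isHop hlen r'.2 hr'
    simp only at he
    omega

end Hops

variable {S ι : Type*} {A B : S → ℝ × ℝ} {x y : ι → ℝ × ℝ} {R : ∀ i, Route A B (x i) (y i)}
  {Z F : Set (ℝ × ℝ)} {b : ι → ℕ → ℝ × ℝ}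

namespace IsRealization

lemma orient_ne_zero (hb : IsRealization R b) {i : ι} {r : Fin (R i).steps}
    (hr : ¬ (R i).IsHop r) {X : ℝ × ℝ} (hX : X ∈ (system R b).openSeg (Sum.inr ⟨i, r⟩)) (e : S) :
    orient (A e) (B e) X ≠ 0 :=
  orient_ne_zero_of_mem_openCell (hb.openSegment_subset i r r.2 hr hX) e

lemma isHop_of_mem_crossings_inl (hb : IsRealization R b) (h : (system R b).IsGeneric F) {i : ι}
    {r : Fin (R i).steps} {e : S}
    (hr : Sum.inr ⟨i, r⟩ ∈ (system R b).crossings (Sum.inl e)) : (R i).IsHop r := by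
  by_contra hhop
  obtain ⟨-, X, hX, hXr⟩ := hr
  exact hb.orient_ne_zero hhop (h.mem_openSeg_of_mem_seg hX hXr) e
    (orient_eq_zero_of_mem_openSegment hX)

lemma ncard_crossings_inl_le [Finite S] [Fintype ι] (hb : IsRealization R b)
    (h : (system R b).IsGeneric F) (e : S) :
    ((system R b).crossings (Sum.inl e)).ncard ≤
      (segCrossings A B e).ncard + ∑ i, ((R i).uses e).ncard := by
  refine (ncard_le_ncard_inl_add_sum _).trans (add_le_add (le_of_eq ?_) (Finset.sum_le_sum
    fun i _ => ?_))
  · congr 1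
    ext e'
    exact and_congr_left' Sum.inl_injective.ne_iff
  · have hhop : ∀ r : Fin (R i).steps, Sum.inr ⟨i, r⟩ ∈ (system R b).crossings (Sum.inl e) →
        (R i).IsHop r := fun r => hb.isHop_of_mem_crossings_inl h
    refine ncard_le_ncard_of_injOn (fun r => (r : ℕ) / 2) (fun r hr => ⟨(hhop r hr).2, ?_⟩)
      (fun r hr r' hr' he => Fin.ext ?_) ((R i).finite_uses e)
    · obtain ⟨e', he', hmem⟩ := hb.exists_of_hop i r (hhop r hr) _ (Or.inr hr)
      rwa [Sum.inl_injective he']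
    · exact (R i).injOn_div_two_setOf_isHop (hhop r hr) (hhop r' hr') he

lemma exists_eq_inr_of_mem_crossings (hb : IsRealization R b) (h : (system R b).IsGeneric F)
    {i : ι} (hi : (R i).IsReduced) {r : Fin (R i).steps} (hr : ¬ (R i).IsHop r)
    {σ : (system R b).Host} (hσ : σ ∈ (system R b).crossings (Sum.inr ⟨i, r⟩)) :
    ∃ j, ∃ r' : Fin (R j).steps, σ = Sum.inr ⟨j, r'⟩ ∧ j ≠ i ∧
      (R j).cell (r' / 2) = (R i).cell (r / 2) := by
  obtain ⟨hne, X, hX, hXσ⟩ := hσ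
  rcases σ with e | ⟨j, r'⟩
  · exact absurd (orient_eq_zero_of_mem_segment hXσ) (hb.orient_ne_zero hr hX e)
  by_cases hr' : (R j).IsHop r'
  · obtain ⟨e, he, -⟩ := hb.exists_of_hop j r' hr' _ (Or.inr ⟨hne, X, hX, hXσ⟩)
    exact absurd he Sum.inr_ne_inl
  have hcell := eq_of_mem_openCell
    (hb.openSegment_subset j r' r'.2 hr' (h.mem_openSeg_of_mem_seg hX hXσ))
    (hb.openSegment_subset i r r.2 hr hX)
  refine ⟨j, r', rfl, ?_, hcell⟩
  rintro rfl
  have hadj := h.succ_ne_of_mem_crossings ⟨hne, X, hX, hXσ⟩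
  have heq := hi.injOn (mem_Iic.2 (div_two_le_len r'.2)) (mem_Iic.2 (div_two_le_len r.2)) hcell
  exact hne (by rw [Fin.ext (by omega : (r' : ℕ) = r)])

/-- A segment inside a cell meets at most two segments of every other polyline, as this visits the
cell at most once. -/
lemma ncard_crossings_le_of_not_isHop [Fintype ι] (hb : IsRealization R b)
    (h : (system R b).IsGeneric F) (hR : ∀ i, (R i).IsReduced) {i : ι} {r : Fin (R i).steps}
    (hr : ¬ (R i).IsHop r) :
    ((system R b).crossings (Sum.inr ⟨i, r⟩)).ncard ≤ (Fintype.card ι - 1) * 2 := by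
  let T : Set (Σ j, Fin (R j).steps) :=
    {a | Sum.inr a ∈ (system R b).crossings (Sum.inr ⟨i, r⟩)}
  have hmain : ∀ a ∈ T, a.1 ≠ i ∧ (R a.1).cell (a.2 / 2) = (R i).cell (r / 2) := fun a ha => by
    obtain ⟨j, r', he, hj⟩ := hb.exists_eq_inr_of_mem_crossings h (hR i) hr ha
    obtain rfl := Sum.inr_injective he
    exact hj
  have himage : (system R b).crossings (Sum.inr ⟨i, r⟩) ⊆ Sum.inr '' T := fun σ hσ => by
    obtain ⟨j, r', rfl, -⟩ := hb.exists_eq_inr_of_mem_crossings h (hR i) hr hσ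
    exact ⟨_, hσ, rfl⟩
  have hcard : (({i}ᶜ : Set ι) ×ˢ Iio 2).ncard = (Fintype.card ι - 1) * 2 := by
    rw [ncard_prod, ncard_compl, ncard_singleton, Nat.card_eq_fintype_card, ncard_Iio_nat]
  rw [← hcard]
  refine (ncard_le_ncard himage (toFinite _)).trans ((ncard_image_le (toFinite _)).trans ?_)
  refine ncard_le_ncard_of_injOn (fun a => (a.1, (a.2 : ℕ) % 2))
    (fun a ha => ⟨(hmain a ha).1, Nat.mod_lt _ two_pos⟩) ?_ (toFinite _)
  rintro ⟨j, r₁⟩ h₁ ⟨j₂, r₂⟩ h₂ he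
  obtain ⟨rfl, hmod⟩ := Prod.mk_inj.1 he
  have hdiv : (r₁ : ℕ) / 2 = r₂ / 2 := (hR j).injOn (mem_Iic.2 (div_two_le_len r₁.2))
    (mem_Iic.2 (div_two_le_len r₂.2)) ((hmain _ h₁).2.trans (hmain _ h₂).2.symm)
  have hmod : (r₁ : ℕ) % 2 = r₂ % 2 := hmod
  rw [Fin.ext (by omega : (r₁ : ℕ) = r₂)]

lemma ncard_setOf_isHop_crossings_le (hb : IsRealization R b) (hR : IsSeparated R Z)
    (hZ : ∀ e e', e ≠ e' → segment ℝ (A e) (B e) ∩ segment ℝ (A e') (B e') ⊆ Z) (i : ι) :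
    {p : Fin (R i).steps × (system R b).Host | (R i).IsHop p.1 ∧
      p.2 ∈ (system R b).crossings (Sum.inr ⟨i, p.1⟩)}.ncard ≤ (R i).len := by
  rw [← ncard_Iio_nat (R i).len]
  refine ncard_le_ncard_of_injOn (fun p => (p.1 : ℕ) / 2) (fun p hp => hp.1.2) ?_ (finite_Iio _)
  rintro ⟨r, σ⟩ ⟨hr, hσ⟩ ⟨r', σ'⟩ ⟨hr', hσ'⟩ he
  obtain rfl : r = r' := Fin.ext ((R i).injOn_div_two_setOf_isHop hr hr' he)
  obtain ⟨e, rfl, hmem⟩ := hb.exists_of_hop i r hr σ (Or.inl hσ)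
  obtain ⟨e', rfl, hmem'⟩ := hb.exists_of_hop i r hr σ' (Or.inl hσ')
  by_cases hee : e = e'
  · rw [hee]
  · exact absurd (hZ e e' hee ⟨hmem, hmem'⟩) (hR.pt_notMem i _ hr.2)

lemma ncard_crossings_inr_le [Finite S] [Fintype ι] (hb : IsRealization R b)
    (h : (system R b).IsGeneric F) (hR : IsSeparated R Z)
    (hZ : ∀ e e', e ≠ e' → segment ℝ (A e) (B e) ∩ segment ℝ (A e') (B e') ⊆ Z) (i : ι) :
    {p : Fin (R i).steps × (system R b).Host |
      p.2 ∈ (system R b).crossings (Sum.inr ⟨i, p.1⟩)}.ncard ≤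
      (R i).len + max 2 ((R i).len + 1) * ((Fintype.card ι - 1) * 2) := by
  refine le_trans (ncard_le_ncard (fun p hp => ?_) (toFinite _)) ((ncard_union_le _ _).trans
    (add_le_add (hb.ncard_setOf_isHop_crossings_le hR hZ i) ((ncard_setOf_mem_le _ _
      fun r hr => hb.ncard_crossings_le_of_not_isHop h hR.reduced hr).trans
        (Nat.mul_le_mul_right _ (R i).ncard_setOf_not_isHop_le))))
  by_cases hhop : (R i).IsHop p.1
  exacts [Or.inl ⟨hhop, hp⟩, Or.inr ⟨hhop, hp⟩]

end IsRealization

lemma IsReduced.steps_add_le [Fintype S] [Nonempty S] {x y : ℝ × ℝ} {R : Route A B x y}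
    (hR : R.IsReduced) {f : ℕ} (hf : 0 < f) :
    R.steps + (R.len + max 2 (R.len + 1) * ((f - 1) * 2)) ≤
      (Fintype.card S ^ 2 + 3 * Fintype.card S + 1) * (f + 1) + 1 := by
  have hS : 1 ≤ Fintype.card S := Fintype.card_pos
  have hcells := hR.two_mul_len_le
  obtain ⟨d, rfl⟩ : ∃ d, f = d + 1 := ⟨f - 1, by omega⟩
  rw [Nat.add_sub_cancel]
  have hmax : 2 * max 2 (R.len + 1) ≤ Fintype.card S ^ 2 + 3 * Fintype.card S + 1 := by
    rcases le_total 2 (R.len + 1) with hlen | hlen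
    · rw [max_eq_right hlen]
      omega
    · rw [max_eq_left hlen]
      nlinarith
  have hsteps : R.steps + R.len ≤ 2 * (2 * max 2 (R.len + 1)) + 1 := by
    rw [steps]
    omega
  nlinarith [Nat.mul_le_mul_right (d + 2) hmax]

end Route

lemma Threading.IsAttached.geomKPlanar_of_contacts {V S ι : Type*} [Finite V] [Fintype S]
    [Nonempty S] [Fintype ι] {G : SimpleGraph V} {t : ℕ} {T : Threading G S ι t}
    {D : PolySystem S ι} {pos : V → ℝ × ℝ} (hT : T.IsAttached D pos)
    (hst : IsSegmentDrawing (pos '' T.terminals) D.left D.right) (hlen : ∀ i, 2 ≤ D.len i)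
    (hne : ∀ i, D.pt i 0 ≠ D.pt i (D.len i)) {k : ℕ} (hk : 1 ≤ k)
    (hcontacts : ∀ e, (segCrossings D.left D.right e).ncard + ∑ i, (D.contacts i e).ncard ≤ k)
    (ht : t = (Fintype.card S ^ 2 + 3 * Fintype.card S + 1) * (Fintype.card ι + 1) + 1) :
    GeomKPlanar k G := by
  have hF : (pos '' T.terminals).Finite := toFinite _
  have hzero : ∀ i, D.pt i 0 ∈ pos '' T.terminals := fun i =>
    ⟨_, Or.inr ⟨i, Or.inl rfl⟩, (hT.zero i).symm⟩
  have hlast : ∀ i, D.pt i (D.len i) ∈ pos '' T.terminals := fun i =>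
    ⟨_, Or.inr ⟨i, Or.inr rfl⟩, (hT.last i).symm⟩
  choose R₀ hR₀ using D.exists_route hF hst hlen hzero hlast hne
  let Z := pos '' T.terminals ∪ ⋃ e, ⋃ e' ∈ {e' | e ≠ e'},
    segment ℝ (D.left e) (D.right e) ∩ segment ℝ (D.left e') (D.right e')
  have hZ : Z.Finite := hF.union (finite_iUnion fun e => (toFinite _).biUnion
    fun e' he => (hst.inter_subsingleton e e' he).finite)
  obtain ⟨R, hR, huses⟩ := Route.exists_isSeparated hst.left_ne_right hZ R₀
  obtain ⟨b, h, hb, hb0, hb1⟩ := hR.exists_isRealization hF subset_union_left hst hzero hlast hne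
  have hTb : T.IsAttached (Route.system R b) pos :=
    ⟨hT.injOn, hT.left, hT.right, fun i => (hb0 i).trans (hT.zero i),
      fun i => (hb1 i).trans (hT.last i)⟩
  refine hTb.geomKPlanar h hk (fun e => (hb.ncard_crossings_inl_le h e).trans ?_) fun i => ?_
  · exact (add_le_add_right (Finset.sum_le_sum fun i _ => (huses i e).trans (hR₀ i e)) _).trans
      (hcontacts e)
  · rw [ht]
    refine (Nat.add_le_add_left (hb.ncard_crossings_inr_le h hR (fun e e' hee => ?_) i) _).trans
      ((hR.reduced i).steps_add_le (Fintype.card_pos_iff.2 ⟨i⟩))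
    exact (subset_iUnion_of_subset e (subset_biUnion_of_mem (u := fun e' =>
      segment ℝ (D.left e) (D.right e) ∩ segment ℝ (D.left e') (D.right e')) hee)).trans
      subset_union_right

/-! ### Drawings without static edges -/

lemma subsingleton_of_forall_val_eq {n m a c : ℕ} {C : Set (Fin n × Fin m)}
    (h : ∀ p ∈ C, (p.1 : ℕ) = a ∧ (p.2 : ℕ) = c) : C.Subsingleton := fun p hp q hq =>
  Prod.ext (Fin.ext ((h p hp).1.trans (h q hq).1.symm))
    (Fin.ext ((h p hp).2.trans (h q hq).2.symm))

lemma eq_of_mem_segment_of_mem_segment {a b c x : ℝ × ℝ} (hab : a ≠ b)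
    (hc : c ∈ openSegment ℝ a b) (hx : x ∈ segment ℝ a c) (hx' : x ∈ segment ℝ c b) : x = c := by
  obtain ⟨θ, h0, h1, rfl⟩ := mem_openSegment_iff_lineMap.1 hc
  have hleft := segment_lineMap (a := a) (b := b) h0.le
  have hright := segment_lineMap (a := a) (b := b) h1.le
  rw [AffineMap.lineMap_apply_zero] at hleft
  rw [AffineMap.lineMap_apply_one] at hright
  rw [hleft] at hx
  rw [hright] at hx'
  obtain ⟨α, hα, rfl⟩ := hx
  rw [(AffineMap.lineMap_injective ℝ hab).mem_set_image] at hx'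
  rw [le_antisymm hα.2 hx'.1]

lemma disjoint_or_disjoint_of_common_base {u v z w : ℝ × ℝ} (huv : u ≠ v)
    (hz : orient u v z ≠ 0) : Disjoint (openSegment ℝ u z) (segment ℝ w v) ∨
      Disjoint (openSegment ℝ z v) (segment ℝ u w) := by
  by_contra! h
  obtain ⟨⟨X, hX, hX'⟩, ⟨Y, hY, hY'⟩⟩ := h.imp not_disjoint_iff.1 not_disjoint_iff.1
  obtain ⟨θ, hθ0, -, rfl⟩ := mem_openSegment_iff_lineMap.1 hX
  obtain ⟨φ, hφ0, hφ1, eX⟩ := mem_segment_iff_lineMap.1 hX'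
  obtain ⟨α, hα0, -, rfl⟩ := mem_openSegment_iff_lineMap.1 hY
  obtain ⟨β, hβ0, -, eY⟩ := mem_segment_iff_lineMap.1 hY'
  have oX := congrArg (orient u v) eX
  have oY := congrArg (orient u v) eY
  simp only [orient_lineMap, orient_self_left, orient_self_right] at oX oY
  have hprod : (1 - φ) * (1 - α) = β * θ :=
    mul_left_cancel₀ hz (by linear_combination β * oX - (1 - φ) * oY)
  have hφ : φ < 1 := hφ1.lt_of_ne fun h => mul_ne_zero hθ0.ne' hz (by
    rw [h] at oX
    linear_combination -oX)
  have hpos : 0 < β * φ + (1 - φ) * α :=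
    add_pos_of_nonneg_of_pos (mul_nonneg hβ0 hφ0) (mul_pos (sub_pos.2 hφ) hα0)
  have x₁ := congrArg Prod.fst eX
  have y₁ := congrArg Prod.snd eX
  have x₂ := congrArg Prod.fst eY
  have y₂ := congrArg Prod.snd eY
  simp only [fst_lineMap] at x₁ x₂
  simp only [snd_lineMap] at y₁ y₂
  rcases fst_sub_ne_zero_or_snd_sub_ne_zero huv with h | h
  · refine mul_ne_zero hpos.ne' h ?_
    linear_combination β * x₁ - (1 - φ) * x₂ - (z.1 - u.1) * hprod
  · refine mul_ne_zero hpos.ne' h ?_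
    linear_combination β * y₁ - (1 - φ) * y₂ - (z.2 - u.2) * hprod

lemma InGeneralPosition.eq_of_mem_two_chords {Q : Set (ℝ × ℝ)} (h : InGeneralPosition ∅ Q)
    {a b c d X Y : ℝ × ℝ} (ha : a ∈ Q) (hb : b ∈ Q) (hc : c ∈ Q) (hd : d ∈ Q) (hab : a ≠ b)
    (hcd : c ≠ d) (hne : s(a, b) ≠ s(c, d)) (hX : orient a b X = 0) (hX' : orient c d X = 0)
    (hY : orient a b Y = 0) (hY' : orient c d Y = 0) : X = Y := by
  by_contra hXY
  have hXa := orient_eq_zero_of_collinear hab hX hY (orient_self_left a b)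
  have hXb := orient_eq_zero_of_collinear hab hX hY (orient_self_right a b)
  have hXc := orient_eq_zero_of_collinear hcd hX' hY' (orient_self_left c d)
  have hXd := orient_eq_zero_of_collinear hcd hX' hY' (orient_self_right c d)
  exact hne (h.eq_ends_of_collinear (Or.inr ha) (notMem_empty _) (Or.inr hb) (Or.inr hc) (Or.inr hd)
    hcd hab.symm (orient_eq_zero_of_collinear hXY hXc hXd hXa)
    (orient_eq_zero_of_collinear hXY hXc hXd hXb))

lemma infinite_openSegment {a b : ℝ × ℝ} (h : a ≠ b) : (openSegment ℝ a b).Infinite := by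
  rw [openSegment_eq_image_lineMap]
  exact (Ioo_infinite zero_lt_one).image (AffineMap.lineMap_injective ℝ h).injOn

lemma InGeneralPosition.exists_mem_openSegment_orient_ne_zero {ι : Type*} [Finite ι]
    {Q : Set (ℝ × ℝ)} (h : InGeneralPosition ∅ Q) {x y : ι → ℝ × ℝ} (hx : ∀ i, x i ∈ Q)
    (hy : ∀ i, y i ∈ Q) (hxy : ∀ i, x i ≠ y i) (i : ι) :
    ∃ m ∈ openSegment ℝ (x i) (y i), ∀ j, s(x i, y i) ≠ s(x j, y j) → orient (x j) (y j) m ≠ 0 := by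
  have hfin : (⋃ j ∈ {j | s(x i, y i) ≠ s(x j, y j)},
      {X | orient (x i) (y i) X = 0 ∧ orient (x j) (y j) X = 0}).Finite := by
    refine (toFinite _).biUnion fun j hj => Set.Subsingleton.finite ?_
    rintro X ⟨hX, hX'⟩ Y ⟨hY, hY'⟩
    exact h.eq_of_mem_two_chords (hx i) (hy i) (hx j) (hy j) (hxy i) (hxy j) hj hX hX' hY hY'
  obtain ⟨m, hm, hm'⟩ := ((infinite_openSegment (hxy i)).sdiff hfin).nonempty
  exact ⟨m, hm, fun j hj h0 => hm' (mem_biUnion (s := {j | s(x i, y i) ≠ s(x j, y j)}) hj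
    ⟨orient_eq_zero_of_mem_openSegment hm, h0⟩)⟩

namespace PolySystem

variable {S ι : Type*} {D : PolySystem S ι} {F : Set (ℝ × ℝ)}

/-- The pairs of a segment of the `i`-th polyline and a segment of the `j`-th polyline that cross
each other. -/
def mutualCrossings (D : PolySystem S ι) (i j : ι) : Set (Fin (D.len i) × Fin (D.len j)) :=
  {p | Sum.inr ⟨j, p.2⟩ ∈ D.crossings (Sum.inr ⟨i, p.1⟩)}

lemma not_disjoint_of_mem_mutualCrossings {i j : ι} {p : Fin (D.len i) × Fin (D.len j)}
    (hp : p ∈ D.mutualCrossings i j) {a c : ℕ} (ha : (p.1 : ℕ) = a) (hc : (p.2 : ℕ) = c) :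
    ¬Disjoint (openSegment ℝ (D.pt i a) (D.pt i (a + 1)))
      (segment ℝ (D.pt j c) (D.pt j (c + 1))) := by
  subst ha hc
  exact not_disjoint_iff_nonempty_inter.2 hp.2

namespace IsGeneric

lemma mutualCrossings_self (h : D.IsGeneric F) {i : ι} (hi : D.len i = 2) :
    D.mutualCrossings i i = ∅ := by
  refine eq_empty_of_forall_notMem fun ⟨r, r'⟩ hr => ?_
  obtain ⟨hlt, hgt⟩ : (r : ℕ) + 1 ≠ r' ∧ (r' : ℕ) + 1 ≠ r := h.succ_ne_of_mem_crossings hr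
  exact hr.1 (by rw [Fin.ext (by omega : (r' : ℕ) = r)])

lemma notMem_mutualCrossings (h : D.IsGeneric F) {i j : ι} {r : Fin (D.len i)}
    {r' : Fin (D.len j)} {a c : ℕ} (ha : a = r ∨ a = r + 1) (hc : c = r' ∨ c = r' + 1)
    (he : D.pt i a = D.pt j c) : (r, r') ∉ D.mutualCrossings i j := by
  intro hr
  have hmem : ∀ {l : ι} {q : Fin (D.len l)} {n : ℕ}, n = q ∨ n = q + 1 →
      D.pt l n ∈ D.seg (Sum.inr ⟨l, q⟩) := by
    rintro l q n (rfl | rfl)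
    exacts [left_mem_segment ℝ _ _, right_mem_segment ℝ _ _]
  exact h.notMem_seg_of_mem_crossings hr (h.pt_mem (by omega)) (hmem ha) (he ▸ hmem hc)

lemma pt_zero_ne_pt_two (h : D.IsGeneric F) {i : ι} (hi : D.len i = 2) : D.pt i 0 ≠ D.pt i 2 := by
  have hne := h.zero_ne_last i
  rwa [hi] at hne

lemma orient_pt_one_ne_zero (h : D.IsGeneric F) {i : ι} (hi : D.len i = 2) :
    orient (D.pt i 0) (D.pt i 2) (D.pt i 1) ≠ 0 := by
  have hne : ∀ r ≤ 2, r ≠ 1 → D.pt i r ≠ D.pt i 1 := fun r hr hr1 he =>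
    hr1 (h.pt_injOn i (mem_Iic.2 (by omega)) (mem_Iic.2 (by omega)) he)
  exact h.inGeneralPosition.noncollinear _ (h.pt_mem (by omega)) _ (h.pt_mem (by omega)) _
    (h.pt_mem (by omega)) (fun hF => h.bend_notMem i 1 one_pos (by omega) hF.2.2)
    (h.pt_zero_ne_pt_two hi) (hne 2 le_rfl (by decide)) (hne 0 (by decide) (by decide))

lemma subsingleton_mutualCrossings_of_ends_eq (h : D.IsGeneric F) {i j : ι} (hi : D.len i = 2)
    (hj : D.len j = 2) (hends : s(D.pt i 0, D.pt i 2) = s(D.pt j 0, D.pt j 2)) :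
    (D.mutualCrossings i j).Subsingleton := by
  have hbase := disjoint_or_disjoint_of_common_base (z := D.pt i 1) (w := D.pt j 1)
    (h.pt_zero_ne_pt_two hi) (h.orient_pt_one_ne_zero hi)
  rcases Sym2.eq_iff.1 hends with ⟨h0, h2⟩ | ⟨h0, h2⟩
  · have hne : ∀ p ∈ D.mutualCrossings i j, (p.1 : ℕ) ≠ p.2 := fun p hp he => by
      rcases (by omega : (p.1 : ℕ) = 0 ∨ (p.1 : ℕ) = 1) with hp0 | hp1
      · exact h.notMem_mutualCrossings (.inl hp0.symm) (.inl (by omega)) h0 hp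
      · exact h.notMem_mutualCrossings (.inr (by omega)) (.inr (by omega)) h2 hp
    refine hbase.elim (fun hb => subsingleton_of_forall_val_eq (a := 1) (c := 0) fun p hp => ?_)
      fun hb => subsingleton_of_forall_val_eq (a := 0) (c := 1) fun p hp => ?_
    all_goals have := hne p hp
    · have : (p.1 : ℕ) ≠ 0 := fun hp0 =>
        not_disjoint_of_mem_mutualCrossings hp hp0 (c := 1) (by omega) (h2 ▸ hb)
      omega
    · have : (p.1 : ℕ) ≠ 1 := fun hp1 =>
        not_disjoint_of_mem_mutualCrossings hp hp1 (c := 0) (by omega) (h0 ▸ hb)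
      omega
  · have heq : ∀ p ∈ D.mutualCrossings i j, (p.1 : ℕ) = p.2 := fun p hp => by
      by_contra hne
      rcases (by omega : (p.1 : ℕ) = 0 ∨ (p.1 : ℕ) = 1) with hp0 | hp1
      · exact h.notMem_mutualCrossings (.inl hp0.symm) (.inr (by omega)) h0 hp
      · exact h.notMem_mutualCrossings (.inr (by omega)) (.inl (by omega)) h2 hp
    rw [segment_symm ℝ (D.pt j 1), segment_symm ℝ (D.pt i 0)] at hbase
    refine hbase.elim (fun hb => subsingleton_of_forall_val_eq (a := 1) (c := 1) fun p hp => ?_)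
      fun hb => subsingleton_of_forall_val_eq (a := 0) (c := 0) fun p hp => ?_
    all_goals have := heq p hp
    · have : (p.1 : ℕ) ≠ 0 := fun hp0 =>
        not_disjoint_of_mem_mutualCrossings hp hp0 (c := 0) (by omega) (h2 ▸ hb)
      omega
    · have : (p.1 : ℕ) ≠ 1 := fun hp1 =>
        not_disjoint_of_mem_mutualCrossings hp hp1 (c := 1) (by omega) (h0 ▸ hb)
      omega

end IsGeneric

/-- A flat polyline runs along the chord between its ends, with its single inner vertex off the
lines through the other chords. -/
structure IsFlat (D : PolySystem S ι) : Prop where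
  len_eq : ∀ i, D.len i = 2
  zero_ne_two : ∀ i, D.pt i 0 ≠ D.pt i 2
  one_mem : ∀ i, D.pt i 1 ∈ openSegment ℝ (D.pt i 0) (D.pt i 2)
  orient_ne_zero : ∀ i j, s(D.pt i 0, D.pt i 2) ≠ s(D.pt j 0, D.pt j 2) →
    orient (D.pt j 0) (D.pt j 2) (D.pt i 1) ≠ 0

namespace IsFlat

lemma orient_eq_zero (hD : D.IsFlat) {i : ι} {r : Fin (D.len i)} {x : ℝ × ℝ}
    (hx : x ∈ D.seg (Sum.inr ⟨i, r⟩)) : orient (D.pt i 0) (D.pt i 2) x = 0 := by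
  have hsub : D.seg (Sum.inr ⟨i, r⟩) ⊆ segment ℝ (D.pt i 0) (D.pt i 2) := by
    have hone := openSegment_subset_segment _ _ _ (hD.one_mem i)
    have hr := r.2.trans_eq (hD.len_eq i)
    change segment ℝ (D.pt i r) (D.pt i (r + 1)) ⊆ _
    interval_cases (r : ℕ)
    · exact (convex_segment _ _).segment_subset (left_mem_segment ℝ _ _) hone
    · exact (convex_segment _ _).segment_subset hone (right_mem_segment ℝ _ _)
  exact orient_eq_zero_of_mem_segment (hsub hx)

lemma eq_of_mem_seg (hD : D.IsFlat) {i : ι} {r r' : Fin (D.len i)} (hne : r ≠ r') {x : ℝ × ℝ}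
    (hx : x ∈ D.seg (Sum.inr ⟨i, r⟩)) (hx' : x ∈ D.seg (Sum.inr ⟨i, r'⟩)) : x = D.pt i 1 := by
  wlog h : r < r' generalizing r r'
  · exact this hne.symm hx' hx (hne.lt_or_gt.resolve_left h)
  have hlen := hD.len_eq i
  have hr : (r : ℕ) = 0 := by omega
  have hr' : (r' : ℕ) = 1 := by omega
  simp only [seg, src, tgt, hr, hr', zero_add, Nat.reduceAdd] at hx hx'
  exact eq_of_mem_segment_of_mem_segment (hD.zero_ne_two i) (hD.one_mem i) hx hx'

lemma subsingleton_mutualCrossings_of_ends_ne (hD : D.IsFlat) {U : ι → ℕ → Set (ℝ × ℝ)}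
    {b : ι → ℕ → ℝ × ℝ} (hb : D.IsPerturbation U b) {i j : ι}
    (hmeet : {X | orient (D.pt i 0) (D.pt i 2) X = 0 ∧
      orient (D.pt j 0) (D.pt j 2) X = 0}.Subsingleton)
    (hends : s(D.pt i 0, D.pt i 2) ≠ s(D.pt j 0, D.pt j 2)) :
    ((D.redraw b).mutualCrossings i j).Subsingleton := by
  have hflat : ∀ p ∈ (D.redraw b).mutualCrossings i j,
      ∃ x ∈ D.seg (Sum.inr ⟨i, p.1⟩), x ∈ D.seg (Sum.inr ⟨j, p.2⟩) := by
    rintro p ⟨-, y, hy, hy'⟩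
    by_contra! hdis
    exact disjoint_left.1 (hb.disjoint _ _ (disjoint_left.2 hdis))
      (openSegment_subset_segment _ _ _ hy) hy'
  intro p hp q hq
  obtain ⟨x, hx, hx'⟩ := hflat p hp
  obtain ⟨y, hy, hy'⟩ := hflat q hq
  obtain rfl : x = y := hmeet ⟨hD.orient_eq_zero hx, hD.orient_eq_zero hx'⟩
    ⟨hD.orient_eq_zero hy, hD.orient_eq_zero hy'⟩
  refine Prod.ext ?_ ?_
  · by_contra hne
    exact hD.orient_ne_zero i j hends (hD.eq_of_mem_seg hne hx hy ▸ hD.orient_eq_zero hx')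
  · by_contra hne
    exact hD.orient_ne_zero j i hends.symm (hD.eq_of_mem_seg hne hx' hy' ▸ hD.orient_eq_zero hx)

end IsFlat

lemma exists_isGeneric_subsingleton_mutualCrossings [IsEmpty S] [Finite ι] {Q : Set (ℝ × ℝ)}
    (hfin : Q.Finite) (hQ : InGeneralPosition ∅ Q) {x y : ι → ℝ × ℝ} (hx : ∀ i, x i ∈ Q)
    (hy : ∀ i, y i ∈ Q) (hxy : ∀ i, x i ≠ y i) :
    ∃ D : PolySystem S ι, D.IsGeneric Q ∧ (∀ i, D.len i = 2 ∧ D.pt i 0 = x i ∧ D.pt i 2 = y i) ∧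
      ∀ i j, (D.mutualCrossings i j).Subsingleton := by
  choose m hm hm' using hQ.exists_mem_openSegment_orient_ne_zero hx hy hxy
  let D : PolySystem S ι := ⟨isEmptyElim, isEmptyElim, fun _ => 2,
    fun i => ![x i, m i, y i] ∘ Fin.ofNat 3⟩
  have hD : D.IsFlat := ⟨fun _ => rfl, hxy, hm, hm'⟩
  obtain ⟨b, hb, h⟩ := D.exists_isPerturbation_isGeneric hfin
    ⟨isEmptyElim, isEmptyElim, isEmptyElim, isEmptyElim, isEmptyElim⟩ (fun _ => le_rfl) hx hy hxy
    (U := fun _ _ => univ) (fun _ _ _ _ => isOpen_univ) (fun _ _ _ _ => subset_closure (mem_univ _))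
  refine ⟨_, h, fun i => ⟨rfl, hb.zero i, hb.last i⟩, fun i j => ?_⟩
  by_cases hends : s(x i, y i) = s(x j, y j)
  · refine h.subsingleton_mutualCrossings_of_ends_eq rfl rfl ?_
    have hends_eq : ∀ l, s(b l 0, b l 2) = s(x l, y l) := fun l =>
      congrArg₂ (fun p q => s(p, q)) (hb.zero l) (hb.last l)
    exact (hends_eq i).trans (hends.trans (hends_eq j).symm)
  · refine hD.subsingleton_mutualCrossings_of_ends_ne hb ?_ hends
    rintro X ⟨hX, hX'⟩ Y ⟨hY, hY'⟩
    exact hQ.eq_of_mem_two_chords (hx i) (hy i) (hx j) (hy j) (hxy i) (hxy j) hends hX hX' hY hY'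

lemma IsGeneric.ncard_crossings_inr_le [IsEmpty S] [Fintype ι] (h : D.IsGeneric F)
    {i : ι} (hlen : D.len i = 2) (hsub : ∀ j, (D.mutualCrossings i j).Subsingleton) :
    {p : Fin (D.len i) × D.Host | p.2 ∈ D.crossings (Sum.inr ⟨i, p.1⟩)}.ncard ≤
      Fintype.card ι - 1 := by
  let target : D.Host → ι := Sum.elim isEmptyElim Sigma.fst
  have hcard : ({i}ᶜ : Set ι).ncard = Fintype.card ι - 1 := by
    rw [ncard_compl, ncard_singleton, Nat.card_eq_fintype_card]
  rw [← hcard]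
  refine ncard_le_ncard_of_injOn (fun p => target p.2) ?_ ?_ (toFinite _)
  · rintro ⟨r, e | ⟨j, r'⟩⟩ hp
    · exact isEmptyElim e
    · rintro (he : j = i)
      obtain rfl : j = i := he
      exact eq_empty_iff_forall_notMem.1 (h.mutualCrossings_self hlen) (r, r') hp
  · rintro ⟨r, e | ⟨j, r'⟩⟩ hp ⟨q, e' | ⟨j', q'⟩⟩ hq he
    · exact isEmptyElim e
    · exact isEmptyElim e
    · exact isEmptyElim e'
    · obtain rfl : j = j' := he
      obtain ⟨rfl, rfl⟩ := Prod.mk_inj.1 (hsub j (x := (r, r')) hp (y := (q, q')) hq)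
      rfl

end PolySystem

lemma Threading.geomKPlanar_of_isEmpty {V S ι : Type*} [Finite V] [IsEmpty S] [Fintype ι]
    {G : SimpleGraph V} {t : ℕ} (T : Threading G S ι t) (hne : ∀ i, T.vert i 0 ≠ T.vert i t)
    (ht : Fintype.card ι + 1 ≤ t) {k : ℕ} (hk : 1 ≤ k) : GeomKPlanar k G := by
  obtain ⟨pos, -, hinj, -, hQ⟩ := exists_inGeneralPosition (ι := V) finite_empty (fun _ => univ)
    (fun _ => isOpen_univ) (fun _ => univ_nonempty)
  obtain ⟨D, h, hD, hsub⟩ :=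
    PolySystem.exists_isGeneric_subsingleton_mutualCrossings (S := S) (finite_range pos) hQ
      (fun i => mem_range_self (T.vert i 0)) (fun i => mem_range_self (T.vert i t))
      fun i => hinj.ne (hne i)
  have hT : T.IsAttached D pos := ⟨hinj.injOn, isEmptyElim, isEmptyElim, fun i => (hD i).2.1,
    fun i => (hD i).1 ▸ (hD i).2.2⟩
  refine hT.geomKPlanar h hk isEmptyElim fun i => ?_
  have hcross := h.ncard_crossings_inr_le (hD i).1 (hsub i)
  have hcard : 0 < Fintype.card ι := Fintype.card_pos_iff.2 ⟨i⟩
  have hlen := (hD i).1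
  omega

/-! ### Shortening flexible paths -/

lemma ncard_add_sum_ncard_le {α ι : Type*} [Finite α] [Fintype ι] {A C : Set α} {M : ι → Set α}
    (hA : A ⊆ C) (hM : ∀ i, M i ⊆ C) (hAM : ∀ i, Disjoint A (M i))
    (hMM : Pairwise fun i j => Disjoint (M i) (M j)) : A.ncard + ∑ i, (M i).ncard ≤ C.ncard := by
  rw [← finsum_eq_sum_of_fintype, ← ncard_iUnion_of_finite (fun _ => toFinite _) hMM,
    ← ncard_union_eq (disjoint_iUnion_right.2 hAM)]
  exact ncard_le_ncard (union_subset hA (iUnion_subset hM))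

namespace IsGeomDrawing

variable {V : Type*} {G : SimpleGraph V} {pos : V → ℝ × ℝ} {a b x y : V}

lemma segCross (h : IsGeomDrawing G pos) (hab : G.Adj a b) (hxy : G.Adj x y)
    (hne : s(a, b) ≠ s(x, y)) {X : ℝ × ℝ} (hX : X ∈ segment ℝ (pos a) (pos b))
    (hX' : X ∈ segment ℝ (pos x) (pos y)) (hXn : X ∉ pos '' {a, b} ∩ pos '' {x, y}) :
    SegCross pos a b x y :=
  (h.2.2 a b x y hab hxy hne).resolve_left fun hs => hXn (hs ⟨hX, hX'⟩)

lemma subsingleton_inter (h : IsGeomDrawing G pos) (hab : G.Adj a b) (hxy : G.Adj x y)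
    (hne : s(a, b) ≠ s(x, y)) :
    (segment ℝ (pos a) (pos b) ∩ segment ℝ (pos x) (pos y)).Subsingleton := by
  rcases h.2.2 a b x y hab hxy hne with hs | ⟨p, hp, -⟩
  · rw [← image_inter h.1] at hs
    refine (Set.Subsingleton.image ?_ pos).anti hs
    rintro c ⟨hc, hc'⟩ d ⟨hd, hd'⟩
    by_contra hcd
    have hmem : ∀ {p q : V}, c ∈ ({p, q} : Set V) → d ∈ ({p, q} : Set V) → s(p, q) = s(c, d) :=
      fun hc hd => (Sym2.mem_and_mem_iff hcd).1 ⟨Sym2.mem_iff.2 hc, Sym2.mem_iff.2 hd⟩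
    exact hne ((hmem hc hd).trans (hmem hc' hd').symm)
  · exact hp ▸ subsingleton_singleton

end IsGeomDrawing

section Walk

variable {V : Type*} {G : SimpleGraph V} {a b : V}

lemma getVert_edge_mem_edges (w : G.Walk a b) {j : ℕ} (hj : j < w.length) :
    s(w.getVert j, w.getVert (j + 1)) ∈ w.edges :=
  (SimpleGraph.Walk.mk_mem_edges_iff_exists w).2 ⟨j, hj, rfl⟩

lemma exists_edge_mem_edges_of_getVert (w : G.Walk a b) (hw : 0 < w.length) (j : ℕ) :
    ∃ x, G.Adj (w.getVert j) x ∧ s(w.getVert j, x) ∈ w.edges := by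
  rcases lt_or_ge j w.length with hj | hj
  · exact ⟨_, w.adj_getVert_succ hj, getVert_edge_mem_edges w hj⟩
  · obtain ⟨n, hn⟩ := Nat.exists_eq_add_one.2 hw
    have hlast : w.getVert (n + 1) = w.getVert j := by
      rw [w.getVert_of_length_le hj, w.getVert_of_length_le hn.le]
    have hadj := (w.adj_getVert_succ (i := n) (by omega)).symm
    have hmem := getVert_edge_mem_edges w (j := n) (by omega)
    rw [Sym2.eq_swap] at hmem
    exact ⟨_, hlast ▸ hadj, hlast ▸ hmem⟩

lemma injOn_getVert_edge_of_isPath {w : G.Walk a b} (hw : w.IsPath) :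
    InjOn (fun j => s(w.getVert j, w.getVert (j + 1))) (Iio w.length) := by
  intro j hj j' hj' h
  rw [mem_Iio] at hj hj'
  rcases Sym2.eq_iff.1 h with ⟨h0, -⟩ | ⟨h0, h1⟩
  · exact hw.getVert_injOn hj.le hj'.le h0
  · have hj0 := hw.getVert_injOn hj.le hj' h0
    have hj1 := hw.getVert_injOn hj hj'.le h1
    omega

lemma mem_edges_of_adj_of_degree_eq_two {w : G.Walk a b} (hw : w.IsPath) {j : ℕ} (h0 : 0 < j)
    (h1 : j < w.length) [Fintype (G.neighborSet (w.getVert j))]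
    (hdeg : G.degree (w.getVert j) = 2) {x : V} (hx : G.Adj (w.getVert j) x) :
    s(w.getVert j, x) ∈ w.edges := by
  classical
  obtain ⟨i, rfl⟩ := Nat.exists_eq_add_one.2 h0
  have hne : w.getVert i ≠ w.getVert (i + 1 + 1) := fun h => by
    have := hw.getVert_injOn (show i ≤ w.length by omega) (show i + 1 + 1 ≤ w.length by omega) h
    omega
  have hsub : {w.getVert i, w.getVert (i + 1 + 1)} ⊆ G.neighborFinset (w.getVert (i + 1)) := by
    simp only [Finset.insert_subset_iff, Finset.singleton_subset_iff, G.mem_neighborFinset]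
    exact ⟨(w.adj_getVert_succ (by omega)).symm, w.adj_getVert_succ h1⟩
  have hnbr := Finset.eq_of_subset_of_card_le hsub (by
    rw [G.card_neighborFinset_eq_degree, hdeg, Finset.card_pair hne])
  have hmem := (G.mem_neighborFinset _ _).2 hx
  rw [← hnbr, Finset.mem_insert, Finset.mem_singleton] at hmem
  rcases hmem with rfl | rfl
  · rw [Sym2.eq_swap]
    exact getVert_edge_mem_edges w (by omega)
  · exact getVert_edge_mem_edges w h1

/-- The `j`-th vertex of the path obtained by shortening `w` to length `t`, whose edges are
`shortEdges w t`. -/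
def shortVert (w : G.Walk a b) (t j : ℕ) : V :=
  if j < t then w.getVert j else b

lemma shortVert_of_lt (w : G.Walk a b) {t j : ℕ} (h : j < t) : shortVert w t j = w.getVert j :=
  if_pos h

lemma shortVert_zero (w : G.Walk a b) {t : ℕ} (ht : 0 < t) : shortVert w t 0 = a := by
  rw [shortVert_of_lt w ht, w.getVert_zero]

lemma shortVert_self (w : G.Walk a b) (t : ℕ) : shortVert w t t = b :=
  if_neg t.lt_irrefl

lemma exists_of_mem_shortEdges (w : G.Walk a b) {t : ℕ} (ht : 0 < t) {e : Sym2 V}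
    (he : e ∈ shortEdges w t) : ∃ j < t, e = s(shortVert w t j, shortVert w t (j + 1)) := by
  rcases he with ⟨j, hj, rfl⟩ | rfl
  · exact ⟨j, by omega, by rw [shortVert_of_lt w (by omega), shortVert_of_lt w (by omega)]⟩
  · refine ⟨t - 1, by omega, ?_⟩
    rw [shortVert_of_lt w (by omega), Nat.sub_add_cancel ht, shortVert_self]

end Walk

section Static

variable {V ι : Type*} {G : SimpleGraph V} {E : Set (Sym2 V)} {u v : ι → V}

lemma mk_out (e : Sym2 V) : s((Quot.out e).1, (Quot.out e).2) = e :=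
  Quot.out_eq e

lemma mk_out_ne {e e' : E} (hne : e ≠ e') :
    s((Quot.out e.1).1, (Quot.out e.1).2) ≠ s((Quot.out e'.1).1, (Quot.out e'.1).2) := by
  rwa [mk_out, mk_out, Subtype.coe_injective.ne_iff]

/-- The static edges and the flexible paths as they are drawn by `pos`. -/
def pathSystem (E : Set (Sym2 V)) (P : ∀ i, G.Walk (u i) (v i)) (pos : V → ℝ × ℝ) :
    PolySystem E ι where
  left e := pos (Quot.out e.1).1
  right e := pos (Quot.out e.1).2
  len i := (P i).length
  pt i r := pos ((P i).getVert r)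

end Static

/-- The flexible paths `P i` have positive length and inner vertices of degree two, and are
edge-disjoint from one another and from the set `E` of static edges. -/
structure IsFlexible {V ι : Type*} [Fintype V] {G : SimpleGraph V} [DecidableRel G.Adj]
    (E : Set (Sym2 V)) {u v : ι → V} (P : ∀ i, G.Walk (u i) (v i)) : Prop where
  subset_edgeSet : E ⊆ G.edgeSet
  isPath : ∀ i, (P i).IsPath
  length_pos : ∀ i, 0 < (P i).length
  degree_eq_two : ∀ i, ∀ w ∈ (P i).support, w ≠ u i → w ≠ v i → G.degree w = 2
  notMem_static : ∀ i, ∀ e ∈ (P i).edges, e ∉ E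
  notMem_edges : ∀ i j, i ≠ j → ∀ e ∈ (P i).edges, e ∉ (P j).edges

namespace IsFlexible

variable {V ι : Type*} [Fintype V] {G : SimpleGraph V} [DecidableRel G.Adj] {E : Set (Sym2 V)}
  {u v : ι → V} {P : ∀ i, G.Walk (u i) (v i)} {t : ℕ} {pos : V → ℝ × ℝ}

lemma ne_ends (h : IsFlexible E P) (i : ι) : u i ≠ v i := fun huv =>
  (h.length_pos i).ne ((h.isPath i).getVert_injOn (Nat.zero_le _) (le_refl (P i).length)
    (by simpa using huv))

lemma mem_edges_of_adj (h : IsFlexible E P) {i : ι} {j : ℕ} (h0 : 0 < j) (h1 : j < (P i).length)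
    {x : V} (hx : G.Adj ((P i).getVert j) x) : s((P i).getVert j, x) ∈ (P i).edges := by
  have hinj := (h.isPath i).getVert_injOn
  refine mem_edges_of_adj_of_degree_eq_two (h.isPath i) h0 h1
    (h.degree_eq_two i _ ((P i).getVert_mem_support j) (fun hu => h0.ne' ?_)
      (fun hv => h1.ne ?_)) hx
  · exact hinj h1.le (Nat.zero_le _) (by simpa using hu)
  · exact hinj h1.le (le_refl (P i).length) (by simpa using hv)

lemma eq_and_eq_of_getVert_eq (h : IsFlexible E P) {i i' : ι} {j j' : ℕ} (h0 : 0 < j)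
    (h1 : j < (P i).length) (h' : j' ≤ (P i').length)
    (heq : (P i).getVert j = (P i').getVert j') : i = i' ∧ j = j' := by
  obtain rfl : i = i' := by
    by_contra hne
    obtain ⟨x, hx, hmem⟩ := exists_edge_mem_edges_of_getVert (P i') (h.length_pos i') j'
    rw [← heq] at hx hmem
    exact h.notMem_edges i i' hne _ (h.mem_edges_of_adj h0 h1 hx) hmem
  exact ⟨rfl, (h.isPath i).getVert_injOn h1.le h' heq⟩

lemma ne_getVert_of_mem_static (h : IsFlexible E P) {e : Sym2 V} (he : e ∈ E) {x : V} (hx : x ∈ e)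
    {i : ι} {j : ℕ} (h0 : 0 < j) (h1 : j < (P i).length) : x ≠ (P i).getVert j := by
  rintro rfl
  obtain ⟨y, rfl⟩ := Sym2.mem_iff_exists.1 hx
  exact h.notMem_static i _ (h.mem_edges_of_adj h0 h1 (h.subset_edgeSet he)) he

lemma eq_and_eq_of_shortVert_eq (h : IsFlexible E P) (hlen : ∀ i, t ≤ (P i).length) {i i' : ι}
    {j j' : ℕ} (h0 : 0 < j) (h1 : j < t) (h' : j' ≤ t)
    (heq : shortVert (P i) t j = shortVert (P i') t j') : i = i' ∧ j = j' := by
  have hlt := h1.trans_le (hlen i)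
  have hle := hlen i'
  rw [shortVert_of_lt _ h1] at heq
  rcases h'.lt_or_eq with h' | rfl
  · rw [shortVert_of_lt _ h'] at heq
    exact h.eq_and_eq_of_getVert_eq h0 hlt (by omega) heq
  · rw [shortVert_self, ← (P i').getVert_length] at heq
    obtain ⟨rfl, hj⟩ := h.eq_and_eq_of_getVert_eq h0 hlt le_rfl heq
    omega

/-- The shortened graph, presented by its static edges and the shortened paths. -/
def threading (h : IsFlexible E P) (ht : 0 < t) (hlen : ∀ i, t ≤ (P i).length) :
    Threading (SimpleGraph.fromEdgeSet (E ∪ ⋃ i, shortEdges (P i) t)) E ι t where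
  left e := (Quot.out e.1).1
  right e := (Quot.out e.1).2
  vert i := shortVert (P i) t
  cover x y hxy := by
    rcases ((SimpleGraph.fromEdgeSet_adj _).1 hxy).1 with he | he
    · exact Or.inl ⟨⟨_, he⟩, (mk_out s(x, y)).symm⟩
    · obtain ⟨i, he⟩ := mem_iUnion.1 he
      exact Or.inr ⟨i, exists_of_mem_shortEdges (P i) ht he⟩
  vert_inj _ _ _ _ h0 h1 h' := h.eq_and_eq_of_shortVert_eq hlen h0 h1 h'
  left_ne_vert e i j h0 h1 := shortVert_of_lt (P i) h1 ▸
    h.ne_getVert_of_mem_static e.2 (Sym2.out_fst_mem e.1) h0 (h1.trans_le (hlen i))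
  right_ne_vert e i j h0 h1 := shortVert_of_lt (P i) h1 ▸
    h.ne_getVert_of_mem_static e.2 (Sym2.out_snd_mem e.1) h0 (h1.trans_le (hlen i))

lemma isAttached_pathSystem (h : IsFlexible E P) (ht : 0 < t) (hlen : ∀ i, t ≤ (P i).length)
    (hpos : Function.Injective pos) :
    (h.threading ht hlen).IsAttached (pathSystem E P pos) pos where
  injOn := hpos.injOn
  left _ := rfl
  right _ := rfl
  zero i := congrArg pos ((P i).getVert_zero.trans (shortVert_zero (P i) ht).symm)
  last i := congrArg pos ((P i).getVert_length.trans (shortVert_self (P i) t).symm)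

lemma adj_out (h : IsFlexible E P) (e : E) : G.Adj (Quot.out e.1).1 (Quot.out e.1).2 := by
  have he := h.subset_edgeSet e.2
  rwa [← mk_out e.1] at he

lemma isSegmentDrawing_pathSystem (h : IsFlexible E P) (hpos : IsGeomDrawing G pos) {K : Set V}
    (hleft : ∀ e : E, (Quot.out e.1).1 ∈ K) (hright : ∀ e : E, (Quot.out e.1).2 ∈ K) :
    IsSegmentDrawing (pos '' K) (pathSystem E P pos).left (pathSystem E P pos).right where
  left_mem e := mem_image_of_mem pos (hleft e)
  right_mem e := mem_image_of_mem pos (hright e)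
  left_ne_right e := hpos.1.ne (h.adj_out e).ne
  eq_or_eq_of_mem e := by
    rintro _ ⟨w, -, rfl⟩ hw
    exact (hpos.2.1 _ _ (h.adj_out e) w hw).imp (congrArg pos) (congrArg pos)
  inter_subsingleton e e' hne :=
    hpos.subsingleton_inter (h.adj_out e) (h.adj_out e') (mk_out_ne hne)

lemma mem_crossingEdges_of_mem_segCrossings (h : IsFlexible E P) (hpos : IsGeomDrawing G pos)
    {e e' : E} (he : e' ∈ segCrossings (pathSystem E P pos).left (pathSystem E P pos).right e) :
    e'.1 ∈ crossingEdges G pos (Quot.out e.1).1 (Quot.out e.1).2 := by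
  obtain ⟨hne, X, hX, hX'⟩ := he
  have hends : pos (Quot.out e.1).1 ≠ pos (Quot.out e.1).2 := hpos.1.ne (h.adj_out e).ne
  refine ⟨h.subset_edgeSet e'.2, _, _, (mk_out e'.1).symm, hpos.segCross (h.adj_out e)
    (h.adj_out e') (mk_out_ne hne.symm) (openSegment_subset_segment _ _ _ hX) hX' ?_⟩
  rintro ⟨⟨w, rfl | rfl, hw⟩, -⟩
  · exact ne_left_of_mem_openSegment hends hX hw.symm
  · exact ne_right_of_mem_openSegment hends hX hw.symm

lemma mem_crossingEdges_of_mem_contacts (h : IsFlexible E P) (hpos : IsGeomDrawing G pos) {i : ι}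
    {e : E} {r : Fin (P i).length} (hr : r ∈ (pathSystem E P pos).contacts i e) :
    s((P i).getVert r, (P i).getVert (r + 1)) ∈
      crossingEdges G pos (Quot.out e.1).1 (Quot.out e.1).2 := by
  obtain ⟨⟨X, hX, hX'⟩, hzero, hlast⟩ := hr
  have hadj := (P i).adj_getVert_succ r.2
  refine ⟨hadj, _, _, rfl, hpos.segCross (h.adj_out e) hadj (fun heq => ?_) hX' hX ?_⟩
  · refine h.notMem_static i _ (getVert_edge_mem_edges (P i) r.2) ?_
    rw [← heq, mk_out]
    exact e.2
  have hvert : ∀ j : ℕ, (j = r ∨ j = r + 1) → (P i).getVert j ∉ e.1 := by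
    intro j hj hmem
    have hseg : pos ((P i).getVert j) ∈ (pathSystem E P pos).seg (Sum.inl e) := by
      rw [← mk_out e.1] at hmem
      rcases Sym2.mem_iff.1 hmem with hw | hw <;> rw [hw]
      exacts [left_mem_segment ℝ _ _, right_mem_segment ℝ _ _]
    rcases Nat.eq_zero_or_pos j with rfl | h0
    · exact hzero (by omega) hseg
    rcases (show j ≤ (P i).length by omega).lt_or_eq with h1 | h1
    · exact h.ne_getVert_of_mem_static e.2 hmem h0 h1 rfl
    · rw [h1] at hseg
      exact hlast (show (r : ℕ) + 1 = (P i).length by omega) hseg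
  rintro ⟨⟨w, hw, rfl⟩, w', hw', heq⟩
  obtain rfl := hpos.1 heq
  have hmem : w' ∈ e.1 := by
    rcases hw with rfl | rfl
    exacts [Sym2.out_fst_mem _, Sym2.out_snd_mem _]
  rcases hw' with rfl | rfl
  exacts [hvert r (Or.inl rfl) hmem, hvert (r + 1) (Or.inr rfl) hmem]

lemma ncard_segCrossings_add_sum_ncard_contacts_le [Fintype ι] (h : IsFlexible E P)
    (hpos : IsGeomDrawing G pos) (e : E) :
    (segCrossings (pathSystem E P pos).left (pathSystem E P pos).right e).ncard +
        ∑ i, ((pathSystem E P pos).contacts i e).ncard ≤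
      (crossingEdges G pos (Quot.out e.1).1 (Quot.out e.1).2).ncard := by
  let edge : ∀ i, Fin (P i).length → Sym2 V := fun i r => s((P i).getVert r, (P i).getVert (r + 1))
  have hinj : ∀ i, Function.Injective (edge i) := fun i r r' heq =>
    Fin.ext (injOn_getVert_edge_of_isPath (h.isPath i) r.2 r'.2 heq)
  have hedge : ∀ i, ∀ d ∈ edge i '' (pathSystem E P pos).contacts i e, d ∈ (P i).edges := by
    rintro i _ ⟨r, -, rfl⟩
    exact getVert_edge_mem_edges (P i) r.2
  rw [← ncard_image_of_injective _ (Subtype.val_injective (p := (· ∈ E)))]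
  have hcard : ∀ i, ((pathSystem E P pos).contacts i e).ncard =
      (edge i '' (pathSystem E P pos).contacts i e).ncard := fun i =>
    (ncard_image_of_injective _ (hinj i)).symm
  simp only [hcard]
  refine ncard_add_sum_ncard_le ?_ (fun i => ?_) (fun i => ?_) fun i j hij => ?_
  · rintro _ ⟨e', he', rfl⟩
    exact h.mem_crossingEdges_of_mem_segCrossings hpos he'
  · rintro _ ⟨r, hr, rfl⟩
    exact h.mem_crossingEdges_of_mem_contacts hpos hr
  · refine disjoint_left.2 ?_
    rintro _ ⟨e', -, rfl⟩ hd
    exact h.notMem_static i _ (hedge i _ hd) e'.2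
  · exact disjoint_left.2 fun d hd hd' => h.notMem_edges i j hij d (hedge i d hd) (hedge j d hd')

end IsFlexible

theorem stmt14_general {V : Type*} [Fintype V] (k : ℕ) (hk : 1 ≤ k)
    (G : SimpleGraph V) [DecidableRel G.Adj]
    (s f : ℕ) (Est : Set (Sym2 V)) (hEst : Est ⊆ G.edgeSet) (hs : Est.ncard = s)
    (u v : Fin f → V) (P : ∀ i, G.Walk (u i) (v i))
    (hpath : ∀ i, (P i).IsPath)
    (hdeg2 : ∀ i, ∀ w ∈ (P i).support, w ≠ u i → w ≠ v i → G.degree w = 2)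
    (hdisjE : ∀ i, ∀ e ∈ (P i).edges, e ∉ Est)
    (hdisjP : ∀ i j, i ≠ j → ∀ e ∈ (P i).edges, e ∉ (P j).edges)
    (hlen : ∀ i, (s ^ 2 + 3 * s + 1) * (f + 1) + 1 ≤ (P i).length)
    (hpl : GeomKPlanar k G) :
    GeomKPlanar k (SimpleGraph.fromEdgeSet
      (Est ∪ ⋃ i, shortEdges (P i) ((s ^ 2 + 3 * s + 1) * (f + 1) + 1))) := by
  obtain ⟨pos, hpos, hcross⟩ := hpl
  have := Fintype.ofFinite Est
  have hcard : Fintype.card Est = s := by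
    rw [← hs, ← Nat.card_coe_set_eq, Nat.card_eq_fintype_card]
  have ht : f + 2 ≤ (s ^ 2 + 3 * s + 1) * (f + 1) + 1 := by nlinarith [Nat.zero_le (s ^ 2 + 3 * s)]
  generalize ht_eq : (s ^ 2 + 3 * s + 1) * (f + 1) + 1 = t at *
  have ht0 : 0 < t := by omega
  have hlen2 : ∀ i, 2 ≤ (P i).length := fun i => by have := hlen i; omega
  have h : IsFlexible Est P :=
    ⟨hEst, hpath, fun i => ht0.trans_le (hlen i), hdeg2, hdisjE, hdisjP⟩
  have hT := h.isAttached_pathSystem ht0 hlen hpos.1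
  have hne : ∀ i, shortVert (P i) t 0 ≠ shortVert (P i) t t := fun i => by
    rw [shortVert_zero _ ht0, shortVert_self]
    exact h.ne_ends i
  cases isEmpty_or_nonempty Est
  · exact (h.threading ht0 hlen).geomKPlanar_of_isEmpty hne (by rw [Fintype.card_fin]; omega) hk
  · exact hT.geomKPlanar_of_contacts
      (h.isSegmentDrawing_pathSystem hpos (fun e => Or.inl ⟨e, Or.inl rfl⟩)
        fun e => Or.inl ⟨e, Or.inr rfl⟩) hlen2
      (fun i => (hT.zero i).trans_ne ((hpos.1.ne (hne i)).trans_eq (hT.last i).symm)) hk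
      (fun e => (h.ncard_segCrossings_add_sum_ncard_contacts_le hpos e).trans
        (hcross _ _ (h.adj_out e))) (by rw [hcard, Fintype.card_fin, ht_eq])

/-- Let `k ≥ 1` and let `G` be a finite simple graph whose edge set is partitioned into
`s` static edges (the set `Est`) and `f` maximal degree-2 paths (the flexible paths
`P i`), each of length at least `(s² + 3s + 1)·(f + 1) + 1`.  If `G` admits a geometric
`k`-planar drawing, then the graph obtained by shortening each flexible path to length
exactly `(s² + 3s + 1)·(f + 1) + 1` (preserving endpoints) admits a geometric
`k`-planar drawing. -/
theorem stmt14 {V : Type*} [Fintype V] (k : ℕ) (hk : 1 ≤ k)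
    (G : SimpleGraph V) [DecidableRel G.Adj]
    (s f : ℕ) (Est : Set (Sym2 V)) (hEst : Est ⊆ G.edgeSet) (hs : Est.ncard = s)
    (u v : Fin f → V) (P : ∀ i, G.Walk (u i) (v i))
    (hpath : ∀ i, (P i).IsPath)
    (hdeg2 : ∀ i, ∀ w ∈ (P i).support, w ≠ u i → w ≠ v i → G.degree w = 2)
    (hmax : ∀ i, G.degree (u i) ≠ 2 ∧ G.degree (v i) ≠ 2)
    (hdisjE : ∀ i, ∀ e ∈ (P i).edges, e ∉ Est)
    (hdisjP : ∀ i j, i ≠ j → ∀ e ∈ (P i).edges, e ∉ (P j).edges)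
    (hcover : ∀ e : Sym2 V, e ∈ G.edgeSet ↔ e ∈ Est ∨ ∃ i, e ∈ (P i).edges)
    (hlen : ∀ i, (s ^ 2 + 3 * s + 1) * (f + 1) + 1 ≤ (P i).length)
    (hpl : GeomKPlanar k G) :
    GeomKPlanar k (SimpleGraph.fromEdgeSet
      (Est ∪ ⋃ i, shortEdges (P i) ((s ^ 2 + 3 * s + 1) * (f + 1) + 1))) :=
  stmt14_general k hk G s f Est hEst hs u v P hpath hdeg2 hdisjE hdisjP hlen hpl
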